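/- arXiv:2506.06477 — 8 statements merged into one kernel-verified Lean document; each statement's English description precedes it below -/
import Mathlib

section
/- For every integer n ≥ 21 and every set S of n points in the Euclidean plane in general position, there exist two distinct points u, v ∈ S such that every closed disk having both u and v on its boundary contains at least ⌈16(n−2)/665⌉ points of S other than u and v, and also leaves at least ⌈16(n−2)/665⌉ points of S other than u and v strictly outside the disk. -/
/-!
The argument gives the better constant `1/30` in place of `16/665`, has a version in every
dimension, and works by sampling five points at a time.

Lift the plane to the paraboloid by `p ↦ (p, ‖p‖²)`. Five lifted points in `ℝ³` satisfy a
nontrivial affine dependence `w` (Radon), and along such a dependence the powers of the points with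
respect to any circle sum to zero. After a change of sign at most two of the five points carry a
positive weight; let `u, v` include them. For a circle through `u` and `v` the terms `w p * power p`
of these two points vanish. The remaining terms are not all zero, since otherwise the points of
nonzero weight would be affinely dependent and concyclic. So one of them is positive and one is
negative, and as the weights are nonpositive, one of the other three points lies inside the circle
and one outside.

Some pair `{u, v}` arises in this way from at least `C(n,5) / C(n,2)` five-point subsets. Given a
disk through `u` and `v`, each of these subsets contains one of the further points inside the disk,
and each such point lies together with `u` and `v` in `C(n-3,2)` five-point subsets. Hence there are
at least `C(n,5) / (C(n,2) C(n-3,2)) = (n-2)/30` points inside, and likewise outside.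
-/

open EuclideanGeometry Metric

noncomputable section

/-- Points of the Euclidean plane. -/
abbrev Pt := EuclideanSpace ℝ (Fin 2)

/-- A set of points in the plane is in general position if no three of its points are
collinear and no four of its points are concyclic. -/
def GenPos (S : Set Pt) : Prop :=
  (∀ T ⊆ S, T.ncard = 3 → ¬Collinear ℝ T) ∧
  (∀ T ⊆ S, T.ncard = 4 → ¬Cospherical T)

/-- General position with respect to spheres: every cospherical subset of `S` is affinely
independent. In the plane this says that no four points of `S` are concyclic. -/
def SphericalGenPos {V P : Type*} [NormedAddCommGroup V] [InnerProductSpace ℝ V]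
    [MetricSpace P] [NormedAddTorsor V P] (S : Set P) : Prop :=
  ∀ A ⊆ S, Cospherical A → AffineIndependent ℝ ((↑) : A → P)

/-- Every sphere through all points of `U` has points of `T \ U` strictly inside and strictly
outside. -/
def SpheresThroughSplit {P : Type*} [MetricSpace P] (T U : Set P) : Prop :=
  ∀ (c : P) (r : ℝ), 0 ≤ r → U ⊆ sphere c r →
    ((T \ U) ∩ ball c r).Nonempty ∧ ((T \ U) ∩ {x | r < dist x c}).Nonempty

/-- `w` is an affine dependence of the lifts of the points of `T` to the paraboloid, expressed
without choosing an origin: the squared norm is replaced by the power with respect to an arbitrary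
sphere. -/
structure IsLiftedDependence {V P : Type*} [NormedAddCommGroup V] [InnerProductSpace ℝ V]
    [MetricSpace P] [NormedAddTorsor V P] (T : Finset P) (w : P → ℝ) : Prop where
  sum_eq_zero : ∑ p ∈ T, w p = 0
  weightedVSub_eq_zero : T.weightedVSub id w = (0 : V)
  sum_mul_power_eq_zero (s : Sphere P) : ∑ p ∈ T, w p * s.power p = 0

section Selection

variable {α : Type*} {S : Finset α} {k m : ℕ}

lemma choose_mul_choose_mul_sub (hkm : k < m) {n : ℕ} (hmn : m ≤ n) :
    n.choose m * (m.choose k * (m - k)) =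
      n.choose k * ((n - k) * (n - (k + 1)).choose (m - (k + 1))) := by
  have h := Nat.add_one_mul_choose_eq (n - (k + 1)) (m - (k + 1))
  rw [show n - (k + 1) + 1 = n - k by lia, show m - (k + 1) + 1 = m - k by lia] at h
  rw [h, ← mul_assoc, ← mul_assoc, Nat.choose_mul hkm.le]

lemma sub_le_choose_mul_sub_mul (hkm : k < m) {n : ℕ} (hmn : m ≤ n) {f a : ℕ}
    (hf : n.choose m ≤ n.choose k * f)
    (ha : f ≤ a * (n - (k + 1)).choose (m - (k + 1))) :
    n - k ≤ m.choose k * (m - k) * a := by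
  set b := (n - (k + 1)).choose (m - (k + 1))
  have hpos : 0 < n.choose k * b := Nat.mul_pos (Nat.choose_pos (by lia)) (Nat.choose_pos (by lia))
  refine Nat.le_of_mul_le_mul_left ?_ hpos
  calc n.choose k * b * (n - k)
      = n.choose m * (m.choose k * (m - k)) := by
        rw [choose_mul_choose_mul_sub hkm hmn]; ring
    _ ≤ n.choose k * (a * b) * (m.choose k * (m - k)) := by
        gcongr
        exact hf.trans (Nat.mul_le_mul_left _ ha)
    _ = n.choose k * b * (m.choose k * (m - k) * a) := by ring

lemma card_le_card_mul_choose {U I : Finset α} (hU : U ⊆ S) (hUm : U.card < m)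
    (hIS : I ⊆ S) (hIU : Disjoint I U) {F : Finset (Finset α)} (hFS : F ⊆ S.powersetCard m)
    (hUF : ∀ T ∈ F, U ⊆ T) (hIF : ∀ T ∈ F, ∃ x ∈ I, x ∈ T) :
    F.card ≤ I.card * (S.card - (U.card + 1)).choose (m - (U.card + 1)) := by
  classical
  have hcover : F ⊆ I.biUnion fun x => (S.powersetCard m).filter (insert x U ⊆ ·) := by
    intro T hT
    obtain ⟨x, hx, hxT⟩ := hIF T hT
    exact Finset.mem_biUnion.2 ⟨x, hx, Finset.mem_filter.2
      ⟨hFS hT, Finset.insert_subset hxT (hUF T hT)⟩⟩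
  refine (Finset.card_le_card hcover).trans
    (Finset.card_biUnion_le_card_mul _ _ _ fun x hx => ?_)
  have hcard : (insert x U).card = U.card + 1 :=
    Finset.card_insert_of_notMem (Finset.disjoint_left.1 hIU hx)
  rw [Finset.card_filter_powersetCard_subset _ _ _ (Finset.insert_subset (hIS hx) hU)
    (hcard.trans_le hUm), hcard]

lemma exists_choose_le_choose_mul_card_fiber [DecidableEq α] (hk : k ≤ S.card)
    {g : Finset α → Finset α} (hg : ∀ T ∈ S.powersetCard m, g T ∈ S.powersetCard k) :
    ∃ U ∈ S.powersetCard k,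
      S.card.choose m ≤ S.card.choose k * ((S.powersetCard m).filter (g · = U)).card := by
  obtain ⟨U, hU, hmax⟩ := (S.powersetCard k).exists_max_image
    (fun U => ((S.powersetCard m).filter (g · = U)).card) (Finset.powersetCard_nonempty.2 hk)
  refine ⟨U, hU, ?_⟩
  rw [mul_comm, ← Finset.card_powersetCard m, ← Finset.card_powersetCard k]
  exact Finset.card_le_mul_card_image_of_maps_to hg _ hmax

lemma exists_powersetCard_forall_card_sub_le (hkm : k < m) (hm : m ≤ S.card)
    {R : Set α → Set α → Prop}
    (hR : ∀ T ∈ S.powersetCard m, ∃ U ∈ T.powersetCard k, R T U) :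
    ∃ U ∈ S.powersetCard k, ∀ A : Set α,
      (∀ T : Set α, R T U → ((T \ U) ∩ A).Nonempty) →
      S.card - k ≤ m.choose k * (m - k) * ((↑S \ ↑U) ∩ A).ncard := by
  classical
  choose! g hgT hgR using hR
  have hg : ∀ T ∈ S.powersetCard m, g T ∈ S.powersetCard k := fun T hT =>
    Finset.powersetCard_mono (Finset.mem_powersetCard.1 hT).1 (hgT T hT)
  obtain ⟨U, hU, hfiber⟩ := exists_choose_le_choose_mul_card_fiber (hkm.le.trans hm) hg
  obtain ⟨hUS, hUk⟩ := Finset.mem_powersetCard.1 hU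
  refine ⟨U, hU, fun A hA => ?_⟩
  set F := (S.powersetCard m).filter (g · = U)
  set I := (S \ U).filter (· ∈ A)
  have hI : (↑S \ ↑U) ∩ A = (I : Set α) := by ext; simp [I]
  rw [hI, Set.ncard_coe_finset]
  have hF : F.card ≤ I.card * (S.card - (k + 1)).choose (m - (k + 1)) := by
    rw [← hUk]
    refine card_le_card_mul_choose hUS (hUk.trans_lt hkm)
      ((Finset.filter_subset _ _).trans Finset.sdiff_subset)
      (Finset.disjoint_of_subset_left (Finset.filter_subset _ _) Finset.sdiff_disjoint)
      (Finset.filter_subset _ _) (fun T hT => ?_) (fun T hT => ?_)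
    all_goals obtain ⟨hTm, rfl⟩ := Finset.mem_filter.1 hT
    · exact (Finset.mem_powersetCard.1 (hgT T hTm)).1
    · obtain ⟨x, ⟨hxT, hxU⟩, hxA⟩ := hA T (hgR T hTm)
      exact ⟨x, Finset.mem_filter.2 ⟨Finset.mem_sdiff.2
        ⟨(Finset.mem_powersetCard.1 hTm).1 hxT, hxU⟩, hxA⟩, hxT⟩
  exact sub_le_choose_mul_sub_mul hkm hm hfiber hF

end Selection

section Euclidean

variable {V P : Type*} [NormedAddCommGroup V] [InnerProductSpace ℝ V] [MetricSpace P]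
  [NormedAddTorsor V P] {T : Finset P} {w : P → ℝ}

lemma sum_mul_dist_sq_eq_zero (o : P) (hw : ∑ p ∈ T, w p = 0)
    (hv : ∑ p ∈ T, w p • (p -ᵥ o) = 0) (hd : ∑ p ∈ T, w p * dist p o ^ 2 = 0) (c : P) :
    ∑ p ∈ T, w p * dist p c ^ 2 = 0 := by
  have hinner : ∑ p ∈ T, w p * inner ℝ (p -ᵥ o) (c -ᵥ o) = 0 := by
    simpa only [sum_inner, real_inner_smul_left, inner_zero_left]
      using congrArg (inner ℝ · (c -ᵥ o)) hv
  calc ∑ p ∈ T, w p * dist p c ^ 2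
      = ∑ p ∈ T, (w p * dist p o ^ 2 - 2 * (w p * inner ℝ (p -ᵥ o) (c -ᵥ o))
          + w p * dist c o ^ 2) := by
        refine Finset.sum_congr rfl fun p _ => ?_
        rw [dist_eq_norm_vsub V p c, ← vsub_sub_vsub_cancel_right p c o, norm_sub_sq_real,
          dist_eq_norm_vsub V p o, dist_eq_norm_vsub V c o]
        ring
    _ = 0 := by
        rw [Finset.sum_add_distrib, Finset.sum_sub_distrib, ← Finset.mul_sum, ← Finset.sum_mul,
          hw, hd, hinner]
        ring

lemma exists_isLiftedDependence [FiniteDimensional ℝ V]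
    (hT : Module.finrank ℝ V + 2 < T.card) :
    ∃ w : P → ℝ, IsLiftedDependence T w ∧ ∃ p ∈ T, w p ≠ 0 := by
  classical
  obtain ⟨o⟩ : Nonempty P := inferInstance
  let lift (p : P) : V × ℝ × ℝ := (p -ᵥ o, dist p o ^ 2, 1)
  have lift_inj : Function.Injective lift := fun p q h => vsub_left_cancel (congrArg Prod.fst h)
  have hcard : Module.finrank ℝ (V × ℝ × ℝ) < (T.image lift).card := by
    simpa [Finset.card_image_of_injective _ lift_inj] using hT
  obtain ⟨f, hf, _, hx, hfx⟩ := Module.exists_nontrivial_relation_of_finrank_lt_card hcard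
  obtain ⟨p, hp, rfl⟩ := Finset.mem_image.1 hx
  rw [Finset.sum_image fun _ _ _ _ h => lift_inj h] at hf
  simp only [lift, Prod.ext_iff, Prod.fst_sum, Prod.snd_sum, Prod.smul_mk, smul_eq_mul, mul_one,
    Prod.fst_zero, Prod.snd_zero] at hf
  obtain ⟨hv, hd, hw⟩ := hf
  refine ⟨fun p => f (lift p), ⟨hw, ?_, fun s => ?_⟩, p, hp, hfx⟩
  · rwa [T.weightedVSub_eq_weightedVSubOfPoint_of_sum_eq_zero (fun p => f (lift p)) id hw o,
      Finset.weightedVSubOfPoint_apply]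
  · have hdist := sum_mul_dist_sq_eq_zero o hw hv hd s.center
    simp only [Sphere.power, mul_sub, Finset.sum_sub_distrib, ← Finset.sum_mul]
    rw [hdist, hw, zero_mul, sub_zero]

namespace IsLiftedDependence

lemma neg (h : IsLiftedDependence T w) : IsLiftedDependence T (-w) where
  sum_eq_zero := by simp [h.sum_eq_zero]
  weightedVSub_eq_zero := by rw [map_neg, h.weightedVSub_eq_zero, neg_zero]
  sum_mul_power_eq_zero s := by simp [h.sum_mul_power_eq_zero s]

lemma not_affineIndependent_support (h : IsLiftedDependence T w) (hw : ∃ p ∈ T, w p ≠ 0) :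
    ¬AffineIndependent ℝ ((↑) : {p | p ∈ T ∧ w p ≠ 0} → P) := by
  classical
  intro hind
  obtain ⟨p, hpT, hp⟩ := hw
  refine hp (hind (T.subtype fun p => p ∈ T ∧ w p ≠ 0) (fun p => w p) ?_ ?_ ⟨p, hpT, hp⟩
    (Finset.mem_subtype.2 hpT))
  · refine (Finset.sum_subtype_eq_sum_filter w).trans ?_
    rw [Finset.sum_filter_of_ne fun p hpT hp => ⟨hpT, hp⟩, h.sum_eq_zero]
  · refine (T.weightedVSub_subtype_eq_filter w id _).trans ?_
    rw [Finset.weightedVSub_filter_of_ne _ _ _ fun p hpT hp => ⟨hpT, hp⟩, h.weightedVSub_eq_zero]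

lemma exists_mul_power_ne_zero (h : IsLiftedDependence T w) (hw : ∃ p ∈ T, w p ≠ 0)
    (hT : SphericalGenPos (T : Set P)) {s : Sphere P} (hs : 0 ≤ s.radius) :
    ∃ p ∈ T, w p * s.power p ≠ 0 := by
  by_contra! hzero
  refine h.not_affineIndependent_support hw (hT _ (fun p hp => hp.1) ⟨s.center, s.radius, ?_⟩)
  rintro p ⟨hpT, hp⟩
  exact (Sphere.power_eq_zero_iff_mem_sphere hs).1 ((mul_eq_zero.1 (hzero p hpT)).resolve_left hp)

lemma spheresThroughSplit (h : IsLiftedDependence T w) (hw : ∃ p ∈ T, w p ≠ 0)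
    (hT : SphericalGenPos (T : Set P)) {U : Set P} (hU : ∀ p ∈ T, 0 < w p → p ∈ U) :
    SpheresThroughSplit (T : Set P) U := by
  intro c r hr hUr
  let s : Sphere P := ⟨c, r⟩
  have hne := h.exists_mul_power_ne_zero hw hT (s := s) hr
  have hsum := h.sum_mul_power_eq_zero s
  have notMem_of_ne {p : P} (hp : w p * s.power p ≠ 0) : p ∉ U := fun hpU =>
    right_ne_zero_of_mul hp ((Sphere.power_eq_zero_iff_mem_sphere hr).2 (hUr hpU))
  have nonpos_of_notMem {p : P} (hpT : p ∈ T) (hpU : p ∉ U) : w p ≤ 0 :=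
    not_lt.1 fun hp => hpU (hU p hpT hp)
  constructor
  · obtain ⟨p, hpT, hp⟩ := Finset.exists_pos_of_sum_zero_of_exists_nonzero _ hsum hne
    have hpU := notMem_of_ne hp.ne'
    exact ⟨p, ⟨hpT, hpU⟩, (Sphere.power_neg_iff_dist_center_lt_radius hr).1
      (neg_of_mul_pos_right hp (nonpos_of_notMem hpT hpU))⟩
  · obtain ⟨p, hpT, hp⟩ := Finset.exists_pos_of_sum_zero_of_exists_nonzero
      (fun p => -(w p * s.power p)) (by rw [Finset.sum_neg_distrib, hsum, neg_zero])
      (by simpa only [neg_ne_zero] using hne)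
    rw [neg_pos] at hp
    have hpU := notMem_of_ne hp.ne
    exact ⟨p, ⟨hpT, hpU⟩, (Sphere.power_pos_iff_radius_lt_dist_center hr).1
      (pos_of_mul_neg_right hp (nonpos_of_notMem hpT hpU))⟩

end IsLiftedDependence

lemma sphericalGenPos_of_forall_ncard_eq_four {S : Set P}
    (hS : ∀ T ⊆ S, T.ncard = 4 → ¬Cospherical T) : SphericalGenPos S := by
  intro A hAS hA
  have hcard : A.encard < 4 := by
    by_contra! h
    obtain ⟨T, hTA, hT⟩ := Set.exists_subset_encard_eq h
    exact hS T (hTA.trans hAS) (by simp [Set.ncard, hT]) (hA.subset hTA)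
  have hfin : A.Finite := Set.finite_of_encard_le_coe hcard.le
  have := hfin.to_subtype
  obtain ⟨j, ⟨e⟩⟩ := Finite.exists_equiv_fin A
  have hj : j < 4 := by
    have := Nat.card_congr e
    rw [Nat.card_coe_set_eq, Nat.card_fin] at this
    rw [← hfin.cast_ncard_eq] at hcard
    rw [← this]
    exact_mod_cast hcard
  rw [← affineIndependent_equiv e.symm]
  have hinj : Function.Injective ((↑) ∘ e.symm : Fin j → P) :=
    Subtype.val_injective.comp e.symm.injective
  interval_cases j
  · exact affineIndependent_of_subsingleton ℝ _
  · exact affineIndependent_of_subsingleton ℝ _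
  · have hpair : (↑) ∘ e.symm = ![(e.symm 0 : P), e.symm 1] := by
      ext i
      fin_cases i <;> rfl
    rw [hpair]
    exact affineIndependent_of_ne ℝ (hinj.ne zero_ne_one)
  · exact hA.affineIndependent (by rintro _ ⟨i, rfl⟩; exact (e.symm i).2) hinj

lemma SphericalGenPos.mono {S S' : Set P} (hS : SphericalGenPos S) (h : S' ⊆ S) :
    SphericalGenPos S' :=
  fun A hA => hS A (hA.trans h)

lemma SphericalGenPos.exists_spheresThroughSplit [FiniteDimensional ℝ V]
    (hT : SphericalGenPos (T : Set P)) (hcard : Module.finrank ℝ V + 2 < T.card) {k : ℕ}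
    (hkT : k ≤ T.card) (hk : T.card ≤ 2 * k + 1) :
    ∃ U ∈ T.powersetCard k, SpheresThroughSplit (T : Set P) U := by
  classical
  suffices h : ∃ w : P → ℝ, IsLiftedDependence T w ∧ (∃ p ∈ T, w p ≠ 0) ∧
      (T.filter (0 < w ·)).card ≤ k by
    obtain ⟨w, h, hw, hpos⟩ := h
    obtain ⟨U, hposU, hUT, hUk⟩ :=
      Finset.exists_subsuperset_card_eq (Finset.filter_subset (0 < w ·) T) hpos hkT
    exact ⟨U, Finset.mem_powersetCard.2 ⟨hUT, hUk⟩, h.spheresThroughSplit hw hT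
      fun p hpT hp => hposU (Finset.mem_filter.2 ⟨hpT, hp⟩)⟩
  obtain ⟨w, h, hw⟩ := exists_isLiftedDependence hcard
  by_cases hpos : (T.filter (0 < w ·)).card ≤ k
  · exact ⟨w, h, hw, hpos⟩
  · refine ⟨-w, h.neg, by simpa using hw, ?_⟩
    have hdisj : Disjoint (T.filter (0 < w ·)) (T.filter (0 < (-w) ·)) :=
      Finset.disjoint_filter.2 fun p _ hp hn => (neg_pos.1 hn).not_gt hp
    have := Finset.card_le_card (Finset.union_subset (Finset.filter_subset (0 < w ·) T)
      (Finset.filter_subset (0 < (-w) ·) T))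
    rw [Finset.card_union_of_disjoint hdisj] at this
    lia

theorem pi_in_out_lower_bound_general [FiniteDimensional ℝ V] {S : Set P} (hfin : S.Finite)
    (hgp : SphericalGenPos S) {k m : ℕ} (hVm : Module.finrank ℝ V + 2 < m) (hkm : k < m)
    (hmk : m ≤ 2 * k + 1) (hm : m ≤ S.ncard) :
    ∃ U ⊆ S, U.ncard = k ∧ ∀ (c : P) (r : ℝ), 0 ≤ r → U ⊆ sphere c r →
      S.ncard - k ≤ m.choose k * (m - k) * ((S \ U) ∩ ball c r).ncard ∧
      S.ncard - k ≤ m.choose k * (m - k) * ((S \ U) ∩ {x | r < dist x c}).ncard := by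
  obtain ⟨S, rfl⟩ := hfin.exists_finset_coe
  rw [Set.ncard_coe_finset] at hm ⊢
  have hsplit : ∀ T ∈ S.powersetCard m,
      ∃ U ∈ T.powersetCard k, SpheresThroughSplit (T : Set P) U := by
    intro T hT
    obtain ⟨hTS, rfl⟩ := Finset.mem_powersetCard.1 hT
    exact (hgp.mono (Finset.coe_subset.2 hTS)).exists_spheresThroughSplit hVm hkm.le hmk
  obtain ⟨U, hU, hbound⟩ := exists_powersetCard_forall_card_sub_le hkm hm hsplit
  obtain ⟨hUS, hUk⟩ := Finset.mem_powersetCard.1 hU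
  refine ⟨U, Finset.coe_subset.2 hUS, by rwa [Set.ncard_coe_finset], fun c r hr hUr => ?_⟩
  exact ⟨hbound _ fun T hT => (hT c r hr hUr).1, hbound _ fun T hT => (hT c r hr hUr).2⟩

end Euclidean

lemma ceil_sixteen_mul_div_le_of_sub_two_le {n a : ℕ} (h : n - 2 ≤ 30 * a) :
    ⌈16 * ((n : ℝ) - 2) / 665⌉ ≤ (a : ℤ) := by
  have h' : (n : ℝ) ≤ 30 * a + 2 := by exact_mod_cast (by lia : n ≤ 30 * a + 2)
  rw [Int.ceil_le, Int.cast_natCast, div_le_iff₀ (by norm_num)]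
  linarith [(a.cast_nonneg : (0 : ℝ) ≤ a)]

/-- For every `n ≥ 21` and every set `S` of `n` points in the plane in general position,
there exist two distinct points `u, v ∈ S` such that every closed disk having both `u`
and `v` on its boundary contains at least `⌈16(n−2)/665⌉` points of `S` other than `u`
and `v`, and also leaves at least `⌈16(n−2)/665⌉` points of `S` other than `u` and `v`
strictly outside the disk. -/
theorem pi_in_out_lower_bound (n : ℕ) (hn : 21 ≤ n) (S : Set Pt)
    (hfin : S.Finite) (hcard : S.ncard = n) (hgp : GenPos S) :
    ∃ u ∈ S, ∃ v ∈ S, u ≠ v ∧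
      ∀ (c : Pt) (r : ℝ), 0 < r → dist u c = r → dist v c = r →
        ⌈16 * ((n : ℝ) - 2) / 665⌉ ≤ (((S \ {u, v}) ∩ closedBall c r).ncard : ℤ) ∧
        ⌈16 * ((n : ℝ) - 2) / 665⌉ ≤
          (((S \ {u, v}) ∩ {x | r < dist x c}).ncard : ℤ) := by
  obtain ⟨U, hUS, hU, h⟩ := pi_in_out_lower_bound_general hfin
    (sphericalGenPos_of_forall_ncard_eq_four hgp.2) (m := 5) (k := 2) (by simp) (by norm_num)
    (by norm_num) (by lia)
  obtain ⟨u, v, huv, rfl⟩ := Set.ncard_eq_two.1 hU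
  refine ⟨u, hUS (by simp), v, hUS (by simp), huv, fun c r hr hu hv => ?_⟩
  obtain ⟨hin, hout⟩ := h c r hr.le (Set.pair_subset hu hv)
  rw [hcard] at hin hout
  refine ⟨ceil_sixteen_mul_div_le_of_sub_two_le (hin.trans ?_),
    ceil_sixteen_mul_div_le_of_sub_two_le hout⟩
  have hfin' : ((S \ {u, v}) ∩ closedBall c r).Finite := hfin.sdiff.inter_of_left _
  exact Nat.mul_le_mul_left 30 (Set.ncard_le_ncard
    (Set.inter_subset_inter_right _ ball_subset_closedBall) hfin')
end
end

section
/- For every integer n ≥ 14, every set S of n points in the Euclidean plane in general position, and every positive integer k satisfying 12k < 7n − 6 − √(37n² − 72n + 36), there exist two distinct points p, q ∈ S such that every closed disk having both p and q on its boundary contains at least k points of S in its open interior and leaves at least k points of S strictly outside the closed disk. -/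
/-!
Call a pair of points of `S` bad if some circle through it has fewer than `k` points of `S` inside
it or fewer than `k` outside it. As that circle moves through the pencil of the pair, each other
point enters or leaves the disk once. At the two ends of the pencil the disk is one of the sides of
the line through the pair, so at one end at least `k` points are inside and at one end at least `k`
are outside. By discrete continuity some circle of the pencil passes through a third point of `S`
and has exactly `k - 1` points inside or exactly `k - 1` outside.

The number of such triples is counted exactly. Fix a generic direction, so that each triple has a
middle point `q`. Inversion at `q` turns the circles through `q` into lines, their two sides into
half-planes, and it preserves the left and right sides of the vertical line through `q`; the triples
become lines spanned by a point on the left and a point on the right. When a line rotates about a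
point, the number of points above it is again a walk with unit steps, which determines the signed
number of its passages between two levels. Summing over all centres of rotation on the left, the
lines with both ends there cancel, and what remains depends only on `n` and the rank of `q`. For
`i + j + 3 = n` there are in total `(i + 1) * (j + 1)` triples with `j` points above the line, and
as many with `i`; for `j = k - 1` these include all triples above. Each triple has three pairs, so
at most `6 * k * (n - 1 - k)` pairs are bad, fewer than `n * (n - 1) / 2`.
-/

open EuclideanGeometry Metric

noncomputable section

namespace InOut

open Finset

/-! ### Walks with unit steps -/

section Walk

variable {α R : Type*} [Ring R] [LinearOrder R]

/-- The value at time `t` of the walk in which each `s ∈ P` changes state at time `τ s`: it counts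
before `τ s` if `σ s > 0`, after `τ s` if `σ s < 0`, and never if `σ s = 0`. At the time `τ s`
itself, `s` does not count. -/
def walkCount (P : Finset α) (σ τ : α → R) (t : R) : ℕ :=
  #{s ∈ P | 0 < σ s * (τ s - t)}

variable {P : Finset α} {σ τ : α → R} {t : R} {z : α}

theorem walkCount_neg_neg : walkCount P (-σ) (-τ) (-t) = walkCount P σ τ t := by
  simp only [walkCount, Pi.neg_apply, ← neg_sub', neg_mul_neg]

theorem walkCount_insert [DecidableEq α] (hz : z ∉ P) :
    walkCount (insert z P) σ τ t = walkCount P σ τ t + if 0 < σ z * (τ z - t) then 1 else 0 := by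
  unfold walkCount
  split_ifs with h <;> simp [filter_insert, h, hz]

theorem lt_of_injOn_insert_of_le [DecidableEq α] (hz : z ∉ P) (hmax : ∀ s ∈ P, τ s ≤ τ z)
    (hτ : Set.InjOn τ {s | s ∈ insert z P ∧ σ s ≠ 0}) (hσz : σ z ≠ 0) {s : α} (hs : s ∈ P)
    (hσs : σ s ≠ 0) : τ s < τ z :=
  (hmax s hs).lt_of_ne fun h => hz <|
    hτ (show s ∈ _ from ⟨mem_insert_of_mem hs, hσs⟩) ⟨mem_insert_self z P, hσz⟩ h ▸ hs

variable [IsStrictOrderedRing R]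

theorem walkCount_eq_card_neg (h : ∀ s ∈ P, σ s ≠ 0 → τ s < t) :
    walkCount P σ τ t = #{s ∈ P | σ s < 0} := by
  refine congrArg card (filter_congr fun s hs => ?_)
  rcases eq_or_ne (σ s) 0 with hσ | hσ
  · simp [hσ]
  · simp [mul_pos_iff, (h s hs hσ).not_gt, h s hs hσ]

theorem walkCount_insert_last_self [DecidableEq α] (hz : z ∉ P)
    (hlt : ∀ s ∈ P, σ s ≠ 0 → τ s < τ z) :
    walkCount (insert z P) σ τ (τ z) = #{s ∈ P | σ s < 0} := by
  simp [walkCount_insert hz, walkCount_eq_card_neg hlt]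

theorem walkCount_insert_last [DecidableEq α] (hz : z ∉ P) (hlt : σ z ≠ 0 → t < τ z) :
    walkCount (insert z P) σ τ t = walkCount P σ τ t + if 0 < σ z then 1 else 0 := by
  rcases eq_or_ne (σ z) 0 with hσz | hσz
  · simp [walkCount_insert hz, hσz]
  · simp [walkCount_insert hz, mul_pos_iff_of_pos_right (sub_pos.2 (hlt hσz))]

/-- Summation along a walk, from its value before all times `τ s` to its value after them: when
`r` changes state, the walk moves between the levels `walkCount P σ τ (τ r) + 1` and
`walkCount P σ τ (τ r)`. -/
theorem sum_sign_mul_walkCount_step (hτ : Set.InjOn τ {s | s ∈ P ∧ σ s ≠ 0}) (F : ℕ → ℤ) :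
    ∑ r ∈ P, (SignType.sign (σ r) : ℤ) *
        (F (walkCount P σ τ (τ r) + 1) - F (walkCount P σ τ (τ r)))
      = F #{s ∈ P | 0 < σ s} - F #{s ∈ P | σ s < 0} := by
  classical
  induction P using Finset.induction_on_max_value τ generalizing F with
  | empty => simp
  | insert z P hz hmax ih =>
    have hlt (hσz : σ z ≠ 0) (s : α) := lt_of_injOn_insert_of_le hz hmax hτ hσz (s := s)
    have hlast (hσz : σ z ≠ 0) := walkCount_insert_last_self hz (hlt hσz)
    have hstep : ∀ r ∈ P, (SignType.sign (σ r) : ℤ) *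
        (F (walkCount (insert z P) σ τ (τ r) + 1) - F (walkCount (insert z P) σ τ (τ r))) =
        (SignType.sign (σ r) : ℤ) * (F (walkCount P σ τ (τ r) + (if 0 < σ z then 1 else 0) + 1) -
          F (walkCount P σ τ (τ r) + if 0 < σ z then 1 else 0)) := by
      intro r hr
      rcases eq_or_ne (σ r) 0 with hσr | hσr
      · simp [hσr]
      · rw [walkCount_insert_last hz fun hσz => hlt hσz r hr hσr]
    have ih := ih (hτ.mono fun _ => And.imp_left mem_insert_of_mem)
    rw [sum_insert hz, sum_congr rfl hstep]
    rcases lt_trichotomy (σ z) 0 with hσz | hσz | hσz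
    · simp [hlast hσz.ne, filter_insert, hσz, hσz.not_gt, hz, ih F]
    · simp [filter_insert, hσz, ih F]
    · have ih := ih fun w => F (w + 1)
      simp [hlast hσz.ne', filter_insert, hσz, hσz.not_gt, hz, ih]

theorem exists_walkCount_eq_of_lt_card_neg {j : ℕ} (hτ : Set.InjOn τ {s | s ∈ P ∧ σ s ≠ 0})
    (hle : walkCount P σ τ t ≤ j) (hlt : j < #{s ∈ P | σ s < 0}) :
    ∃ r ∈ P, σ r ≠ 0 ∧ walkCount P σ τ (τ r) = j := by
  classical
  induction P using Finset.induction_on_max_value τ generalizing j with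
  | empty => simp at hlt
  | insert z P hz hmax ih =>
    have hτz (hσz : σ z ≠ 0) (s : α) := lt_of_injOn_insert_of_le hz hmax hτ hσz (s := s)
    have ih {i : ℕ} (hle : walkCount P σ τ t ≤ i) (hlt : i < #{s ∈ P | σ s < 0})
        (hj : (i + if 0 < σ z then 1 else 0) = j) :
        ∃ r ∈ insert z P, σ r ≠ 0 ∧ walkCount (insert z P) σ τ (τ r) = j := by
      obtain ⟨r, hr, hσr, hcount⟩ := ih (hτ.mono fun _ => And.imp_left mem_insert_of_mem) hle hlt
      exact ⟨r, mem_insert_of_mem hr, hσr, by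
        rw [walkCount_insert_last hz fun hσz => hτz hσz r hr hσr, hcount, hj]⟩
    rw [walkCount_insert hz] at hle
    rcases lt_trichotomy (σ z) 0 with hσz | hσz | hσz
    · rw [filter_insert, if_pos hσz, card_insert_of_notMem (by simp [hz])] at hlt
      rcases (Nat.le_of_lt_succ hlt).lt_or_eq with hlt | heq
      · exact ih (by omega) hlt (by simp [hσz.not_gt])
      · exact ⟨z, mem_insert_self z P, hσz.ne,
          (walkCount_insert_last_self hz (hτz hσz.ne)).trans heq.symm⟩
    · simp only [hσz, filter_insert, lt_irrefl, if_false] at hlt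
      exact ih (by omega) hlt (by simp [hσz])
    · rw [filter_insert, if_neg hσz.not_gt] at hlt
      rcases lt_or_ge t (τ z) with htz | htz
      · rw [if_pos (mul_pos hσz (sub_pos.2 htz))] at hle
        exact ih (i := j - 1) (by omega) (by omega) (by simp [hσz]; omega)
      · have := walkCount_eq_card_neg fun s hs hσs => (hτz hσz.ne' s hs hσs).trans_le htz
        omega

/-- The values of the walk before and after all times `τ s` add up to `#{s ∈ P | σ s ≠ 0}`, so one
of them exceeds `j`. -/
theorem exists_walkCount_eq {j : ℕ} (hτ : Set.InjOn τ {s | s ∈ P ∧ σ s ≠ 0})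
    (hle : walkCount P σ τ t ≤ j) (hj : 2 * j < #{s ∈ P | σ s ≠ 0}) :
    ∃ r ∈ P, σ r ≠ 0 ∧ walkCount P σ τ (τ r) = j := by
  rcases lt_or_ge j #{s ∈ P | σ s < 0} with hlt | hge
  · exact exists_walkCount_eq_of_lt_card_neg hτ hle hlt
  have hpos : j < #{s ∈ P | 0 < σ s} := by
    have hsplit := card_filter_add_card_filter_not (s := {s ∈ P | σ s ≠ 0}) (σ · < 0)
    have hle : #{s ∈ {s ∈ P | σ s ≠ 0} | ¬ σ s < 0} ≤ #{s ∈ P | 0 < σ s} :=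
      card_le_card fun s => by simpa using fun hs hσ hge => ⟨hs, hge.lt_of_ne' hσ⟩
    have := card_le_card (filter_subset_filter (σ · < 0) (filter_subset (σ · ≠ 0) P))
    omega
  obtain ⟨r, hr, hσr, hcount⟩ :=
    exists_walkCount_eq_of_lt_card_neg (σ := -σ) (τ := -τ) (t := -t) (j := j)
      (fun a ha b hb hab => hτ (by simpa using ha) (by simpa using hb) (by simpa using hab))
      (by rwa [walkCount_neg_neg]) (by simpa using hpos)
  exact ⟨r, hr, by simpa using hσr, by rwa [Pi.neg_apply, walkCount_neg_neg] at hcount⟩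

end Walk

theorem sum_card_filter_lt {α R M : Type*} [LinearOrder R] [AddCommMonoid M] {A : Finset α}
    {τ : α → R} (hτ : Set.InjOn τ A) (F : ℕ → M) :
    ∑ b ∈ A, F #{a ∈ A | τ a < τ b} = ∑ i ∈ range #A, F i := by
  have hinj : Set.InjOn (fun b => #{a ∈ A | τ a < τ b}) A := by
    have hmono : ∀ b ∈ A, ∀ c ∈ A, τ b < τ c → #{a ∈ A | τ a < τ b} < #{a ∈ A | τ a < τ c} := by
      intro b hb c _ hbc
      exact card_lt_card <| (ssubset_iff_of_subset
        (monotone_filter_right A fun _ _ h => h.trans hbc)).2 ⟨b, by simp [hb, hbc], by simp⟩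
    intro b hb c hc hbc
    rcases lt_trichotomy (τ b) (τ c) with h | h | h
    · exact absurd hbc (hmono b hb c hc h).ne
    · exact hτ hb hc h
    · exact absurd hbc (hmono c hc b hb h).ne'
  have hmaps : Set.MapsTo (fun b => #{a ∈ A | τ a < τ b}) A (range #A : Finset ℕ) := fun b hb =>
    mem_coe.2 (mem_range.2 (card_lt_card (filter_ssubset.2 ⟨b, hb, lt_irrefl _⟩)))
  exact sum_nbij _ hmaps hinj (surjOn_of_injOn_of_card_le _ hmaps hinj (by simp)) fun _ _ => rfl

/-! ### Lines spanned by a finite family of points -/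

section Lines

/-- The first coordinate of `p` after the shear `(x, y) ↦ (x + t * y, y)`. The parameter `t` is a
choice of direction: lines of constant abscissa are called vertical. -/
def abscissa (t : ℝ) (p : Pt) : ℝ := p 0 + t * p 1

/-- Twice the signed area of the triangle `abc`, positive if `c` is to the left of the line from
`a` to `b`. -/
def signedArea (a b c : Pt) : ℝ := (b 0 - a 0) * (c 1 - a 1) - (b 1 - a 1) * (c 0 - a 0)

theorem signedArea_swap_left (a b c : Pt) : signedArea b a c = -signedArea a b c := by
  simp only [signedArea]; ring

variable {α : Type*}

/-- The number of points of the family `f` over `P` that lie above the line through `f a` and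
`f b`. Multiplication by the difference of the abscissae makes it symmetric in `a` and `b`. -/
def aboveCount (t : ℝ) (f : α → Pt) (P : Finset α) (a b : α) : ℕ :=
  #{s ∈ P | 0 < (abscissa t (f b) - abscissa t (f a)) * signedArea (f a) (f b) (f s)}

/-- The family `f` over `P` has no two points on a common vertical line and no three on a common
line. -/
structure IsGeneric (t : ℝ) (f : α → Pt) (P : Finset α) : Prop where
  injOn_abscissa : Set.InjOn (fun a => abscissa t (f a)) P
  signedArea_ne_zero : ∀ a ∈ P, ∀ b ∈ P, ∀ c ∈ P, a ≠ b → a ≠ c → b ≠ c →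
    signedArea (f a) (f b) (f c) ≠ 0

variable {t : ℝ} {f : α → Pt} {P : Finset α}

theorem aboveCount_comm (a b : α) : aboveCount t f P a b = aboveCount t f P b a := by
  unfold aboveCount
  congr! 3 with s
  rw [signedArea_swap_left, ← neg_sub, neg_mul_neg]

theorem abscissa_sub_mul_slope_sub {b r s : Pt} (hr : abscissa t r ≠ abscissa t b)
    (hs : abscissa t s ≠ abscissa t b) :
    (abscissa t s - abscissa t b) * ((s 1 - b 1) / (abscissa t s - abscissa t b) -
      (r 1 - b 1) / (abscissa t r - abscissa t b)) =
      signedArea b r s / (abscissa t r - abscissa t b) := by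
  have hr := sub_ne_zero.2 hr
  have hs := sub_ne_zero.2 hs
  field_simp
  simp only [abscissa, signedArea]
  ring

theorem sum_sum_eq_zero_of_antisymm (s : Finset α) {g : α → α → ℤ}
    (hg : ∀ a b, g b a = -g a b) : ∑ a ∈ s, ∑ b ∈ s, g a b = 0 := by
  have h : ∑ a ∈ s, ∑ b ∈ s, g a b = ∑ a ∈ s, ∑ b ∈ s, -g a b :=
    sum_comm.trans (sum_congr rfl fun a _ => sum_congr rfl fun b _ => hg a b)
  simp only [sum_neg_distrib] at h
  omega

namespace IsGeneric

variable (h : IsGeneric t f P)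
include h

theorem abscissa_ne {a b : α} (ha : a ∈ P) (hb : b ∈ P) (hab : a ≠ b) :
    abscissa t (f a) ≠ abscissa t (f b) :=
  h.injOn_abscissa.ne ha hb hab

theorem aboveCount_eq_walkCount {b r : α} (hb : b ∈ P) (hr : r ∈ P) (hrb : r ≠ b) :
    aboveCount t f P b r = walkCount P (fun s => abscissa t (f s) - abscissa t (f b))
      (fun s => (f s 1 - f b 1) / (abscissa t (f s) - abscissa t (f b)))
      ((f r 1 - f b 1) / (abscissa t (f r) - abscissa t (f b))) := by
  refine congrArg card (filter_congr fun s hs => ?_)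
  rcases eq_or_ne s b with rfl | hsb
  · simp [signedArea]
  · rw [abscissa_sub_mul_slope_sub (h.abscissa_ne hr hb hrb) (h.abscissa_ne hs hb hsb),
      mul_pos_iff, div_pos_iff]
    tauto

/-- The walk is the number of points above a line rotating about `f b`. -/
theorem sum_sign_mul_aboveCount_step {b : α} (hb : b ∈ P) (F : ℕ → ℤ) :
    ∑ r ∈ P, (SignType.sign (abscissa t (f r) - abscissa t (f b)) : ℤ) *
        (F (aboveCount t f P b r + 1) - F (aboveCount t f P b r)) =
      F #{s ∈ P | abscissa t (f b) < abscissa t (f s)} -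
        F #{s ∈ P | abscissa t (f s) < abscissa t (f b)} := by
  have hslope : Set.InjOn (fun s => (f s 1 - f b 1) / (abscissa t (f s) - abscissa t (f b)))
      {s | s ∈ P ∧ abscissa t (f s) - abscissa t (f b) ≠ 0} := by
    rintro r ⟨hr, hur⟩ s ⟨hs, hus⟩ hrs
    by_contra hne
    have hrb : r ≠ b := by rintro rfl; simp at hur
    have hsb : s ≠ b := by rintro rfl; simp at hus
    have hzero := abscissa_sub_mul_slope_sub (sub_ne_zero.1 hur) (sub_ne_zero.1 hus)
    rw [show (f s 1 - f b 1) / _ = _ from hrs.symm, sub_self, mul_zero] at hzero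
    exact div_ne_zero (h.signedArea_ne_zero b hb r hr s hs hrb.symm hsb.symm hne) hur hzero.symm
  have hwalk := sum_sign_mul_walkCount_step hslope F
  simp only [sub_pos, sub_neg] at hwalk
  rw [← hwalk]
  refine sum_congr rfl fun r hr => ?_
  rcases eq_or_ne r b with rfl | hrb
  · simp
  · rw [h.aboveCount_eq_walkCount hb hr hrb]

theorem card_abscissa_gt {b : α} (hb : b ∈ P) :
    #{s ∈ P | abscissa t (f b) < abscissa t (f s)} =
      #P - 1 - #{s ∈ P | abscissa t (f s) < abscissa t (f b)} := by
  classical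
  have hsplit : {s ∈ P.erase b | ¬ abscissa t (f s) < abscissa t (f b)} =
      {s ∈ P | abscissa t (f b) < abscissa t (f s)} := by
    ext s
    simp only [mem_filter, mem_erase, not_lt]
    constructor
    · rintro ⟨⟨hsb, hs⟩, hle⟩
      exact ⟨hs, hle.lt_of_ne (h.abscissa_ne hb hs hsb.symm)⟩
    · rintro ⟨hs, hlt⟩
      exact ⟨⟨by rintro rfl; exact hlt.false, hs⟩, hlt.le⟩
  have hcard := card_filter_add_card_filter_not (s := P.erase b)
    (fun s => abscissa t (f s) < abscissa t (f b))
  rw [hsplit, filter_erase, erase_eq_of_notMem (by simp), card_erase_of_mem hb] at hcard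
  omega

/-- Lines rotating about the points left of `θ` contribute only when they pass over a point right
of `θ`: the passages over the other points cancel in pairs. -/
theorem sum_crossing (θ : ℝ) (F : ℕ → ℤ) :
    ∑ a ∈ P with abscissa t (f a) < θ, ∑ c ∈ P with ¬ abscissa t (f c) < θ,
        (F (aboveCount t f P a c + 1) - F (aboveCount t f P a c)) =
      ∑ i ∈ range #{a ∈ P | abscissa t (f a) < θ}, (F (#P - 1 - i) - F i) := by
  set g : α → α → ℤ := fun a c => (SignType.sign (abscissa t (f c) - abscissa t (f a)) : ℤ) *
    (F (aboveCount t f P a c + 1) - F (aboveCount t f P a c)) with hg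
  have hg_antisymm (a c : α) : g c a = -g a c := by
    simp only [hg]
    rw [aboveCount_comm, ← neg_sub (abscissa t (f c)), Left.sign_neg, SignType.coe_neg, neg_mul]
  calc _ = ∑ a ∈ P with abscissa t (f a) < θ, ∑ c ∈ P with ¬ abscissa t (f c) < θ, g a c := by
        refine sum_congr rfl fun a ha => sum_congr rfl fun c hc => ?_
        have hac := (mem_filter.1 ha).2.trans_le (not_lt.1 (mem_filter.1 hc).2)
        simp [hg, sign_pos (sub_pos.2 hac)]
    _ = ∑ a ∈ P with abscissa t (f a) < θ, ∑ c ∈ P, g a c := by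
        simp only [← sum_filter_add_sum_filter_not P (fun c => abscissa t (f c) < θ),
          sum_add_distrib, sum_sum_eq_zero_of_antisymm _ hg_antisymm, zero_add]
    _ = ∑ a ∈ P with abscissa t (f a) < θ,
          (F (#P - 1 - #{s ∈ {s ∈ P | abscissa t (f s) < θ} | abscissa t (f s) < abscissa t (f a)})
            - F #{s ∈ {s ∈ P | abscissa t (f s) < θ} | abscissa t (f s) < abscissa t (f a)}) := by
        refine sum_congr rfl fun a ha => ?_
        obtain ⟨ha, haθ⟩ := mem_filter.1 ha
        rw [h.sum_sign_mul_aboveCount_step ha, h.card_abscissa_gt ha, filter_filter,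
          filter_congr fun s _ => and_iff_right_of_imp fun hs => hs.trans haθ]
    _ = _ := sum_card_filter_lt (h.injOn_abscissa.mono (filter_subset _ _))
        fun i => F (#P - 1 - i) - F i

end IsGeneric

end Lines

/-! ### Circles and inversion -/

section Circles

theorem dist_sq (a b : Pt) : dist a b ^ 2 = (a 0 - b 0) ^ 2 + (a 1 - b 1) ^ 2 := by
  rw [EuclideanSpace.dist_sq_eq, Fin.sum_univ_two, Real.dist_eq, Real.dist_eq, sq_abs, sq_abs]

theorem collinear_of_signedArea_eq_zero {a b c : Pt} (h : signedArea a b c = 0) :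
    Collinear ℝ {a, b, c} := by
  rcases eq_or_ne b a with rfl | hba
  · simpa using collinear_pair ℝ b c
  have hd : (b 0 - a 0) ^ 2 + (b 1 - a 1) ^ 2 ≠ 0 := by
    rw [← dist_sq]
    exact pow_ne_zero 2 (dist_ne_zero.2 hba)
  rw [collinear_iff_of_mem (p₀ := a) (by simp)]
  refine ⟨b - a, ?_⟩
  rintro p (rfl | rfl | rfl)
  · exact ⟨0, by simp⟩
  · exact ⟨1, by simp⟩
  · refine ⟨((b 0 - a 0) * (p 0 - a 0) + (b 1 - a 1) * (p 1 - a 1)) /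
      ((b 0 - a 0) ^ 2 + (b 1 - a 1) ^ 2), ?_⟩
    unfold signedArea at h
    ext i
    fin_cases i <;> simp only [vadd_eq_add, PiLp.add_apply, PiLp.smul_apply, PiLp.sub_apply,
      smul_eq_mul, Fin.zero_eta, Fin.mk_one] <;> field_simp
    · linear_combination -(b 1 - a 1) * h
    · linear_combination (b 0 - a 0) * h

theorem exists_dist_eq_of_not_collinear {a b c : Pt} (h : ¬ Collinear ℝ {a, b, c}) :
    ∃ o, dist b o = dist a o ∧ dist c o = dist a o := by
  let s : Affine.Simplex ℝ Pt 2 := ⟨![a, b, c], affineIndependent_iff_not_collinear_set.2 h⟩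
  have hs (i : Fin 3) : dist (s.points i) s.circumcenter = s.circumradius :=
    s.dist_circumcenter_eq_circumradius i
  exact ⟨s.circumcenter, (hs 1).trans (hs 0).symm, (hs 2).trans (hs 0).symm⟩

theorem inversion_one_apply (q s : Pt) (i : Fin 2) :
    inversion q 1 s i = (s i - q i) / dist s q ^ 2 + q i := by
  simp [inversion, div_eq_inv_mul]

theorem abscissa_inversion_sub (t : ℝ) (q s : Pt) :
    abscissa t (inversion q 1 s) - abscissa t q =
      (abscissa t s - abscissa t q) / dist s q ^ 2 := by
  simp only [abscissa, inversion_one_apply]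
  ring

theorem abscissa_inversion_lt_iff {t : ℝ} {q s : Pt} :
    abscissa t (inversion q 1 s) < abscissa t q ↔ abscissa t s < abscissa t q := by
  rcases eq_or_ne s q with rfl | hsq
  · simp
  · have hd : 0 < dist s q ^ 2 := pow_pos (dist_pos.2 hsq) 2
    rw [← sub_neg, abscissa_inversion_sub, div_lt_iff₀ hd, zero_mul, sub_neg]

theorem lt_abscissa_inversion_iff {t : ℝ} {q s : Pt} :
    abscissa t q < abscissa t (inversion q 1 s) ↔ abscissa t q < abscissa t s := by
  rcases eq_or_ne s q with rfl | hsq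
  · simp
  · have hd : 0 < dist s q ^ 2 := pow_pos (dist_pos.2 hsq) 2
    rw [← sub_pos, abscissa_inversion_sub, div_pos_iff_of_pos_right hd, sub_pos]

variable {q a c s o : Pt}

theorem signedArea_inversion (ha : a ≠ q) (hc : c ≠ q) (hs : s ≠ q) :
    signedArea (inversion q 1 a) (inversion q 1 c) (inversion q 1 s) =
      (dist s q ^ 2 * signedArea q a c + dist a q ^ 2 * signedArea q c s +
        dist c q ^ 2 * signedArea q s a) / (dist a q ^ 2 * dist c q ^ 2 * dist s q ^ 2) := by
  have := dist_ne_zero.2 ha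
  have := dist_ne_zero.2 hc
  have := dist_ne_zero.2 hs
  simp only [signedArea, inversion_one_apply]
  field_simp
  ring

theorem signedArea_inversion_eq_mul (ha : a ≠ q) (hc : c ≠ q) (hs : s ≠ q)
    (hao : dist a o = dist q o) (hco : dist c o = dist q o) :
    signedArea (inversion q 1 a) (inversion q 1 c) (inversion q 1 s) =
      signedArea q a c * (dist s o ^ 2 - dist q o ^ 2) /
        (dist a q ^ 2 * dist c q ^ 2 * dist s q ^ 2) := by
  have hao := congrArg (· ^ 2) hao
  have hco := congrArg (· ^ 2) hco
  rw [signedArea_inversion ha hc hs]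
  simp only [dist_sq, signedArea] at hao hco ⊢
  congr 1
  linear_combination ((c 0 - q 0) * (s 1 - q 1) - (c 1 - q 1) * (s 0 - q 0)) * hao +
    ((s 0 - q 0) * (a 1 - q 1) - (s 1 - q 1) * (a 0 - q 0)) * hco

/-- The number of points of `S` inside the circle with centre `o` and radius `ρ`. -/
def inCount (S : Finset Pt) (o : Pt) (ρ : ℝ) : ℕ := #{s ∈ S | dist s o < ρ}

/-- The number of points of `S` outside the circle with centre `o` and radius `ρ`. -/
def outCount (S : Finset Pt) (o : Pt) (ρ : ℝ) : ℕ := #{s ∈ S | ρ < dist s o}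

end Circles

section GeneralPosition

variable {S : Set Pt} (hS : GenPos S) {q a c s o : Pt}
include hS

theorem _root_.GenPos.not_collinear (hq : q ∈ S) (ha : a ∈ S) (hc : c ∈ S) (hqa : q ≠ a)
    (hqc : q ≠ c) (hac : a ≠ c) : ¬ Collinear ℝ {q, a, c} :=
  hS.1 _ (by rintro x (rfl | rfl | rfl) <;> assumption)
    (Set.ncard_eq_three.2 ⟨q, a, c, hqa, hqc, hac, rfl⟩)

theorem _root_.GenPos.signedArea_ne_zero (hq : q ∈ S) (ha : a ∈ S) (hc : c ∈ S) (hqa : q ≠ a)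
    (hqc : q ≠ c) (hac : a ≠ c) : signedArea q a c ≠ 0 :=
  mt collinear_of_signedArea_eq_zero (hS.not_collinear hq ha hc hqa hqc hac)

theorem _root_.GenPos.dist_ne (hq : q ∈ S) (ha : a ∈ S) (hc : c ∈ S) (hs : s ∈ S) (hqa : q ≠ a)
    (hqc : q ≠ c) (hac : a ≠ c) (hsq : s ≠ q) (hsa : s ≠ a) (hsc : s ≠ c)
    (hao : dist a o = dist q o) (hco : dist c o = dist q o) : dist s o ≠ dist q o := by
  intro hso
  refine hS.2 {s, q, a, c} (by rintro x (rfl | rfl | rfl | rfl) <;> assumption)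
    (Set.ncard_eq_four.2 ⟨s, q, a, c, hsq, hsa, hsc, hqa, hqc, hac, rfl⟩) ⟨o, dist q o, ?_⟩
  rintro x (rfl | rfl | rfl | rfl) <;> first | rfl | assumption

theorem _root_.GenPos.signedArea_inversion_ne_zero (hq : q ∈ S) (ha : a ∈ S) (hc : c ∈ S)
    (hs : s ∈ S) (hqa : q ≠ a) (hqc : q ≠ c) (hac : a ≠ c) (hsq : s ≠ q) (hsa : s ≠ a)
    (hsc : s ≠ c) :
    signedArea (inversion q 1 a) (inversion q 1 c) (inversion q 1 s) ≠ 0 := by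
  obtain ⟨o, hao, hco⟩ :=
    exists_dist_eq_of_not_collinear (hS.not_collinear hq ha hc hqa hqc hac)
  have hne := hS.dist_ne hq ha hc hs hqa hqc hac hsq hsa hsc hao hco
  rw [signedArea_inversion_eq_mul hqa.symm hqc.symm hsq hao hco]
  refine div_ne_zero (mul_ne_zero (hS.signedArea_ne_zero hq ha hc hqa hqc hac) ?_) ?_
  · exact sub_ne_zero.2 fun h => hne ((pow_left_inj₀ dist_nonneg dist_nonneg two_ne_zero).1 h)
  · simp [hqa.symm, hqc.symm, hsq]

end GeneralPosition

section CircleCounts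

variable {S : Finset Pt} {t : ℝ} {q a c o p r : Pt}

theorem inCount_add_outCount_add_three (hS : GenPos (S : Set Pt)) (hp : p ∈ S) (hq : q ∈ S)
    (hr : r ∈ S) (hpq : p ≠ q) (hpr : p ≠ r) (hqr : q ≠ r) (hqo : dist q o = dist p o)
    (hro : dist r o = dist p o) :
    inCount S o (dist p o) + outCount S o (dist p o) + 3 = #S := by
  classical
  have hon : {s ∈ S | dist s o = dist p o} = {p, q, r} := by
    ext s
    simp only [mem_filter, mem_insert, mem_singleton]
    constructor
    · rintro ⟨hs, hso⟩
      by_contra! hne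
      exact hS.dist_ne hp hq hr hs hpq hpr hqr hne.1 hne.2.1 hne.2.2 hqo hro hso
    · rintro (rfl | rfl | rfl) <;> simp_all
  have hthree : #{s ∈ S | dist s o = dist p o} = 3 := card_eq_three.2 ⟨p, q, r, hpq, hpr, hqr, hon⟩
  have hnotin := card_filter_add_card_filter_not (s := S) (dist · o < dist p o)
  have hnotout := card_filter_add_card_filter_not (s := {s ∈ S | ¬ dist s o < dist p o})
    (dist · o = dist p o)
  simp only [filter_filter, not_lt, ← ne_eq, ← lt_iff_le_and_ne',
    and_iff_right_of_imp (Eq.ge : _ = dist p o → _)] at hnotin hnotout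
  simp only [inCount, outCount]
  omega

theorem aboveCount_inversion_eq_inCount_or_outCount [DecidableEq Pt]
    (hqa : abscissa t a < abscissa t q) (hqc : abscissa t q < abscissa t c)
    (h : signedArea q a c ≠ 0) (hao : dist a o = dist q o) (hco : dist c o = dist q o) :
    aboveCount t (inversion q 1) (S.erase q) a c = inCount S o (dist q o) ∨
      aboveCount t (inversion q 1) (S.erase q) a c = outCount S o (dist q o) := by
  have haq : a ≠ q := by rintro rfl; exact hqa.false
  have hcq : c ≠ q := by rintro rfl; exact hqc.false
  have hac := sub_pos.2 <|
    (abscissa_inversion_lt_iff.2 hqa).trans (lt_abscissa_inversion_iff.2 hqc)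
  have hcount : aboveCount t (inversion q 1) (S.erase q) a c =
      #{s ∈ S | 0 < signedArea q a c * (dist s o ^ 2 - dist q o ^ 2)} := by
    rw [aboveCount, ← erase_eq_of_notMem (s := {s ∈ S | _ < _}) (a := q) (by simp),
      ← filter_erase]
    refine congrArg card (filter_congr fun s hs => ?_)
    have hsq := ne_of_mem_erase hs
    have hd : 0 < dist a q ^ 2 * dist c q ^ 2 * dist s q ^ 2 := by
      have := dist_pos.2 haq; have := dist_pos.2 hcq; have := dist_pos.2 hsq; positivity
    rw [mul_pos_iff_of_pos_left hac, signedArea_inversion_eq_mul haq hcq hsq hao hco,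
      div_pos_iff_of_pos_right hd]
  rw [hcount]
  rcases h.lt_or_gt with hneg | hpos
  · left
    simp [inCount, mul_pos_iff, hneg, hneg.not_gt, sq_lt_sq₀]
  · right
    simp [outCount, hpos, sq_lt_sq₀]

end CircleCounts

/-! ### Counting circles through three points -/

section Triples

/-- The direction `t` separates the points of `S`, and also their images under the inversion at any
point of `S`. -/
structure IsGenericDirection (t : ℝ) (S : Finset Pt) : Prop where
  injOn_abscissa : Set.InjOn (abscissa t) S
  injOn_abscissa_inversion : ∀ q ∈ S, Set.InjOn (fun s => abscissa t (inversion q 1 s)) S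

theorem exists_injOn_abscissa {V : Set Pt} (hV : V.Finite) : ∃ t, Set.InjOn (abscissa t) V := by
  obtain ⟨t, ht⟩ :=
    (hV.image2 (fun p q : Pt => (q 0 - p 0) / (p 1 - q 1)) hV).exists_notMem
  refine ⟨t, fun p hp q hq hpq => ?_⟩
  simp only [abscissa] at hpq
  have hsnd : p 1 = q 1 := by
    by_contra hne
    exact ht ⟨p, hp, q, hq, (div_eq_iff (sub_ne_zero.2 hne)).2 (by linarith)⟩
  rw [hsnd, add_left_inj] at hpq
  ext i
  fin_cases i <;> assumption

theorem exists_isGenericDirection (S : Finset Pt) : ∃ t, IsGenericDirection t S := by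
  have hfin := S.finite_toSet
  obtain ⟨t, ht⟩ := exists_injOn_abscissa
    (hfin.union (hfin.biUnion fun q _ => hfin.image (inversion q 1)))
  refine ⟨t, ht.mono Set.subset_union_left, fun q hq => ?_⟩
  exact (ht.mono ((Set.subset_biUnion_of_mem hq).trans Set.subset_union_right)).comp
    (inversion_injective q one_ne_zero).injOn (Set.mapsTo_image _ _)

theorem IsGenericDirection.isGeneric_inversion [DecidableEq Pt] {t : ℝ} {S : Finset Pt}
    (ht : IsGenericDirection t S) (hS : GenPos (S : Set Pt)) {q : Pt} (hq : q ∈ S) :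
    IsGeneric t (inversion q 1) (S.erase q) where
  injOn_abscissa := (ht.injOn_abscissa_inversion q hq).mono (erase_subset q S)
  signedArea_ne_zero := by
    intro a ha b hb c hc hab hac hbc
    obtain ⟨haq, ha⟩ := mem_erase.1 ha
    obtain ⟨hbq, hb⟩ := mem_erase.1 hb
    obtain ⟨hcq, hc⟩ := mem_erase.1 hc
    exact hS.signedArea_inversion_ne_zero hq ha hb hc haq.symm hbq.symm hab hcq hac.symm hbc.symm

theorem sum_range_ite_lt (k n : ℕ) : ∑ l ∈ range n, (if k < l then 1 else 0) = n - (k + 1) := by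
  induction n with
  | zero => simp
  | succ n ih => rw [sum_range_succ, ih]; split_ifs <;> omega

theorem sum_range_sub_mul_two (k r : ℕ) : (∑ m ∈ range (k + r), (m - k)) * 2 = r * (r - 1) := by
  have hzero : ∑ m ∈ range k, (m - k) = 0 :=
    sum_eq_zero fun m hm => Nat.sub_eq_zero_of_le (mem_range.1 hm).le
  simp [sum_range_add, hzero, sum_range_id_mul_two]

theorem sum_range_sum_range_crossing (i j : ℕ) :
    ∑ m ∈ range (i + j + 3), ∑ l ∈ range m,
      ((if j < i + j + 1 - l then 1 else 0) - (if j < l then 1 else 0) : ℤ) =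
      (i + 1) * (j + 1) := by
  have hterm (l : ℕ) : ((if j < i + j + 1 - l then 1 else 0) - (if j < l then 1 else 0) : ℤ) =
      1 - (if i < l then 1 else 0 : ℕ) - (if j < l then 1 else 0 : ℕ) := by
    split_ifs <;> omega
  simp only [hterm, sum_sub_distrib, ← Nat.cast_sum, sum_range_ite_lt, sum_const, card_range,
    nsmul_one]
  have hall := sum_range_sub_mul_two 0 (i + j + 3)
  have hi := sum_range_sub_mul_two (i + 1) (j + 2)
  have hj := sum_range_sub_mul_two (j + 1) (i + 2)
  simp only [Nat.sub_zero, zero_add, Nat.add_succ_sub_one] at hall hi hj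
  rw [show i + 1 + (j + 2) = i + j + 3 by ring] at hi
  rw [show j + 1 + (i + 2) = i + j + 3 by ring] at hj
  zify at hall hi hj ⊢
  linarith

/-- The triples `(q, a, c)` of points of `S` with `q` between `a` on the left and `c` on the right,
such that after inversion at `q` exactly `j` points of `S` lie above the line through `a` and `c`.
The circle through such a triple has exactly `j` points of `S` inside it or `j` outside it. -/
def triples [DecidableEq Pt] (t : ℝ) (S : Finset Pt) (j : ℕ) : Finset (Pt × Pt × Pt) :=
  {x ∈ S ×ˢ S ×ˢ S | abscissa t x.2.1 < abscissa t x.1 ∧ abscissa t x.1 < abscissa t x.2.2 ∧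
    aboveCount t (inversion x.1 1) (S.erase x.1) x.2.1 x.2.2 = j}

variable [DecidableEq Pt] {t : ℝ} {S : Finset Pt} {i j : ℕ}

theorem sum_middle_crossing (ht : IsGenericDirection t S) (hS : GenPos (S : Set Pt)) {q : Pt}
    (hq : q ∈ S) (j : ℕ) :
    ∑ a ∈ S with abscissa t a < abscissa t q, ∑ c ∈ S with abscissa t q < abscissa t c,
        (if aboveCount t (inversion q 1) (S.erase q) a c = j then 1 else 0 : ℤ) =
      ∑ l ∈ range #{a ∈ S | abscissa t a < abscissa t q},
        ((if j < #S - 1 - 1 - l then 1 else 0) - (if j < l then 1 else 0)) := by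
  have hleft : {a ∈ S.erase q | abscissa t (inversion q 1 a) < abscissa t q} =
      {a ∈ S | abscissa t a < abscissa t q} := by
    simp only [abscissa_inversion_lt_iff, filter_erase]
    exact erase_eq_of_notMem (by simp)
  have hright : {c ∈ S.erase q | ¬ abscissa t (inversion q 1 c) < abscissa t q} =
      {c ∈ S | abscissa t q < abscissa t c} := by
    ext c
    simp only [abscissa_inversion_lt_iff, mem_filter, mem_erase, not_lt]
    constructor
    · rintro ⟨⟨hcq, hc⟩, hle⟩
      exact ⟨hc, hle.lt_of_ne (ht.injOn_abscissa.ne hq hc hcq.symm)⟩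
    · rintro ⟨hc, hlt⟩
      exact ⟨⟨by rintro rfl; exact hlt.false, hc⟩, hlt.le⟩
  have hcross := (ht.isGeneric_inversion hS hq).sum_crossing (abscissa t q)
    fun w => if j < w then 1 else 0
  rw [hleft, hright, card_erase_of_mem hq] at hcross
  rw [← hcross]
  refine sum_congr rfl fun a _ => sum_congr rfl fun c _ => ?_
  split_ifs <;> omega

theorem card_triples (ht : IsGenericDirection t S) (hS : GenPos (S : Set Pt))
    (hcard : #S = i + j + 3) : #(triples t S j) = (i + 1) * (j + 1) := by
  suffices (#(triples t S j) : ℤ) = (i + 1) * (j + 1) by exact_mod_cast this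
  calc (#(triples t S j) : ℤ) =
      ∑ q ∈ S, ∑ a ∈ S with abscissa t a < abscissa t q,
        ∑ c ∈ S with abscissa t q < abscissa t c,
          (if aboveCount t (inversion q 1) (S.erase q) a c = j then 1 else 0) := by
        simp only [triples, card_filter, sum_product, sum_filter, ite_and, Nat.cast_sum,
          Nat.cast_ite, Nat.cast_one, Nat.cast_zero, sum_ite_irrel, sum_const_zero]
    _ = ∑ q ∈ S, ∑ l ∈ range #{a ∈ S | abscissa t a < abscissa t q},
          ((if j < #S - 1 - 1 - l then 1 else 0) - (if j < l then 1 else 0)) :=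
        sum_congr rfl fun q hq => sum_middle_crossing ht hS hq j
    _ = ∑ m ∈ range (i + j + 3), ∑ l ∈ range m,
          ((if j < i + j + 1 - l then 1 else 0) - (if j < l then 1 else 0)) := by
        rw [← hcard, ← sum_card_filter_lt ht.injOn_abscissa, hcard]
        rfl
    _ = (i + 1) * (j + 1) := sum_range_sum_range_crossing i j

theorem mem_triples_of_circle (hS : GenPos (S : Set Pt)) (hcard : #S = i + j + 3) {q a c o : Pt}
    (hq : q ∈ S) (ha : a ∈ S) (hc : c ∈ S) (haq : abscissa t a < abscissa t q)
    (hqc : abscissa t q < abscissa t c) (hao : dist a o = dist q o) (hco : dist c o = dist q o)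
    (hj : inCount S o (dist q o) = j ∨ outCount S o (dist q o) = j) :
    (q, a, c) ∈ triples t S j ∪ triples t S i := by
  have hqa : q ≠ a := by rintro rfl; exact haq.false
  have hqc' : q ≠ c := by rintro rfl; exact hqc.false
  have hac : a ≠ c := by rintro rfl; exact (haq.trans hqc).false
  have htotal := inCount_add_outCount_add_three hS hq ha hc hqa hqc' hac hao hco
  have habove := aboveCount_inversion_eq_inCount_or_outCount (S := S) haq hqc
    (hS.signedArea_ne_zero hq ha hc hqa hqc' hac) hao hco
  simp only [triples, mem_union, mem_filter, mem_product, hq, ha, hc, haq, hqc, true_and]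
  omega

theorem exists_sorted_triple {f : Pt → ℝ} {p q r : Pt} (hpq : f p ≠ f q) (hpr : f p ≠ f r)
    (hqr : f q ≠ f r) :
    ∃ b a c, f a < f b ∧ f b < f c ∧ ({b, a, c} : Finset Pt) = {p, q, r} := by
  rcases hpq.lt_or_gt with hpq | hpq <;> rcases hpr.lt_or_gt with hpr | hpr <;>
    rcases hqr.lt_or_gt with hqr | hqr
  · exact ⟨q, p, r, hpq, hqr, by grind⟩
  · exact ⟨r, p, q, hpr, hqr, by grind⟩
  · exact absurd (hpq.trans (hqr.trans hpr)) (lt_irrefl _)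
  · exact ⟨p, r, q, hpr, hpq, by grind⟩
  · exact ⟨p, q, r, hpq, hpr, by grind⟩
  · exact absurd (hpr.trans (hqr.trans hpq)) (lt_irrefl _)
  · exact ⟨r, q, p, hqr, hpr, by grind⟩
  · exact ⟨q, r, p, hqr, hpq, by grind⟩

theorem exists_mem_triples_of_circle (ht : Set.InjOn (abscissa t) S) (hS : GenPos (S : Set Pt))
    (hcard : #S = i + j + 3) {p q r o : Pt} (hp : p ∈ S) (hq : q ∈ S) (hr : r ∈ S) (hpq : p ≠ q)
    (hpr : p ≠ r) (hqr : q ≠ r) (hqo : dist q o = dist p o) (hro : dist r o = dist p o)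
    (hj : inCount S o (dist p o) = j ∨ outCount S o (dist p o) = j) :
    ∃ x ∈ triples t S j ∪ triples t S i, ({x.1, x.2.1, x.2.2} : Finset Pt) = {p, q, r} := by
  obtain ⟨b, a, c, hab, hbc, heq⟩ := exists_sorted_triple (ht.ne hp hq hpq) (ht.ne hp hr hpr)
    (ht.ne hq hr hqr)
  have hmem : ∀ s ∈ ({b, a, c} : Finset Pt), s ∈ S ∧ dist s o = dist p o := by
    rw [heq]
    simp only [mem_insert, mem_singleton]
    rintro s (rfl | rfl | rfl) <;> simp [*]
  obtain ⟨hbS, hbo⟩ := hmem b (by simp)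
  obtain ⟨haS, hao⟩ := hmem a (by simp)
  obtain ⟨hcS, hco⟩ := hmem c (by simp)
  exact ⟨(b, a, c), mem_triples_of_circle hS hcard hbS haS hcS hab hbc (hao.trans hbo.symm)
    (hco.trans hbo.symm) (hbo ▸ hj), heq⟩

end Triples

/-! ### The pencil of circles through two points -/

section Pencil

/-- The centre of the circle with parameter `t` in the pencil of circles through `p` and `q`; as `t`
grows it moves along the bisector towards the left side of the line from `p` to `q`. -/
def pencilCenter (p q : Pt) (t : ℝ) : Pt :=
  !₂[(p 0 + q 0) / 2 - t * (q 1 - p 1), (p 1 + q 1) / 2 + t * (q 0 - p 0)]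

/-- The parameter of the circle through `p`, `q` and `s`. For `s` on the line through `p` and `q` it
is the junk value `0`. -/
def pencilParam (p q s : Pt) : ℝ :=
  (dist s (pencilCenter p q 0) ^ 2 - dist p (pencilCenter p q 0) ^ 2) / (2 * signedArea p q s)

variable {p q s o : Pt} {t : ℝ}

theorem dist_pencilCenter_right : dist q (pencilCenter p q t) = dist p (pencilCenter p q t) := by
  rw [← pow_left_inj₀ dist_nonneg dist_nonneg two_ne_zero, dist_sq, dist_sq]
  simp only [pencilCenter, PiLp.toLp_apply, Matrix.cons_val_zero, Matrix.cons_val_one]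
  ring

theorem exists_eq_pencilCenter (hpq : p ≠ q) (h : dist q o = dist p o) :
    ∃ t, o = pencilCenter p q t := by
  have hd : (q 0 - p 0) ^ 2 + (q 1 - p 1) ^ 2 ≠ 0 := by
    rw [← dist_sq]
    exact pow_ne_zero 2 (dist_ne_zero.2 hpq.symm)
  have hsq := congrArg (· ^ 2) h
  simp only [dist_sq] at hsq
  refine ⟨((q 0 - p 0) * (o 1 - (p 1 + q 1) / 2) - (q 1 - p 1) * (o 0 - (p 0 + q 0) / 2)) /
    ((q 0 - p 0) ^ 2 + (q 1 - p 1) ^ 2), ?_⟩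
  ext i
  fin_cases i <;> simp only [pencilCenter, Fin.zero_eta, Fin.mk_one, PiLp.toLp_apply,
    Matrix.cons_val_zero, Matrix.cons_val_one] <;> field_simp
  · linear_combination (p 0 - q 0) * hsq
  · linear_combination (p 1 - q 1) * hsq

theorem dist_sq_sub_dist_sq_pencilCenter (h : signedArea p q s ≠ 0) :
    dist s (pencilCenter p q t) ^ 2 - dist p (pencilCenter p q t) ^ 2 =
      2 * (signedArea p q s * (pencilParam p q s - t)) := by
  have hparam : 2 * (signedArea p q s * pencilParam p q s) =
      dist s (pencilCenter p q 0) ^ 2 - dist p (pencilCenter p q 0) ^ 2 := by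
    rw [pencilParam]; field_simp
  rw [mul_sub, mul_sub, hparam]
  simp only [dist_sq, pencilCenter, signedArea, Matrix.cons_val_zero, Matrix.cons_val_one]
  ring

theorem dist_pencilCenter_pencilParam (h : signedArea p q s ≠ 0) :
    dist s (pencilCenter p q (pencilParam p q s)) =
      dist p (pencilCenter p q (pencilParam p q s)) := by
  rw [← pow_left_inj₀ dist_nonneg dist_nonneg two_ne_zero, ← sub_eq_zero,
    dist_sq_sub_dist_sq_pencilCenter h, sub_self, mul_zero, mul_zero]

variable {S : Finset Pt} (hS : GenPos (S : Set Pt)) (hp : p ∈ S) (hq : q ∈ S) (hpq : p ≠ q)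
include hS hp hq hpq

theorem signedArea_ne_zero_iff (hs : s ∈ S) : signedArea p q s ≠ 0 ↔ s ≠ p ∧ s ≠ q := by
  refine ⟨fun h => ⟨?_, ?_⟩, fun h => hS.signedArea_ne_zero hp hq hs hpq h.1.symm h.2.symm⟩
  · rintro rfl; simp [signedArea] at h
  · rintro rfl; simp [signedArea, mul_comm] at h

theorem card_signedArea_ne_zero : #{s ∈ S | signedArea p q s ≠ 0} + 2 = #S := by
  classical
  have hfilter : {s ∈ S | signedArea p q s ≠ 0} = (S.erase p).erase q := by
    ext s
    simp only [mem_filter, mem_erase]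
    exact ⟨fun ⟨hs, hA⟩ => ⟨((signedArea_ne_zero_iff hS hp hq hpq hs).1 hA).2,
        ((signedArea_ne_zero_iff hS hp hq hpq hs).1 hA).1, hs⟩,
      fun ⟨hsq, hsp, hs⟩ => ⟨hs, (signedArea_ne_zero_iff hS hp hq hpq hs).2 ⟨hsp, hsq⟩⟩⟩
  have := one_lt_card.2 ⟨p, hp, q, hq, hpq⟩
  rw [hfilter, card_erase_of_mem (mem_erase.2 ⟨hpq.symm, hq⟩), card_erase_of_mem hp]
  omega

theorem injOn_pencilParam : Set.InjOn (pencilParam p q) {s | s ∈ S ∧ signedArea p q s ≠ 0} := by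
  rintro r ⟨hr, hAr⟩ s ⟨hs, hAs⟩ hrs
  by_contra hne
  obtain ⟨hrp, hrq⟩ := (signedArea_ne_zero_iff hS hp hq hpq hr).1 hAr
  obtain ⟨hsp, hsq⟩ := (signedArea_ne_zero_iff hS hp hq hpq hs).1 hAs
  exact hS.dist_ne hp hq hr hs hpq hrp.symm hrq.symm hsp hsq (Ne.symm hne) dist_pencilCenter_right
    (dist_pencilCenter_pencilParam hAr) (hrs ▸ dist_pencilCenter_pencilParam hAs)

theorem dist_sq_sub_dist_sq_pencilCenter_of_mem (hs : s ∈ S) :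
    dist s (pencilCenter p q t) ^ 2 - dist p (pencilCenter p q t) ^ 2 =
      2 * (signedArea p q s * (pencilParam p q s - t)) := by
  by_cases h : signedArea p q s = 0
  · have : s = p ∨ s = q := by
      by_contra! hne
      exact (signedArea_ne_zero_iff hS hp hq hpq hs).2 hne h
    rcases this with rfl | rfl <;> simp [h, dist_pencilCenter_right]
  · exact dist_sq_sub_dist_sq_pencilCenter h

theorem outCount_pencilCenter :
    outCount S (pencilCenter p q t) (dist p (pencilCenter p q t)) =
      walkCount S (signedArea p q) (pencilParam p q) t := by
  refine congrArg card (filter_congr fun s hs => ?_)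
  rw [← sq_lt_sq₀ dist_nonneg dist_nonneg, ← sub_pos,
    dist_sq_sub_dist_sq_pencilCenter_of_mem hS hp hq hpq hs, mul_pos_iff_of_pos_left two_pos]

theorem inCount_pencilCenter :
    inCount S (pencilCenter p q t) (dist p (pencilCenter p q t)) =
      walkCount S (-signedArea p q) (pencilParam p q) t := by
  refine congrArg card (filter_congr fun s hs => ?_)
  rw [← sq_lt_sq₀ dist_nonneg dist_nonneg, ← sub_pos, ← neg_sub,
    dist_sq_sub_dist_sq_pencilCenter_of_mem hS hp hq hpq hs, ← mul_neg,
    mul_pos_iff_of_pos_left two_pos, Pi.neg_apply, neg_mul]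

theorem exists_circle_through_third {j : ℕ} (hj : 2 * j + 2 < #S) (hqo : dist q o = dist p o)
    (hle : inCount S o (dist p o) ≤ j ∨ outCount S o (dist p o) ≤ j) :
    ∃ r ∈ S, r ≠ p ∧ r ≠ q ∧ ∃ o', dist q o' = dist p o' ∧ dist r o' = dist p o' ∧
      (inCount S o' (dist p o') = j ∨ outCount S o' (dist p o') = j) := by
  obtain ⟨t, rfl⟩ := exists_eq_pencilCenter hpq hqo
  have hcard := card_signedArea_ne_zero hS hp hq hpq
  have hinj := injOn_pencilParam hS hp hq hpq
  suffices ∃ r ∈ S, signedArea p q r ≠ 0 ∧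
      (walkCount S (-signedArea p q) (pencilParam p q) (pencilParam p q r) = j ∨
        walkCount S (signedArea p q) (pencilParam p q) (pencilParam p q r) = j) by
    obtain ⟨r, hr, hAr, hcount⟩ := this
    obtain ⟨hrp, hrq⟩ := (signedArea_ne_zero_iff hS hp hq hpq hr).1 hAr
    refine ⟨r, hr, hrp, hrq, pencilCenter p q (pencilParam p q r), dist_pencilCenter_right,
      dist_pencilCenter_pencilParam hAr, ?_⟩
    rwa [inCount_pencilCenter hS hp hq hpq, outCount_pencilCenter hS hp hq hpq]
  rw [inCount_pencilCenter hS hp hq hpq, outCount_pencilCenter hS hp hq hpq] at hle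
  rcases hle with hle | hle
  · obtain ⟨r, hr, hAr, hcount⟩ := exists_walkCount_eq (σ := -signedArea p q)
      (by simpa using hinj) hle (by simp only [Pi.neg_apply, neg_ne_zero]; omega)
    exact ⟨r, hr, by simpa using hAr, Or.inl hcount⟩
  · obtain ⟨r, hr, hAr, hcount⟩ := exists_walkCount_eq hinj hle (by omega)
    exact ⟨r, hr, hAr, Or.inr hcount⟩

end Pencil

/-! ### Deep pairs -/

section DeepPairs

/-- Every circle through `p` and `q` has at least `k` points of `S` inside it and at least `k`
outside it. -/
def IsDeepPair (S : Finset Pt) (k : ℕ) (p q : Pt) : Prop :=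
  ∀ o, dist q o = dist p o → k ≤ inCount S o (dist p o) ∧ k ≤ outCount S o (dist p o)

variable {S : Finset Pt}

theorem card_offDiag_le_six {α : Type*} [DecidableEq α] (a b c : α) :
    #({a, b, c} : Finset α).offDiag ≤ 6 := by
  have h : #({a, b, c} : Finset α) ≤ 3 := card_le_three
  rw [offDiag_card]
  interval_cases #({a, b, c} : Finset α) <;> simp

theorem exists_isDeepPair {i j : ℕ} (hS : GenPos (S : Set Pt)) (hcard : #S = i + j + 3)
    (hji : j ≤ i) (hpairs : 12 * ((i + 1) * (j + 1)) < #S * (#S - 1)) :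
    ∃ p ∈ S, ∃ q ∈ S, p ≠ q ∧ IsDeepPair S (j + 1) p q := by
  classical
  by_contra! hnone
  obtain ⟨t, ht⟩ := exists_isGenericDirection S
  set T := triples t S j ∪ triples t S i
  have hcover : S.offDiag ⊆ T.biUnion fun x => ({x.1, x.2.1, x.2.2} : Finset Pt).offDiag := by
    rintro ⟨p, q⟩ hpq
    obtain ⟨hp, hq, hpq⟩ := mem_offDiag.1 hpq
    obtain ⟨o, hqo, hfew⟩ : ∃ o, dist q o = dist p o ∧
        (inCount S o (dist p o) ≤ j ∨ outCount S o (dist p o) ≤ j) := by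
      simpa [IsDeepPair, imp_iff_not_or, Nat.lt_succ_iff, Nat.succ_le_iff] using hnone p hp q hq hpq
    obtain ⟨r, hr, hrp, hrq, o', hqo', hro', hj⟩ :=
      exists_circle_through_third hS hp hq hpq (by omega) hqo hfew
    obtain ⟨x, hx, heq⟩ := exists_mem_triples_of_circle ht.injOn_abscissa hS hcard hp hq hr hpq
      hrp.symm hrq.symm hqo' hro' hj
    exact mem_biUnion.2 ⟨x, hx, by simp [heq, hpq]⟩
  have hT : #T ≤ 2 * ((i + 1) * (j + 1)) := by
    have hi := card_triples (i := j) (j := i) ht hS (by omega)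
    have hj := card_triples ht hS hcard
    have := card_union_le (triples t S j) (triples t S i)
    linarith
  have hbad := (card_le_card hcover).trans
    (card_biUnion_le_card_mul T _ 6 fun x _ => card_offDiag_le_six x.1 x.2.1 x.2.2)
  rw [offDiag_card, ← Nat.mul_sub_one] at hbad
  omega

theorem exists_isDeepPair_of_mul_lt {k : ℕ} (hS : GenPos (S : Set Pt)) (hk : 2 * k < #S)
    (hpairs : 12 * (k : ℝ) * (#S - 1 - k) < #S * (#S - 1)) :
    ∃ p ∈ S, ∃ q ∈ S, p ≠ q ∧ IsDeepPair S k p q := by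
  have hpos : (0 : ℝ) < #S := by exact_mod_cast (by omega : 0 < #S)
  obtain _ | j := k
  · have hone : (1 : ℝ) < #S := by simpa [hpos] using hpairs
    obtain ⟨p, hp, q, hq, hpq⟩ := one_lt_card.1 (by exact_mod_cast hone)
    exact ⟨p, hp, q, hq, hpq, fun _ _ => ⟨Nat.zero_le _, Nat.zero_le _⟩⟩
  · obtain ⟨i, hcard⟩ := Nat.exists_eq_add_of_le' (show j + 3 ≤ #S by omega)
    refine exists_isDeepPair (i := i) hS (by omega) (by omega) ?_
    rw [hcard, show i + (j + 3) - 1 = i + j + 2 by omega]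
    rw [hcard] at hpairs
    push_cast at hpairs
    rify
    linarith

end DeepPairs

theorem two_mul_lt_and_mul_lt_of_sqrt_lt {n k : ℝ} (hn : 2 ≤ n) (hk : 0 ≤ k)
    (h : 12 * k < 7 * n - 6 - √(37 * n ^ 2 - 72 * n + 36)) :
    2 * k < n ∧ 12 * k * (n - 1 - k) < n * (n - 1) := by
  have hsqrt : n - 6 ≤ √(37 * n ^ 2 - 72 * n + 36) := Real.le_sqrt_of_sq_le (by nlinarith)
  have hsq := Real.lt_sq_of_sqrt_lt (lt_sub_comm.1 h)
  constructor
  · linarith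
  · nlinarith

theorem ncard_inter_ball (S : Finset Pt) (c : Pt) (r : ℝ) :
    ((S : Set Pt) ∩ ball c r).ncard = inCount S c r := by
  rw [inCount, ← Set.ncard_coe_finset, coe_filter]
  rfl

theorem ncard_inter_lt_dist (S : Finset Pt) (c : Pt) (r : ℝ) :
    ((S : Set Pt) ∩ {x | r < dist x c}).ncard = outCount S c r := by
  rw [outCount, ← Set.ncard_coe_finset, coe_filter]
  rfl

end InOut

open InOut in
/-- At most `6 * k * (n - 1 - k)` pairs are not deep, which allows every `k` up to about
`(3 - √6) * n / 6 ≈ n / 10.9`. -/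
theorem pi_in_out_lower_bound_improved_general (n : ℕ) (S : Set Pt) (hcard : S.ncard = n)
    (hgp : GenPos S) (k : ℕ) (hk : 2 * k < n)
    (hpairs : 12 * (k : ℝ) * (n - 1 - k) < n * (n - 1)) :
    ∃ p ∈ S, ∃ q ∈ S, p ≠ q ∧
      ∀ (c : Pt) (r : ℝ), 0 < r → dist p c = r → dist q c = r →
        k ≤ (S ∩ ball c r).ncard ∧ k ≤ (S ∩ {x | r < dist x c}).ncard := by
  lift S to Finset Pt using Set.finite_of_ncard_pos (by omega)
  obtain rfl : S.card = n := by rw [← hcard, Set.ncard_coe_finset]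
  obtain ⟨p, hp, q, hq, hpq, hdeep⟩ := exists_isDeepPair_of_mul_lt hgp hk hpairs
  refine ⟨p, hp, q, hq, hpq, ?_⟩
  rintro c _ - rfl hqc
  rw [ncard_inter_ball, ncard_inter_lt_dist]
  exact hdeep c hqc

/-- For every `n ≥ 14`, every set `S` of `n` points in the plane in general position and
every positive integer `k` with `12k < 7n − 6 − √(37n² − 72n + 36)`, there exist two
distinct points `p, q ∈ S` such that every closed disk having both `p` and `q` on its
boundary contains at least `k` points of `S` in its open interior and leaves at least `k`
points of `S` strictly outside the closed disk. -/
theorem pi_in_out_lower_bound_improved (n : ℕ) (hn : 14 ≤ n) (S : Set Pt)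
    (hfin : S.Finite) (hcard : S.ncard = n) (hgp : GenPos S)
    (k : ℕ) (hk : 0 < k)
    (hineq : 12 * (k : ℝ) <
      7 * (n : ℝ) - 6 - Real.sqrt (37 * (n : ℝ) ^ 2 - 72 * (n : ℝ) + 36)) :
    ∃ p ∈ S, ∃ q ∈ S, p ≠ q ∧
      ∀ (c : Pt) (r : ℝ), 0 < r → dist p c = r → dist q c = r →
        k ≤ (S ∩ ball c r).ncard ∧ k ≤ (S ∩ {x | r < dist x c}).ncard := by
  obtain ⟨hlt, hpairs⟩ := InOut.two_mul_lt_and_mul_lt_of_sqrt_lt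
    (by exact_mod_cast (by omega : 2 ≤ n)) k.cast_nonneg hineq
  exact pi_in_out_lower_bound_improved_general n S hcard hgp k (by exact_mod_cast hlt) hpairs
end
end

section
/- For every integer n ≥ 4 and every set S of n points in the Euclidean plane in general position and in convex position, there exist two distinct points u, v ∈ S such that every closed disk containing both u and v contains at least ⌈n/3⌉ + 1 points of S. -/
open EuclideanGeometry Metric

noncomputable section

/-- A set of points is in convex position if every point of the set is an extreme point
of its convex hull, i.e. no point lies in the convex hull of the others. -/
def ConvexPos (S : Set Pt) : Prop :=
  ∀ p ∈ S, p ∉ convexHull ℝ (S \ {p})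

/-!
Two points of `S` form an edge of the farthest-point Delaunay triangulation of `S` if some disk
contains `S` and has both of them on its boundary.

A disk `D` containing the ends of an edge `uv` contains all points of `S` on one of the two sides of
the line `uv`. Indeed, let `p` and `q` be points of `S` on the two sides, let `x` be the point where
the segment `pq` meets the line `uv`, and let `h` be the power with respect to `D` minus the power
with respect to the enclosing circle of the edge, which is an affine function. The enclosing disk
contains `x`, so `x` lies on its chord `uv` and `h x ≤ 0`; if `D` missed both `p` and `q`, then `h`
would be positive on the segment `pq`.

It remains to find an edge with at least `⌈n/3⌉ - 1` points of `S` on each side, by walking through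
the triangulation. Start at an edge `uv` with that many points on its left. If there are fewer on
its right, move the centre of the enclosing circle along the bisector of `uv` until the circle hits
a point `w` on the left. By convex position, the points on the left of `uv` are `w` and those on the
left of `uw` or of `wv`, so one of these two edges still has `⌈n/3⌉ - 1` points on its left, but
fewer than `uv` has, and the walk continues there.
-/

open Module Set

section ConvexIndependent

variable {𝕜 V : Type*} [Field 𝕜] [LinearOrder 𝕜] [IsStrictOrderedRing 𝕜] [AddCommGroup V]
  [Module 𝕜 V] {S : Set V} {a b c p : V}

lemma eq_or_eq_of_wbtw_of_convexIndependent (hS : ConvexIndependent 𝕜 ((↑) : S → V))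
    (ha : a ∈ S) (hp : p ∈ S) (hb : b ∈ S) (h : Wbtw 𝕜 a p b) : p = a ∨ p = b := by
  by_contra! hne
  refine convexIndependent_set_iff_notMem_convexHull_sdiff.1 hS p hp ?_
  exact (convex_convexHull 𝕜 _).mem_of_wbtw h
    (subset_convexHull 𝕜 _ ⟨ha, hne.1.symm⟩) (subset_convexHull 𝕜 _ ⟨hb, hne.2.symm⟩)

lemma not_collinear_of_convexIndependent (hS : ConvexIndependent 𝕜 ((↑) : S → V))
    (ha : a ∈ S) (hb : b ∈ S) (hc : c ∈ S) (hab : a ≠ b) (hac : a ≠ c) (hbc : b ≠ c) :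
    ¬Collinear 𝕜 {a, b, c} := by
  intro h
  rcases h.wbtw_or_wbtw_or_wbtw with h | h | h
  · simpa [hab.symm, hbc] using eq_or_eq_of_wbtw_of_convexIndependent hS ha hb hc h
  · simpa [hbc.symm, hac.symm] using eq_or_eq_of_wbtw_of_convexIndependent hS hb hc ha h
  · simpa [hac, hab] using eq_or_eq_of_wbtw_of_convexIndependent hS hc ha hb h

lemma smul_add_smul_add_smul_ne_of_convexIndependent (hS : ConvexIndependent 𝕜 ((↑) : S → V))
    (ha : a ∈ S) (hb : b ∈ S) (hc : c ∈ S) (hp : p ∈ S) (hap : a ≠ p) (hbp : b ≠ p) (hcp : c ≠ p)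
    {α β γ : 𝕜} (hα : 0 ≤ α) (hβ : 0 ≤ β) (hγ : 0 ≤ γ) (hsum : 0 < α + β + γ) :
    α • a + β • b + γ • c ≠ (α + β + γ) • p := by
  intro h
  refine convexIndependent_set_iff_notMem_convexHull_sdiff.1 hS p hp ?_
  have hmass := Finset.univ.centerMass_mem_convexHull (R := 𝕜) (s := S \ {p})
    (w := ![α, β, γ]) (z := ![a, b, c])
    (by simp [Fin.forall_fin_succ, hα, hβ, hγ]) (by simpa [Fin.sum_univ_three] using hsum)
    (by simp [Fin.forall_fin_succ, ha, hb, hc, hap, hbp, hcp])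
  simpa [Finset.centerMass, Fin.sum_univ_three, h, inv_smul_smul₀ hsum.ne'] using hmass

end ConvexIndependent

/-- `u` and `v` span an edge of the farthest-point Delaunay triangulation of `S`: they are distinct
points of `S`, both farthest in `S` from a common centre `c`, so that a ball about `c` contains `S`
and has `u` and `v` on its boundary. -/
structure IsFarthestDelaunayEdge {P : Type*} [PseudoMetricSpace P] (S : Set P) (u v : P) :
    Prop where
  left_mem : u ∈ S
  right_mem : v ∈ S
  ne : u ≠ v
  exists_center : ∃ c, IsMaxOn (dist · c) S u ∧ IsMaxOn (dist · c) S v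

lemma IsFarthestDelaunayEdge.symm {P : Type*} [PseudoMetricSpace P] {S : Set P} {u v : P}
    (h : IsFarthestDelaunayEdge S u v) : IsFarthestDelaunayEdge S v u :=
  ⟨h.right_mem, h.left_mem, h.ne.symm, h.exists_center.imp fun _ hc => hc.symm⟩

section EnclosingBalls

variable {E : Type*} [NormedAddCommGroup E] [InnerProductSpace ℝ E] {S : Set E} {c d u v p q x : E}

lemma dist_sq_sub_dist_sq (p c d : E) :
    dist p d ^ 2 - dist p c ^ 2 = inner ℝ ((2 : ℝ) • (c - d)) p + (‖d‖ ^ 2 - ‖c‖ ^ 2) := by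
  rw [dist_eq_norm, dist_eq_norm, norm_sub_sq_real, norm_sub_sq_real, real_inner_smul_left,
    inner_sub_left, real_inner_comm p c, real_inner_comm p d]
  ring

lemma convex_setOf_dist_sq_sub_dist_sq_le (c d : E) (a : ℝ) :
    Convex ℝ {p | dist p d ^ 2 - dist p c ^ 2 ≤ a} := by
  simpa only [dist_sq_sub_dist_sq, innerₛₗ_apply_apply, ← le_sub_iff_add_le] using
    convex_halfSpace_le (innerₛₗ ℝ ((2 : ℝ) • (c - d))).isLinear (a - (‖d‖ ^ 2 - ‖c‖ ^ 2))

lemma convex_setOf_lt_dist_sq_sub_dist_sq (c d : E) (a : ℝ) :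
    Convex ℝ {p | a < dist p d ^ 2 - dist p c ^ 2} := by
  simpa only [dist_sq_sub_dist_sq, innerₛₗ_apply_apply, ← sub_lt_iff_lt_add] using
    convex_halfSpace_gt (innerₛₗ ℝ ((2 : ℝ) • (c - d))).isLinear (a - (‖d‖ ^ 2 - ‖c‖ ^ 2))

lemma mem_closedBall_or_mem_closedBall_of_wbtw {R r : ℝ} (huv : u ≠ v) (hu : dist u c = R)
    (hv : dist v c = R) (hp : dist p c ≤ R) (hq : dist q c ≤ R) (hpxq : Wbtw ℝ p x q)
    (hline : Collinear ℝ {u, x, v}) (hud : u ∈ closedBall d r) (hvd : v ∈ closedBall d r) :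
    p ∈ closedBall d r ∨ q ∈ closedBall d r := by
  by_contra! ⟨hpd, hqd⟩
  simp only [mem_closedBall, not_le] at hud hvd hpd hqd
  have hr : 0 ≤ r := dist_nonneg.trans hud
  have hchord : Wbtw ℝ u x v :=
    hline.wbtw_of_dist_eq_of_dist_le hu ((convex_closedBall c R).mem_of_wbtw hpxq hp hq) hv huv
  have inner_side : ∀ y, dist y c = R → dist y d ≤ r →
      dist y d ^ 2 - dist y c ^ 2 ≤ r ^ 2 - R ^ 2 := by
    rintro y rfl hy
    gcongr
  have outer_side : ∀ y, dist y c ≤ R → r < dist y d →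
      r ^ 2 - R ^ 2 < dist y d ^ 2 - dist y c ^ 2 := by
    intro y hyc hyd
    have : dist y c ^ 2 ≤ R ^ 2 := by gcongr
    have : r ^ 2 < dist y d ^ 2 := by gcongr
    linarith
  have hx_le : dist x d ^ 2 - dist x c ^ 2 ≤ r ^ 2 - R ^ 2 :=
    (convex_setOf_dist_sq_sub_dist_sq_le c d _).mem_of_wbtw hchord
      (inner_side u hu hud) (inner_side v hv hvd)
  have hx_gt : r ^ 2 - R ^ 2 < dist x d ^ 2 - dist x c ^ 2 :=
    (convex_setOf_lt_dist_sq_sub_dist_sq c d _).mem_of_wbtw hpxq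
      (outer_side p hp hpd) (outer_side q hq hqd)
  exact hx_le.not_gt hx_gt

lemma dist_sq_sub_dist_sq_sub_smul (p u c e : E) (t : ℝ) :
    dist p (c - t • e) ^ 2 - dist u (c - t • e) ^ 2 =
      dist p c ^ 2 - dist u c ^ 2 + 2 * t * inner ℝ e (p - u) := by
  have hp := dist_sq_sub_dist_sq p c (c - t • e)
  have hu := dist_sq_sub_dist_sq u c (c - t • e)
  rw [sub_sub_cancel, real_inner_smul_left, real_inner_smul_left] at hp hu
  rw [inner_sub_right]
  linarith

/-- Moving the centre `c` of an enclosing ball in the direction `-e`, with `u` kept on its boundary,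
until the ball hits a point in front of `u` in the direction `e`. -/
lemma exists_isMaxOn_dist_sub_smul (hfin : S.Finite) (hc : IsMaxOn (dist · c) S u) {e : E}
    (hne : ∃ p ∈ S, 0 < inner ℝ e (p - u)) :
    ∃ w ∈ S, 0 < inner ℝ e (w - u) ∧ ∃ t : ℝ,
      IsMaxOn (dist · (c - t • e)) S u ∧ IsMaxOn (dist · (c - t • e)) S w := by
  obtain ⟨w, ⟨hw, hwe⟩, hmin⟩ := {p ∈ S | 0 < inner ℝ e (p - u)}.exists_min_image
    (fun p => (dist u c ^ 2 - dist p c ^ 2) / inner ℝ e (p - u)) (hfin.subset (sep_subset _ _)) hne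
  set τ := (dist u c ^ 2 - dist w c ^ 2) / inner ℝ e (w - u) with hτ
  have hsq : ∀ p ∈ S, dist p c ^ 2 ≤ dist u c ^ 2 := fun p hp =>
    pow_le_pow_left₀ dist_nonneg (hc hp) 2
  have hτ_nonneg : 0 ≤ τ := div_nonneg (sub_nonneg.2 (hsq w hw)) hwe.le
  have hmove := fun p => dist_sq_sub_dist_sq_sub_smul p u c e (τ / 2)
  have hmax : IsMaxOn (dist · (c - (τ / 2) • e)) S u := by
    intro p hp
    refine (sq_le_sq₀ dist_nonneg dist_nonneg).1 ?_
    have := hmove p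
    rcases le_or_gt (inner ℝ e (p - u)) 0 with hpe | hpe
    · linarith [hsq p hp, mul_nonpos_of_nonneg_of_nonpos hτ_nonneg hpe]
    · linarith [(le_div_iff₀ hpe).1 (hmin p ⟨hp, hpe⟩)]
  have hw_eq : dist w (c - (τ / 2) • e) = dist u (c - (τ / 2) • e) := by
    refine (sq_eq_sq₀ dist_nonneg dist_nonneg).1 ?_
    linarith [hmove w, (eq_div_iff hwe.ne').1 hτ]
  exact ⟨w, hw, hwe, τ / 2, hmax, fun p hp => (hmax hp).trans_eq hw_eq.symm⟩

lemma exists_isFarthestDelaunayEdge (hfin : S.Finite) (hS : S.Nontrivial) :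
    ∃ u v, IsFarthestDelaunayEdge S u v := by
  obtain ⟨u, hu, hmax⟩ := S.exists_max_image (dist · 0) hfin hS.nonempty
  have hfront : ∀ p ∈ S, p ≠ u → 0 < inner ℝ (-u) (p - u) := by
    intro p hp hpu
    have hle : ‖p‖ ^ 2 ≤ ‖u‖ ^ 2 := pow_le_pow_left₀ (norm_nonneg p) (by simpa using hmax p hp) 2
    have hpos : 0 < ‖p - u‖ ^ 2 := pow_pos (norm_pos_iff.2 (sub_ne_zero.2 hpu)) 2
    rw [norm_sub_sq_real, real_inner_comm] at hpos
    rw [inner_neg_left, inner_sub_right, real_inner_self_eq_norm_sq]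
    linarith
  obtain ⟨p, hp, hpu⟩ := hS.exists_ne u
  obtain ⟨w, hw, hwu, t, hut, hwt⟩ :=
    exists_isMaxOn_dist_sub_smul hfin hmax ⟨p, hp, hfront p hp hpu⟩
  exact ⟨u, w, hu, hw, by rintro rfl; simp at hwu, _, hut, hwt⟩

end EnclosingBalls

section Plane

variable {E : Type*} [NormedAddCommGroup E] [InnerProductSpace ℝ E] [Fact (finrank ℝ E = 2)]
  (o : Orientation ℝ E (Fin 2)) {S : Set E} {u v w p q : E}

/-- Twice the signed area of the triangle `u v p`, which is positive if and only if `p` lies to the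
left of the directed line `uv`. -/
def doubleArea (u v p : E) : ℝ := o.areaForm (v - u) (p - u)

lemma doubleArea_self_right (u v : E) : doubleArea o u v v = 0 :=
  o.areaForm_apply_self (v - u)

lemma doubleArea_self_outer (u v : E) : doubleArea o u v u = 0 := by simp [doubleArea]

lemma doubleArea_swap (u v p : E) : doubleArea o v u p = -doubleArea o u v p := by
  simp only [doubleArea, map_sub, LinearMap.sub_apply, o.areaForm_apply_self, o.areaForm_swap v u]
  ring

lemma doubleArea_rotate (u v p : E) : doubleArea o v p u = doubleArea o u v p := by
  simp only [doubleArea, map_sub, LinearMap.sub_apply, o.areaForm_apply_self, o.areaForm_swap p u,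
    o.areaForm_swap v u, o.areaForm_swap p v]
  ring

lemma doubleArea_add_doubleArea_add_doubleArea (u v w p : E) :
    doubleArea o v w p + doubleArea o w u p + doubleArea o u v p = doubleArea o u v w := by
  simp only [doubleArea, map_sub, LinearMap.sub_apply, o.areaForm_apply_self, o.areaForm_swap u w,
    o.areaForm_swap v u, o.areaForm_swap w v]
  ring

lemma areaForm_smul_add_areaForm_smul_add_areaForm_smul (x y z : E) :
    o.areaForm y z • x + o.areaForm z x • y + o.areaForm x y • z = 0 := by
  set s := o.areaForm y z • x + o.areaForm z x • y + o.areaForm x y • z with hs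
  have hx : inner ℝ x s = 0 := by
    simp only [hs, inner_add_right, real_inner_smul_right, real_inner_self_eq_norm_sq]
    linear_combination inner ℝ x y * o.areaForm_swap z x - o.inner_mul_areaForm_sub x y z
  have hy : inner ℝ y s = 0 := by
    simp only [hs, inner_add_right, real_inner_smul_right, real_inner_self_eq_norm_sq]
    linear_combination inner ℝ y z * o.areaForm_swap x y - o.inner_mul_areaForm_sub y z x
  have hz : inner ℝ z s = 0 := by
    simp only [hs, inner_add_right, real_inner_smul_right, real_inner_self_eq_norm_sq]
    linear_combination inner ℝ z x * o.areaForm_swap y z - o.inner_mul_areaForm_sub z x y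
  rw [← inner_self_eq_zero (𝕜 := ℝ)]
  nth_rw 1 [hs]
  simp only [inner_add_left, real_inner_smul_left, hx, hy, hz, mul_zero, add_zero]

/-- Signed areas are barycentric coordinates of `p` with respect to the triangle `u v w`. -/
lemma doubleArea_smul_add_doubleArea_smul_add_doubleArea_smul (u v w p : E) :
    doubleArea o v w p • u + doubleArea o w u p • v + doubleArea o u v p • w =
      doubleArea o u v w • p := by
  have h := areaForm_smul_add_areaForm_smul_add_areaForm_smul o (u - p) (v - p) (w - p)
  change doubleArea o p v w • (u - p) + doubleArea o p w u • (v - p) +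
    doubleArea o p u v • (w - p) = 0 at h
  rw [← doubleArea_rotate o p, ← doubleArea_rotate o p, ← doubleArea_rotate o p] at h
  rw [← doubleArea_add_doubleArea_add_doubleArea o u v w p, ← sub_eq_zero, ← h]
  module

lemma sameRay_or_sameRay_neg_of_areaForm_eq_zero {x y : E} (h : o.areaForm x y = 0) :
    SameRay ℝ x y ∨ SameRay ℝ (-x) y := by
  simp only [← o.nonneg_inner_and_areaForm_eq_zero_iff_sameRay, inner_neg_left, map_neg,
    LinearMap.neg_apply, h, neg_zero, and_true, Left.nonneg_neg_iff]
  exact le_total 0 _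

lemma collinear_of_doubleArea_eq_zero (h : doubleArea o u v p = 0) : Collinear ℝ {u, v, p} := by
  rcases sameRay_or_sameRay_neg_of_areaForm_eq_zero o h with hray | hray
  · rcases wbtw_total_of_sameRay_vsub_left (R := ℝ) (x := u) (y := v) (z := p) hray with hw | hw
    · exact hw.collinear
    · exact pair_comm p v ▸ hw.collinear
  · rw [neg_sub] at hray
    exact insert_comm u v {p} ▸ (wbtw_iff_sameRay_vsub.2 hray).collinear

lemma exists_wbtw_doubleArea_eq_zero (hp : 0 < doubleArea o u v p) (hq : 0 < doubleArea o v u q) :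
    ∃ x, Wbtw ℝ p x q ∧ doubleArea o u v x = 0 := by
  rw [doubleArea_swap] at hq
  set f : E →ₗ[ℝ] ℝ := o.areaForm (v - u)
  have harea : ∀ y, doubleArea o u v y = f y - f u := fun y => map_sub f y u
  rw [harea] at hp hq
  have hmem : f u ∈ segment ℝ (f q) (f p) := by
    rw [segment_eq_Icc (by linarith)]
    constructor <;> linarith
  obtain ⟨x, hx, hfx⟩ := (image_segment ℝ f.toAffineMap q p).symm ▸ hmem
  exact ⟨x, (mem_segment_iff_wbtw.1 hx).symm, (harea x).trans (sub_eq_zero.2 hfx)⟩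

/-- The points of `S` strictly to the left of the directed line `uv`; those strictly to the right
are `leftOf o S v u`. -/
def leftOf (S : Set E) (u v : E) : Set E := {p ∈ S | 0 < doubleArea o u v p}

lemma leftOf_neg_swap : leftOf (-o) S v u = leftOf o S u v := by
  simp only [leftOf, doubleArea_swap (-o) u v]
  simp [doubleArea, o.areaForm_neg_orientation]

variable {o}

lemma notMem_leftOf_left : u ∉ leftOf o S u v := fun h => by
  simpa [doubleArea_self_outer] using h.2

lemma notMem_leftOf_right : v ∉ leftOf o S u v := fun h => by
  simpa [doubleArea_self_right] using h.2

lemma ncard_leftOf_add_two (hfin : S.Finite) (huv : u ≠ v) :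
    (insert u (insert v (leftOf o S u v))).ncard = (leftOf o S u v).ncard + 2 := by
  have hleft : (leftOf o S u v).Finite := hfin.subset (sep_subset _ _)
  rw [ncard_insert_of_notMem (by simp [huv, notMem_leftOf_left]) (hleft.insert v),
    ncard_insert_of_notMem notMem_leftOf_right hleft]

namespace IsFarthestDelaunayEdge

lemma leftOf_subset_closedBall_or (h : IsFarthestDelaunayEdge S u v) {c : E} {r : ℝ}
    (hu : u ∈ closedBall c r) (hv : v ∈ closedBall c r) :
    leftOf o S u v ⊆ closedBall c r ∨ leftOf o S v u ⊆ closedBall c r := by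
  obtain ⟨d, hud, hvd⟩ := h.exists_center
  by_contra! hcon
  obtain ⟨⟨p, ⟨hp, hpl⟩, hpc⟩, q, ⟨hq, hql⟩, hqc⟩ := hcon.imp not_subset.1 not_subset.1
  obtain ⟨x, hx, hx0⟩ := exists_wbtw_doubleArea_eq_zero o hpl hql
  have hline : Collinear ℝ {u, x, v} := pair_comm v x ▸ collinear_of_doubleArea_eq_zero o hx0
  exact (mem_closedBall_or_mem_closedBall_of_wbtw h.ne rfl
    ((hud h.right_mem).antisymm (hvd h.left_mem)) (hud hp) (hud hq) hx hline hu hv).elim hpc hqc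

lemma leftOf_add_two_le_ncard (h : IsFarthestDelaunayEdge S u v) (hfin : S.Finite) {B : Set E}
    (hu : u ∈ B) (hv : v ∈ B) (hB : leftOf o S u v ⊆ B) :
    (leftOf o S u v).ncard + 2 ≤ (S ∩ B).ncard := by
  rw [← ncard_leftOf_add_two hfin h.ne]
  refine ncard_le_ncard ?_ (hfin.inter_of_left B)
  exact insert_subset ⟨h.left_mem, hu⟩ (insert_subset ⟨h.right_mem, hv⟩
    (subset_inter (sep_subset _ _) hB))

lemma add_two_le_ncard_inter_closedBall (h : IsFarthestDelaunayEdge S u v) (hfin : S.Finite)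
    {k : ℕ} (hleft : k ≤ (leftOf o S u v).ncard) (hright : k ≤ (leftOf o S v u).ncard) {c : E}
    {r : ℝ} (hu : u ∈ closedBall c r) (hv : v ∈ closedBall c r) :
    k + 2 ≤ (S ∩ closedBall c r).ncard := by
  rcases h.leftOf_subset_closedBall_or hu hv with hB | hB
  · exact (Nat.add_le_add_right hleft 2).trans (h.leftOf_add_two_le_ncard hfin hu hv hB)
  · exact (Nat.add_le_add_right hright 2).trans (h.symm.leftOf_add_two_le_ncard hfin hv hu hB)

lemma exists_mem_leftOf (h : IsFarthestDelaunayEdge S u v) (hfin : S.Finite)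
    (hne : (leftOf o S u v).Nonempty) :
    ∃ w ∈ leftOf o S u v, IsFarthestDelaunayEdge S u w ∧ IsFarthestDelaunayEdge S w v := by
  obtain ⟨c, huc, hvc⟩ := h.exists_center
  have hvuc : dist v c = dist u c := le_antisymm (huc h.right_mem) (hvc h.left_mem)
  have harea : ∀ p, inner ℝ (o.rightAngleRotation (v - u)) (p - u) = doubleArea o u v p := fun p =>
    o.inner_rightAngleRotation_left _ _
  obtain ⟨w, hw, hwl, t, hud, hwd⟩ := exists_isMaxOn_dist_sub_smul hfin huc
    (e := o.rightAngleRotation (v - u)) (by simpa only [harea] using! hne)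
  rw [harea] at hwl
  have hwS : w ∈ leftOf o S u v := ⟨hw, hwl⟩
  set d := c - t • o.rightAngleRotation (v - u)
  have hvd_eq : dist v d = dist u d := by
    refine (sq_eq_sq₀ dist_nonneg dist_nonneg).1 ?_
    have := dist_sq_sub_dist_sq_sub_smul v u c (o.rightAngleRotation (v - u)) t
    rwa [harea, doubleArea_self_right, mul_zero, add_zero, hvuc, sub_self, sub_eq_zero] at this
  have hvd : IsMaxOn (dist · d) S v := fun p hp => (hud hp).trans_eq hvd_eq.symm
  exact ⟨w, hwS, ⟨h.left_mem, hw, (ne_of_mem_of_not_mem hwS notMem_leftOf_left).symm, d, hud, hwd⟩,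
    ⟨hw, h.right_mem, ne_of_mem_of_not_mem hwS notMem_leftOf_right, d, hwd, hvd⟩⟩

end IsFarthestDelaunayEdge

section ConvexPosition

variable (hS : ConvexIndependent ℝ ((↑) : S → E))
include hS

lemma eq_insert_insert_leftOf_union_leftOf (hu : u ∈ S) (hv : v ∈ S) (huv : u ≠ v) :
    S = insert u (insert v (leftOf o S u v ∪ leftOf o S v u)) := by
  refine Subset.antisymm (fun p hp => ?_) (insert_subset hu (insert_subset hv
    (union_subset (sep_subset _ _) (sep_subset _ _))))
  by_contra! hcon
  simp only [mem_insert_iff, mem_union, not_or] at hcon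
  obtain ⟨hpu, hpv, hleft, hright⟩ := hcon
  refine not_collinear_of_convexIndependent hS hu hv hp huv (Ne.symm hpu) (Ne.symm hpv)
    (collinear_of_doubleArea_eq_zero o ?_)
  have hle : ¬0 < doubleArea o u v p := fun h => hleft ⟨hp, h⟩
  have hge : ¬0 < doubleArea o v u p := fun h => hright ⟨hp, h⟩
  rw [doubleArea_swap] at hge
  linarith

lemma ncard_le_ncard_leftOf_add_ncard_leftOf (hu : u ∈ S) (hv : v ∈ S) (huv : u ≠ v) :
    S.ncard ≤ (leftOf o S u v).ncard + (leftOf o S v u).ncard + 2 := by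
  nth_rw 1 [eq_insert_insert_leftOf_union_leftOf (o := o) hS hu hv huv]
  linarith [ncard_insert_le u (insert v (leftOf o S u v ∪ leftOf o S v u)),
    ncard_insert_le v (leftOf o S u v ∪ leftOf o S v u),
    ncard_union_le (leftOf o S u v) (leftOf o S v u)]

lemma leftOf_subset_insert_union (hu : u ∈ S) (hv : v ∈ S) (hw : w ∈ S) :
    leftOf o S u v ⊆ insert w (leftOf o S u w ∪ leftOf o S w v) := by
  intro p hp
  by_contra! hcon
  simp only [mem_insert_iff, mem_union, not_or] at hcon
  obtain ⟨hpw, hright_uw, hright_wv⟩ := hcon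
  have hwu : 0 ≤ doubleArea o w u p := by
    rw [doubleArea_swap, neg_nonneg]
    exact not_lt.1 fun h => hright_uw ⟨hp.1, h⟩
  have hvw : 0 ≤ doubleArea o v w p := by
    rw [doubleArea_swap, neg_nonneg]
    exact not_lt.1 fun h => hright_wv ⟨hp.1, h⟩
  -- Otherwise `p` lies in the triangle `u v w`.
  refine smul_add_smul_add_smul_ne_of_convexIndependent hS hu hv hw hp.1
    (ne_of_mem_of_not_mem hp notMem_leftOf_left).symm
    (ne_of_mem_of_not_mem hp notMem_leftOf_right).symm (Ne.symm hpw) hvw hwu hp.2.le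
    (add_pos_of_nonneg_of_pos (add_nonneg hvw hwu) hp.2) ?_
  rw [doubleArea_smul_add_doubleArea_smul_add_doubleArea_smul,
    doubleArea_add_doubleArea_add_doubleArea]

lemma leftOf_subset_leftOf_of_mem_left (hu : u ∈ S) (hv : v ∈ S) (hw : w ∈ leftOf o S u v) :
    leftOf o S u w ⊆ leftOf o S u v := by
  intro p hp
  refine ⟨hp.1, ?_⟩
  by_contra! hright
  have hvu : v ≠ u := by
    rintro rfl
    simpa [doubleArea] using hw.2
  have hwu : 0 < -doubleArea o w u p := by
    rw [← doubleArea_swap]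
    exact hp.2
  -- Otherwise `u` lies in the triangle `p v w`.
  refine smul_add_smul_add_smul_ne_of_convexIndependent hS hp.1 hv hw.1 hu
    (ne_of_mem_of_not_mem hp notMem_leftOf_left) hvu (ne_of_mem_of_not_mem hw notMem_leftOf_left)
    hw.2.le hwu.le (neg_nonneg.2 hright)
    (add_pos_of_pos_of_nonneg (add_pos hw.2 hwu) (neg_nonneg.2 hright)) ?_
  rw [← doubleArea_smul_add_doubleArea_smul_add_doubleArea_smul,
    ← doubleArea_add_doubleArea_add_doubleArea o u v w p]
  module

lemma leftOf_subset_leftOf_of_mem_right (hu : u ∈ S) (hv : v ∈ S) (hw : w ∈ leftOf o S u v) :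
    leftOf o S w v ⊆ leftOf o S u v := by
  rw [← leftOf_neg_swap] at hw
  rw [← leftOf_neg_swap o, ← leftOf_neg_swap o]
  exact leftOf_subset_leftOf_of_mem_left hS hv hu hw

lemma leftOf_eq_insert_union (hu : u ∈ S) (hv : v ∈ S) (hw : w ∈ leftOf o S u v) :
    leftOf o S u v = insert w (leftOf o S u w ∪ leftOf o S w v) :=
  (leftOf_subset_insert_union hS hu hv hw.1).antisymm <| insert_subset hw <|
    union_subset (leftOf_subset_leftOf_of_mem_left hS hu hv hw)
      (leftOf_subset_leftOf_of_mem_right hS hu hv hw)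

lemma ncard_leftOf_split (hfin : S.Finite) (hu : u ∈ S) (hv : v ∈ S) (hw : w ∈ leftOf o S u v) :
    (leftOf o S u w).ncard < (leftOf o S u v).ncard ∧
      (leftOf o S w v).ncard < (leftOf o S u v).ncard ∧
      (leftOf o S u v).ncard ≤ (leftOf o S u w).ncard + (leftOf o S w v).ncard + 1 := by
  have hleft : (leftOf o S u v).Finite := hfin.subset (sep_subset _ _)
  refine ⟨ncard_lt_ncard ⟨leftOf_subset_leftOf_of_mem_left hS hu hv hw, fun h => ?_⟩ hleft,
    ncard_lt_ncard ⟨leftOf_subset_leftOf_of_mem_right hS hu hv hw, fun h => ?_⟩ hleft, ?_⟩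
  · exact notMem_leftOf_right (h hw)
  · exact notMem_leftOf_left (h hw)
  · rw [leftOf_eq_insert_union hS hu hv hw]
    linarith [ncard_insert_le w (leftOf o S u w ∪ leftOf o S w v),
      ncard_union_le (leftOf o S u w) (leftOf o S w v)]

lemma exists_balanced_of_le_ncard_leftOf (hfin : S.Finite) {k : ℕ} (hk : 3 * k < S.ncard)
    (h : IsFarthestDelaunayEdge S u v) (hleft : k ≤ (leftOf o S u v).ncard) :
    ∃ a b, IsFarthestDelaunayEdge S a b ∧ k ≤ (leftOf o S a b).ncard ∧
      k ≤ (leftOf o S b a).ncard := by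
  induction hm : (leftOf o S u v).ncard using Nat.strong_induction_on generalizing u v with
  | _ m ih =>
    by_cases hright : k ≤ (leftOf o S v u).ncard
    · exact ⟨u, v, h, hleft, hright⟩
    have hcard :=
      ncard_le_ncard_leftOf_add_ncard_leftOf (o := o) hS h.left_mem h.right_mem h.ne
    have hne : (leftOf o S u v).ncard ≠ 0 := by omega
    obtain ⟨w, hw, huw, hwv⟩ := h.exists_mem_leftOf hfin (nonempty_of_ncard_ne_zero hne)
    obtain ⟨hlt_uw, hlt_wv, hsplit⟩ := ncard_leftOf_split hS hfin h.left_mem h.right_mem hw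
    by_cases hkuw : k ≤ (leftOf o S u w).ncard
    · exact ih _ (hm ▸ hlt_uw) huw hkuw rfl
    · exact ih _ (hm ▸ hlt_wv) hwv (by omega) rfl

lemma exists_balanced_isFarthestDelaunayEdge (hfin : S.Finite) (hnt : S.Nontrivial) {k : ℕ}
    (hk : 3 * k < S.ncard) :
    ∃ u v, IsFarthestDelaunayEdge S u v ∧ k ≤ (leftOf o S u v).ncard ∧
      k ≤ (leftOf o S v u).ncard := by
  obtain ⟨u, v, h⟩ := exists_isFarthestDelaunayEdge hfin hnt
  have hcard := ncard_le_ncard_leftOf_add_ncard_leftOf (o := o) hS h.left_mem h.right_mem h.ne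
  by_cases hleft : k ≤ (leftOf o S u v).ncard
  · exact exists_balanced_of_le_ncard_leftOf hS hfin hk h hleft
  · exact exists_balanced_of_le_ncard_leftOf hS hfin hk h.symm (by omega)

end ConvexPosition

theorem pi_convex_lower_bound_n_over_3_general (hfin : S.Finite) (hnt : S.Nontrivial)
    (hS : ConvexIndependent ℝ ((↑) : S → E)) :
    ∃ u ∈ S, ∃ v ∈ S, u ≠ v ∧ ∀ (c : E) (r : ℝ), u ∈ closedBall c r → v ∈ closedBall c r →
      ⌈(S.ncard : ℝ) / 3⌉ + 1 ≤ ((S ∩ closedBall c r).ncard : ℤ) := by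
  have : FiniteDimensional ℝ E := .of_fact_finrank_eq_two
  let o : Orientation ℝ E (Fin 2) := (finBasisOfFinrankEq ℝ E Fact.out).orientation
  have hcard : 0 < S.ncard := (ncard_pos hfin).2 hnt.nonempty
  obtain ⟨k, hk_lt, hk_le⟩ : ∃ k, 3 * k < S.ncard ∧ S.ncard ≤ 3 * (k + 1) :=
    ⟨(S.ncard - 1) / 3, by omega, by omega⟩
  have hceil : ⌈(S.ncard : ℝ) / 3⌉ ≤ k + 1 := by
    rw [Int.ceil_le, div_le_iff₀' three_pos]
    exact_mod_cast hk_le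
  obtain ⟨u, v, h, hleft, hright⟩ :=
    exists_balanced_isFarthestDelaunayEdge (o := o) hS hfin hnt hk_lt
  refine ⟨u, h.left_mem, v, h.right_mem, h.ne, fun c r hu hv => ?_⟩
  have := h.add_two_le_ncard_inter_closedBall hfin hleft hright hu hv
  omega

end Plane

/-- For every `n ≥ 4` and every set `S` of `n` points in the plane in general position
and in convex position, there exist two distinct points `u, v ∈ S` such that every
closed disk containing both `u` and `v` contains at least `⌈n/3⌉ + 1` points of `S`. -/
theorem pi_convex_lower_bound_n_over_3 (n : ℕ) (hn : 4 ≤ n) (S : Set Pt)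
    (hfin : S.Finite) (hcard : S.ncard = n) (hgp : GenPos S) (hconv : ConvexPos S) :
    ∃ u ∈ S, ∃ v ∈ S, u ≠ v ∧
      ∀ (c : Pt) (r : ℝ), 0 < r → u ∈ closedBall c r → v ∈ closedBall c r →
        ⌈(n : ℝ) / 3⌉ + 1 ≤ ((S ∩ closedBall c r).ncard : ℤ) := by
  have : Fact (finrank ℝ Pt = 2) := ⟨finrank_euclideanSpace_fin⟩
  obtain ⟨u, hu, v, hv, huv, h⟩ := pi_convex_lower_bound_n_over_3_general hfin
    ((one_lt_ncard_iff_nontrivial_and_finite.1 (by omega)).1)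
    (convexIndependent_set_iff_notMem_convexHull_sdiff.2 hconv)
  exact ⟨u, hu, v, hv, huv, fun c r _ => hcard ▸ h c r⟩
end
end

section
/- For every integer n ≥ 3 and every set S of n points in the Euclidean plane in general position, there exist two distinct points u, v ∈ S such that the closed disk having the segment uv as a diameter (i.e., the closed disk centered at the midpoint of u and v with radius dist(u,v)/2) contains at least ⌈n/3⌉ + 1 points of S. -/
/-!
The center `o` of the smallest disk enclosing `S` is a convex combination of points of `S` on its
boundary circle, and by Carathéodory's theorem of three of them, say `a`, `b`, `c`. The diametral
disks of the sides of the triangle `abc` cover the enclosing disk: a point of the enclosing disk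
outside the diametral disk of `ab` lies strictly on the same side of the chord `ab` as `c`, so a
point outside all three is interior to the triangle; but it then sees the sides at three acute
angles, although these angles add up to `2π`. Each vertex lies in two of the three diametral disks,
so these contain at least `n + 3` points of `S` in total, and one of them at least `n / 3 + 1`.
-/

open EuclideanGeometry Metric

noncomputable section

section DiametralBall

variable {E : Type*} [NormedAddCommGroup E] [InnerProductSpace ℝ E] {a b c o x : E} {r : ℝ}

/-- The closed ball with the segment `ab` as a diameter; for `a = b` it is the single point `a`. -/
def diametralBall (a b : E) : Set E :=
  closedBall (midpoint ℝ a b) (dist a b / 2)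

lemma left_mem_diametralBall (a b : E) : a ∈ diametralBall a b := by
  simp [diametralBall, inv_mul_eq_div]

lemma right_mem_diametralBall (a b : E) : b ∈ diametralBall a b := by
  simp [diametralBall, inv_mul_eq_div]

lemma diametralBall_comm (a b : E) : diametralBall a b = diametralBall b a := by
  rw [diametralBall, diametralBall, midpoint_comm, dist_comm]

lemma diametralBall_self (a : E) : diametralBall a a = {a} := by
  simp [diametralBall]

lemma mem_diametralBall_iff_inner_nonpos :
    x ∈ diametralBall a b ↔ inner ℝ (a - x) (b - x) ≤ 0 := by
  have hsum : (a - x) + (b - x) = (2 : ℝ) • (midpoint ℝ a b - x) := by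
    rw [midpoint_eq_smul_add, invOf_eq_inv]
    module
  have hpolar : inner ℝ (a - x) (b - x) = dist x (midpoint ℝ a b) ^ 2 - (dist a b / 2) ^ 2 := by
    have hadd := norm_add_sq_real (a - x) (b - x)
    have hsub := norm_sub_sq_real (a - x) (b - x)
    rw [hsum, norm_smul, Real.norm_ofNat, ← dist_eq_norm, dist_comm _ x] at hadd
    rw [sub_sub_sub_cancel_right, ← dist_eq_norm] at hsub
    linarith
  rw [hpolar, sub_nonpos, sq_le_sq₀ dist_nonneg (by positivity), diametralBall, mem_closedBall]

lemma inner_midpoint_sub_left_eq_zero (h : dist a o = dist b o) :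
    inner ℝ (midpoint ℝ a b - o) (midpoint ℝ a b - a) = 0 := by
  have hchord : inner ℝ (midpoint ℝ a b - o) (b - a) = 0 :=
    inner_vsub_vsub_of_dist_eq_of_dist_eq h (dist_left_midpoint_eq_dist_right_midpoint a b)
  rw [midpoint_sub_left, inner_smul_right, hchord, mul_zero]

lemma inner_midpoint_sub_right_eq_zero (h : dist a o = dist b o) :
    inner ℝ (midpoint ℝ a b - o) (midpoint ℝ a b - b) = 0 := by
  rw [midpoint_comm]
  exact inner_midpoint_sub_left_eq_zero h.symm

lemma inner_midpoint_sub_pos_of_notMem_diametralBall (ha : dist a o = r) (hb : dist b o = r)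
    (hx : dist x o ≤ r) (hxab : x ∉ diametralBall a b) :
    0 < inner ℝ (midpoint ℝ a b - o) (midpoint ℝ a b - x) := by
  have hfar : (dist a b / 2) ^ 2 < dist (midpoint ℝ a b) x ^ 2 := by
    rw [diametralBall, mem_closedBall, not_le, dist_comm x] at hxab
    gcongr
  have hmedian := dist_sq_add_dist_sq_eq_two_mul_dist_midpoint_sq_add_half_dist_sq o a b
  rw [dist_comm o a, dist_comm o b, ha, hb, dist_comm o] at hmedian
  have hcos := norm_sub_sq_real (midpoint ℝ a b - o) (midpoint ℝ a b - x)
  rw [sub_sub_sub_cancel_left, ← dist_eq_norm, ← dist_eq_norm, ← dist_eq_norm] at hcos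
  have hxr : dist x o ^ 2 ≤ r ^ 2 := by gcongr
  linarith

lemma inner_midpoint_sub_pos_of_mem_convexHull (hab : dist a o = dist b o)
    (ho : o ∈ convexHull ℝ {a, b, c}) (hne : midpoint ℝ a b ≠ o) :
    0 < inner ℝ (midpoint ℝ a b - o) (midpoint ℝ a b - c) := by
  by_contra! hc
  have hhull : convexHull ℝ {a, b, c} ⊆
      {y | inner ℝ (midpoint ℝ a b - o) (midpoint ℝ a b) ≤ inner ℝ (midpoint ℝ a b - o) y} := by
    refine convexHull_min ?_ (convex_halfSpace_ge (innerₛₗ ℝ (midpoint ℝ a b - o)).isLinear _)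
    have hmem {y : E} (hy : inner ℝ (midpoint ℝ a b - o) (midpoint ℝ a b - y) ≤ 0) :
        inner ℝ (midpoint ℝ a b - o) (midpoint ℝ a b) ≤ inner ℝ (midpoint ℝ a b - o) y := by
      rwa [inner_sub_right, sub_nonpos] at hy
    rintro y (rfl | rfl | rfl)
    exacts [hmem (inner_midpoint_sub_left_eq_zero hab).le,
      hmem (inner_midpoint_sub_right_eq_zero hab).le, hmem hc]
  have hoside : inner ℝ (midpoint ℝ a b - o) (midpoint ℝ a b - o) ≤ 0 := by
    rw [inner_sub_right, sub_nonpos]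
    exact hhull ho
  exact hoside.not_gt (real_inner_self_pos.2 (sub_ne_zero.2 hne))

-- Up to normalization `w` is the barycentric coordinate of `x` at `c`: it is positive because `x`
-- and `c` lie strictly on the same side of the chord `ab`.
lemma exists_pos_eq_mul_sum_of_notMem_diametralBall {u v w : ℝ}
    (ha : dist a o = r) (hb : dist b o = r) (ho : o ∈ convexHull ℝ {a, b, c})
    (hx : dist x o ≤ r) (hxab : x ∉ diametralBall a b)
    (hrel : u • (a - x) + v • (b - x) + w • (c - x) = 0) :
    ∃ κ > 0, w = κ * (u + v + w) := by
  have hxside := inner_midpoint_sub_pos_of_notMem_diametralBall ha hb hx hxab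
  have hne : midpoint ℝ a b ≠ o := by
    intro h
    simp [h] at hxside
  have hab : dist a o = dist b o := ha.trans hb.symm
  have hcside := inner_midpoint_sub_pos_of_mem_convexHull hab ho hne
  refine ⟨_, div_pos hxside hcside, ?_⟩
  have hpair := congrArg (inner ℝ (midpoint ℝ a b - o)) hrel
  have hside (y : E) : inner ℝ (midpoint ℝ a b - o) (y - x) =
      inner ℝ (midpoint ℝ a b - o) (midpoint ℝ a b - x) -
        inner ℝ (midpoint ℝ a b - o) (midpoint ℝ a b - y) := by
    rw [← inner_sub_right, sub_sub_sub_cancel_left]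
  simp only [inner_add_right, inner_smul_right, inner_zero_right, hside a, hside b, hside c,
    inner_midpoint_sub_left_eq_zero hab, inner_midpoint_sub_right_eq_zero hab] at hpair
  rw [div_mul_eq_mul_div, eq_div_iff hcside.ne']
  linarith

lemma smul_add_smul_add_smul_ne_zero_of_inner_pos {p q s : E} (hpq : 0 < inner ℝ p q)
    (hps : 0 < inner ℝ p s) {α β γ : ℝ} (hα : 0 < α) (hβ : 0 < β) (hγ : 0 < γ) :
    α • p + β • q + γ • s ≠ 0 := by
  intro hzero
  have hpair := congrArg (inner ℝ p) hzero
  simp only [inner_add_right, inner_smul_right, inner_zero_right] at hpair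
  have hself : 0 ≤ inner ℝ p p := real_inner_self_nonneg
  have : 0 < α * inner ℝ p p + β * inner ℝ p q + γ * inner ℝ p s := by positivity
  exact this.ne' hpair

end DiametralBall

lemma exists_nontrivial_relation_of_finrank_le_two {K V : Type*} [DivisionRing K]
    [AddCommGroup V] [Module K V] [FiniteDimensional K V] (hV : Module.finrank K V ≤ 2)
    (p q s : V) : ∃ u v w : K, ¬(u = 0 ∧ v = 0 ∧ w = 0) ∧ u • p + v • q + w • s = 0 := by
  have hdep : ¬LinearIndependent K ![p, q, s] := fun h => by
    have := h.fintype_card_le_finrank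
    rw [Fintype.card_fin] at this
    omega
  obtain ⟨g, hg, i, hi⟩ := Fintype.not_linearIndependent_iff.1 hdep
  refine ⟨g 0, g 1, g 2, ?_, by simpa [Fin.sum_univ_three] using hg⟩
  rintro ⟨h0, h1, h2⟩
  fin_cases i
  exacts [hi h0, hi h1, hi h2]

lemma exists_triple_mem_convexHull_of_finrank_le_two {𝕜 V : Type*} [Field 𝕜] [LinearOrder 𝕜]
    [IsStrictOrderedRing 𝕜] [AddCommGroup V] [Module 𝕜 V] [FiniteDimensional 𝕜 V]
    (hV : Module.finrank 𝕜 V ≤ 2) {s : Set V} {o : V} (ho : o ∈ convexHull 𝕜 s) :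
    ∃ a ∈ s, ∃ b ∈ s, ∃ c ∈ s, o ∈ convexHull 𝕜 {a, b, c} := by
  rw [convexHull_eq_union] at ho
  simp only [Set.mem_iUnion] at ho
  obtain ⟨t, hts, hind, hot⟩ := ho
  have htle : t.card ≤ 3 := by
    have hspan := hind.card_le_finrank_succ
    rw [Fintype.card_coe] at hspan
    have := Submodule.finrank_le (vectorSpan 𝕜 (Set.range ((↑) : t → V)))
    omega
  have htpos : 0 < t.card := by
    rw [Finset.card_pos, ← Finset.coe_nonempty, ← convexHull_nonempty_iff (𝕜 := 𝕜)]
    exact ⟨o, hot⟩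
  classical
  obtain ⟨a, b, c, rfl⟩ : ∃ a b c, t = {a, b, c} := by
    obtain h | h | h : t.card = 1 ∨ t.card = 2 ∨ t.card = 3 := by omega
    · obtain ⟨a, rfl⟩ := Finset.card_eq_one.1 h
      exact ⟨a, a, a, by simp⟩
    · obtain ⟨a, b, -, rfl⟩ := Finset.card_eq_two.1 h
      exact ⟨a, b, b, by simp⟩
    · obtain ⟨a, b, c, -, -, -, rfl⟩ := Finset.card_eq_three.1 h
      exact ⟨a, b, c, rfl⟩
  simp only [Finset.coe_insert, Finset.coe_singleton, Set.insert_subset_iff,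
    Set.singleton_subset_iff] at hts hot
  exact ⟨a, hts.1, b, hts.2.1, c, hts.2.2, hot⟩

theorem closedBall_subset_union_diametralBall {E : Type*} [NormedAddCommGroup E]
    [InnerProductSpace ℝ E] [FiniteDimensional ℝ E] (hE : Module.finrank ℝ E ≤ 2)
    {a b c o : E} {r : ℝ} (ha : dist a o = r) (hb : dist b o = r) (hc : dist c o = r)
    (ho : o ∈ convexHull ℝ {a, b, c}) :
    closedBall o r ⊆ diametralBall a b ∪ diametralBall b c ∪ diametralBall c a := by
  intro x hx
  by_contra hout
  simp only [Set.mem_union, not_or] at hout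
  obtain ⟨⟨hxab, hxbc⟩, hxca⟩ := hout
  obtain ⟨u, v, w, hne, hrel⟩ :=
    exists_nontrivial_relation_of_finrank_le_two hE (a - x) (b - x) (c - x)
  have hbca : ({b, c, a} : Set E) = {a, b, c} := by grind
  have hcab : ({c, a, b} : Set E) = {a, b, c} := by grind
  obtain ⟨κc, hκc, hw⟩ := exists_pos_eq_mul_sum_of_notMem_diametralBall ha hb ho hx hxab hrel
  obtain ⟨κa, hκa, hu⟩ := exists_pos_eq_mul_sum_of_notMem_diametralBall hb hc (hbca ▸ ho) hx hxbc
    (u := v) (v := w) (w := u) (by rw [← hrel]; abel)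
  obtain ⟨κb, hκb, hv⟩ := exists_pos_eq_mul_sum_of_notMem_diametralBall hc ha (hcab ▸ ho) hx hxca
    (u := w) (v := u) (w := v) (by rw [← hrel]; abel)
  have hσ : u + v + w ≠ 0 := by grind
  have hinterior : κa • (a - x) + κb • (b - x) + κc • (c - x) = 0 := by
    refine (smul_eq_zero.1 ?_).resolve_left hσ
    rw [← hrel, smul_add, smul_add, smul_smul, smul_smul, smul_smul]
    congr <;> linarith
  rw [mem_diametralBall_iff_inner_nonpos, not_le] at hxab hxca
  rw [real_inner_comm] at hxca
  exact smul_add_smul_add_smul_ne_zero_of_inner_pos hxab hxca hκa hκb hκc hinterior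

section SmallestEnclosingBall

lemma exists_forall_sup'_dist_le {X : Type*} [PseudoMetricSpace X] [ProperSpace X]
    (S : Finset X) (hS : S.Nonempty) :
    ∃ o, ∀ y, S.sup' hS (dist · o) ≤ S.sup' hS (dist · y) := by
  obtain ⟨s, hs⟩ := hS
  have : Nonempty X := ⟨s⟩
  have hcont : Continuous fun y => S.sup' ⟨s, hs⟩ (dist · y) :=
    Continuous.finset_sup'_apply _ fun x _ => continuous_const.dist continuous_id
  exact hcont.exists_forall_le (Filter.tendsto_atTop_mono
    (fun y => Finset.le_sup' (dist · y) hs) (tendsto_dist_left_cocompact_atTop s))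

variable {E : Type*} [NormedAddCommGroup E] [InnerProductSpace ℝ E]

lemma eventually_dist_add_smul_lt {x o v : E} (h : 0 < inner ℝ v (x - o)) :
    ∀ᶠ t : ℝ in nhdsWithin 0 (Set.Ioi 0), dist x (o + t • v) < dist x o := by
  have hsmall : ∀ᶠ t : ℝ in nhds 0, t * ‖v‖ ^ 2 < 2 * inner ℝ v (x - o) := by
    have : Continuous fun t : ℝ => t * ‖v‖ ^ 2 := by fun_prop
    exact this.continuousAt.eventually_lt_const (by simpa using h)
  filter_upwards [nhdsWithin_le_nhds hsmall, self_mem_nhdsWithin] with t ht htpos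
  rw [← sq_lt_sq₀ dist_nonneg dist_nonneg, dist_eq_norm, dist_eq_norm, ← sub_sub,
    norm_sub_sq_real, inner_smul_right, real_inner_comm, norm_smul, mul_pow, Real.norm_eq_abs,
    sq_abs]
  nlinarith [mul_lt_mul_of_pos_left ht (Set.mem_Ioi.1 htpos)]

-- Otherwise a hyperplane separates `o` from the farthest points, and a small step orthogonally
-- towards it decreases all the largest distances at once.
lemma mem_convexHull_inter_sphere_of_forall_sup'_dist_le [CompleteSpace E] {S : Finset E}
    (hS : S.Nonempty) {o : E} (ho : ∀ y, S.sup' hS (dist · o) ≤ S.sup' hS (dist · y)) :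
    o ∈ convexHull ℝ (S ∩ sphere o (S.sup' hS (dist · o))) := by
  set r := S.sup' hS (dist · o)
  by_contra hout
  obtain ⟨f, q, hfo, hf⟩ := geometric_hahn_banach_point_closed (convex_convexHull ℝ _)
    ((S.finite_toSet.inter_of_left _).isClosed_convexHull ℝ) hout
  have hcloser : ∀ x ∈ S, ∀ᶠ t : ℝ in nhdsWithin 0 (Set.Ioi 0),
      dist x (o + t • (InnerProductSpace.toDual ℝ E).symm f) < r := by
    intro x hx
    obtain hlt | (heq : dist x o = r) := (Finset.le_sup' (dist · o) hx).lt_or_eq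
    · have : Continuous fun t : ℝ => dist x (o + t • (InnerProductSpace.toDual ℝ E).symm f) := by
        fun_prop
      exact nhdsWithin_le_nhds (this.continuousAt.eventually_lt_const (by simpa using hlt))
    · rw [← heq]
      refine eventually_dist_add_smul_lt ?_
      rw [InnerProductSpace.toDual_symm_apply, map_sub, sub_pos]
      exact hfo.trans (hf x (subset_convexHull ℝ _ ⟨hx, heq⟩))
  obtain ⟨t, ht⟩ := ((Filter.eventually_all_finset S).2 hcloser).exists
  exact (ho _).not_gt ((Finset.sup'_lt_iff hS).2 ht)

theorem exists_enclosing_closedBall [ProperSpace E] (S : Finset E) (hS : S.Nonempty) :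
    ∃ o r, (S : Set E) ⊆ closedBall o r ∧ o ∈ convexHull ℝ (S ∩ sphere o r) := by
  obtain ⟨o, ho⟩ := exists_forall_sup'_dist_le S hS
  exact ⟨o, S.sup' hS (dist · o), fun x hx => Finset.le_sup' (dist · o) hx,
    mem_convexHull_inter_sphere_of_forall_sup'_dist_le hS ho⟩

end SmallestEnclosingBall

section Counting

lemma ncard_add_three_le_of_subset_union {α : Type*} {S A B C : Set α} (hS : S.Finite)
    {a b c : α} (hac : a ≠ c) (ha : a ∈ S) (hb : b ∈ S) (hc : c ∈ S) (hcover : S ⊆ A ∪ B ∪ C)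
    (haA : a ∈ A) (hbA : b ∈ A) (hbB : b ∈ B) (hcB : c ∈ B) (hcC : c ∈ C) (haC : a ∈ C) :
    S.ncard + 3 ≤ (S ∩ A).ncard + (S ∩ B).ncard + (S ∩ C).ncard := by
  have hA := hS.inter_of_left A
  have hB := hS.inter_of_left B
  have hC := hS.inter_of_left C
  have hAB := Set.ncard_union_add_ncard_inter (S ∩ A) (S ∩ B) hA hB
  have hABC := Set.ncard_union_add_ncard_inter (S ∩ A ∪ S ∩ B) (S ∩ C) (hA.union hB) hC
  rw [← Set.inter_union_distrib_left, ← Set.inter_union_distrib_left,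
    Set.inter_eq_left.2 hcover] at hABC
  have hb_twice : 0 < (S ∩ A ∩ (S ∩ B)).ncard :=
    (Set.ncard_pos (hA.inter_of_left _)).2 ⟨b, ⟨hb, hbA⟩, hb, hbB⟩
  have hac_twice : 1 < (S ∩ (A ∪ B) ∩ (S ∩ C)).ncard :=
    (Set.one_lt_ncard (hC.inter_of_right _)).2
      ⟨a, ⟨⟨ha, .inl haA⟩, ha, haC⟩, c, ⟨⟨hc, .inr hcB⟩, hc, hcC⟩, hac⟩
  rw [← Set.inter_union_distrib_left] at hAB
  omega

variable {E : Type*} [NormedAddCommGroup E] [InnerProductSpace ℝ E] {S : Set E}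

lemma exists_ncard_add_three_le_of_subset_diametralBall (hfin : S.Finite) (hS : S.Nontrivial)
    {a b : E} (ha : a ∈ S) (hb : b ∈ S) (hcover : S ⊆ diametralBall a b) :
    ∃ u ∈ S, ∃ v ∈ S, u ≠ v ∧ S.ncard + 3 ≤ 3 * (S ∩ diametralBall u v).ncard := by
  have hab : a ≠ b := by
    rintro rfl
    rw [diametralBall_self] at hcover
    exact Set.not_nontrivial_singleton (hS.mono hcover)
  refine ⟨a, ha, b, hb, hab, ?_⟩
  have : 1 < S.ncard := (Set.one_lt_ncard hfin).2 hS
  rw [Set.inter_eq_left.2 hcover]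
  omega

lemma exists_ncard_add_three_le_of_subset_union (hfin : S.Finite) (hS : S.Nontrivial)
    {a b c : E} (ha : a ∈ S) (hb : b ∈ S) (hc : c ∈ S)
    (hcover : S ⊆ diametralBall a b ∪ diametralBall b c ∪ diametralBall c a) :
    ∃ u ∈ S, ∃ v ∈ S, u ≠ v ∧ S.ncard + 3 ≤ 3 * (S ∩ diametralBall u v).ncard := by
  by_cases hab : a = b
  · subst hab
    refine exists_ncard_add_three_le_of_subset_diametralBall hfin hS ha hc ?_
    simpa [diametralBall_self, diametralBall_comm c, left_mem_diametralBall] using hcover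
  by_cases hbc : b = c
  · subst hbc
    refine exists_ncard_add_three_le_of_subset_diametralBall hfin hS ha hb ?_
    simpa [diametralBall_self, diametralBall_comm b, right_mem_diametralBall] using hcover
  by_cases hca : c = a
  · subst hca
    refine exists_ncard_add_three_le_of_subset_diametralBall hfin hS hc hb ?_
    simpa [diametralBall_self, diametralBall_comm b, left_mem_diametralBall] using hcover
  have hcount := ncard_add_three_le_of_subset_union hfin (Ne.symm hca) ha hb hc hcover
    (left_mem_diametralBall a b) (right_mem_diametralBall a b) (left_mem_diametralBall b c)
    (right_mem_diametralBall b c) (left_mem_diametralBall c a) (right_mem_diametralBall c a)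
  by_contra! hsmall
  have := hsmall a ha b hb hab
  have := hsmall b hb c hc hbc
  have := hsmall c hc a ha hca
  omega

end Counting

theorem pi_diametral_lower_bound_n_over_3_general {E : Type*} [NormedAddCommGroup E]
    [InnerProductSpace ℝ E] [FiniteDimensional ℝ E] (hE : Module.finrank ℝ E ≤ 2) {S : Set E}
    (hfin : S.Finite) (hS : S.Nontrivial) :
    ∃ u ∈ S, ∃ v ∈ S, u ≠ v ∧
      ⌈(S.ncard : ℝ) / 3⌉ + 1 ≤
        ((S ∩ closedBall (midpoint ℝ u v) (dist u v / 2)).ncard : ℤ) := by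
  obtain ⟨o, r, hball, ho⟩ := exists_enclosing_closedBall hfin.toFinset (by simpa using hS.nonempty)
  rw [hfin.coe_toFinset] at hball ho
  obtain ⟨a, ha, b, hb, c, hc, habc⟩ := exists_triple_mem_convexHull_of_finrank_le_two hE ho
  have hcover := hball.trans (closedBall_subset_union_diametralBall hE ha.2 hb.2 hc.2 habc)
  obtain ⟨u, hu, v, hv, huv, hcount⟩ :=
    exists_ncard_add_three_le_of_subset_union hfin hS ha.1 hb.1 hc.1 hcover
  refine ⟨u, hu, v, hv, huv, le_sub_iff_add_le.1 (Int.ceil_le.2 ?_)⟩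
  have hreal : (S.ncard : ℝ) + 3 ≤
      3 * (S ∩ closedBall (midpoint ℝ u v) (dist u v / 2)).ncard := by
    exact_mod_cast hcount
  push_cast
  linarith

/-- For every `n ≥ 3` and every set `S` of `n` points in the plane in general position,
there exist two distinct points `u, v ∈ S` such that the closed disk having the segment
`uv` as diameter contains at least `⌈n/3⌉ + 1` points of `S`. -/
theorem pi_diametral_lower_bound_n_over_3 (n : ℕ) (hn : 3 ≤ n) (S : Set Pt)
    (hfin : S.Finite) (hcard : S.ncard = n) (hgp : GenPos S) :
    ∃ u ∈ S, ∃ v ∈ S, u ≠ v ∧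
      ⌈(n : ℝ) / 3⌉ + 1 ≤
        ((S ∩ closedBall (midpoint ℝ u v) (dist u v / 2)).ncard : ℤ) := by
  subst hcard
  exact pi_diametral_lower_bound_n_over_3_general finrank_euclideanSpace_fin.le hfin
    ((Set.one_lt_ncard hfin).1 (by omega))
end
end

section
/- Let u, v, p, q be four distinct points in the Euclidean plane such that the set {u,v,p,q} is in general position and the open segment from u to v intersects the open segment from p to q. Then either every closed disk having both p and q on its boundary contains u or contains v, or every closed disk having both u and v on its boundary contains p or contains q. -/
/-!
By Stewart's theorem, the power with respect to a sphere of a point `x = (1 - t) u + t v` of the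
segment `uv` is `(1 - t)` times the power of `u` plus `t` times the power of `v`, minus `xu * xv`.
So it is `-(xu * xv)` when `u` and `v` lie on the sphere and more than `-(xu * xv)` when both lie
outside it. Let `x` also lie on the segment `pq`, and suppose `xu * xv ≤ xp * xq`, the other case
being symmetric. The power of `x` with respect to a sphere through `p` and `q` is then
`-(xp * xq) ≤ -(xu * xv)`, so `u` and `v` cannot both lie outside it.
-/

open EuclideanGeometry Metric

noncomputable section

section PowerOfPoint

variable {V P : Type*} [NormedAddCommGroup V] [InnerProductSpace ℝ V] [MetricSpace P]
  [NormedAddTorsor V P] {u v p q x : P} {s : Sphere P}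

theorem dist_sq_lineMap (u v c : P) (t : ℝ) :
    dist (AffineMap.lineMap u v t) c ^ 2 =
      (1 - t) * dist u c ^ 2 + t * dist v c ^ 2 - t * (1 - t) * dist u v ^ 2 := by
  have lineMap_vsub : AffineMap.lineMap u v t -ᵥ c = (1 - t) • (u -ᵥ c) + t • (v -ᵥ c) := by
    rw [AffineMap.lineMap_apply, vadd_vsub_assoc, ← vsub_sub_vsub_cancel_right v u c]
    module
  have dist_eq : dist u v = ‖(u -ᵥ c) - (v -ᵥ c)‖ := by
    rw [vsub_sub_vsub_cancel_right, dist_eq_norm_vsub V]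
  rw [dist_eq, dist_eq_norm_vsub V _ c, lineMap_vsub, dist_eq_norm_vsub V u c,
    dist_eq_norm_vsub V v c]
  simp only [norm_add_sq_real, norm_sub_sq_real, norm_smul, mul_pow, Real.norm_eq_abs, sq_abs,
    real_inner_smul_left, real_inner_smul_right]
  ring

theorem power_lineMap (s : Sphere P) (u v : P) (t : ℝ) :
    s.power (AffineMap.lineMap u v t) =
      (1 - t) * s.power u + t * s.power v - t * (1 - t) * dist u v ^ 2 := by
  simp only [Sphere.power, dist_sq_lineMap]
  ring

theorem neg_mul_dist_lt_power_of_wbtw (hx : Wbtw ℝ u x v) (hu : 0 < s.power u)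
    (hv : 0 < s.power v) : -(dist x u * dist x v) < s.power x := by
  obtain ⟨t, ⟨ht₀, ht₁⟩, rfl⟩ := hx
  have mul_dist : dist (AffineMap.lineMap u v t) u * dist (AffineMap.lineMap u v t) v =
      t * (1 - t) * dist u v ^ 2 := by
    rw [dist_lineMap_left, dist_lineMap_right, Real.norm_of_nonneg ht₀,
      Real.norm_of_nonneg (sub_nonneg.2 ht₁)]
    ring
  have power_combination_pos : 0 < (1 - t) * s.power u + t * s.power v :=
    convex_Ioi (0 : ℝ) hu hv (sub_nonneg.2 ht₁) ht₀ (sub_add_cancel 1 t)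
  rw [mul_dist, power_lineMap]
  linarith

theorem power_eq_neg_mul_dist_of_wbtw (hx : Wbtw ℝ p x q) (hp : p ∈ s) (hq : q ∈ s) :
    s.power x = -(dist x p * dist x q) := by
  have dist_le : dist x s.center ≤ s.radius := by
    simpa only [EuclideanGeometry.mem_sphere.1 hp, EuclideanGeometry.mem_sphere.1 hq, max_self]
      using hx.dist_le_max_dist s.center
  rw [Sphere.mul_dist_eq_neg_power_of_dist_center_le_radius (Sphere.radius_nonneg_of_mem hp)
    hx.mem_affineSpan hp hq dist_le, neg_neg]

theorem mem_closedBall_or_mem_closedBall_of_mul_dist_le (huv : Wbtw ℝ u x v)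
    (hpq : Wbtw ℝ p x q) (hle : dist x u * dist x v ≤ dist x p * dist x q)
    (hp : p ∈ s) (hq : q ∈ s) :
    u ∈ closedBall s.center s.radius ∨ v ∈ closedBall s.center s.radius := by
  have radius_nonneg := Sphere.radius_nonneg_of_mem hp
  by_contra! h
  simp only [mem_closedBall, not_le,
    ← Sphere.power_pos_iff_radius_lt_dist_center radius_nonneg] at h
  have lt_power := neg_mul_dist_lt_power_of_wbtw huv h.1 h.2
  rw [power_eq_neg_mul_dist_of_wbtw hpq hp hq] at lt_power
  linarith

theorem intersecting_segments_disk_containment_general (huv : Wbtw ℝ u x v)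
    (hpq : Wbtw ℝ p x q) :
    (∀ s : Sphere P, p ∈ s → q ∈ s →
        u ∈ closedBall s.center s.radius ∨ v ∈ closedBall s.center s.radius) ∨
    (∀ s : Sphere P, u ∈ s → v ∈ s →
        p ∈ closedBall s.center s.radius ∨ q ∈ closedBall s.center s.radius) :=
  (le_total (dist x u * dist x v) (dist x p * dist x q)).imp
    (fun hle _ ↦ mem_closedBall_or_mem_closedBall_of_mul_dist_le huv hpq hle)
    (fun hle _ ↦ mem_closedBall_or_mem_closedBall_of_mul_dist_le hpq huv hle)

end PowerOfPoint

/-- Let `u, v, p, q` be four distinct points of the plane in general position such that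
the open segment `uv` intersects the open segment `pq`. Then either every closed disk
having both `p` and `q` on its boundary contains `u` or `v`, or every closed disk having
both `u` and `v` on its boundary contains `p` or `q`. -/
theorem intersecting_segments_disk_containment (u v p q : Pt)
    (huv : u ≠ v) (hup : u ≠ p) (huq : u ≠ q) (hvp : v ≠ p) (hvq : v ≠ q) (hpq : p ≠ q)
    (hgp : GenPos {u, v, p, q})
    (hint : (openSegment ℝ u v ∩ openSegment ℝ p q).Nonempty) :
    (∀ (c : Pt) (r : ℝ), 0 < r → dist p c = r → dist q c = r →
        u ∈ closedBall c r ∨ v ∈ closedBall c r) ∨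
    (∀ (c : Pt) (r : ℝ), 0 < r → dist u c = r → dist v c = r →
        p ∈ closedBall c r ∨ q ∈ closedBall c r) := by
  obtain ⟨x, hxuv, hxpq⟩ := hint
  have wbtw_uv : Wbtw ℝ u x v :=
    mem_segment_iff_wbtw.1 (openSegment_subset_segment ℝ u v hxuv)
  have wbtw_pq : Wbtw ℝ p x q :=
    mem_segment_iff_wbtw.1 (openSegment_subset_segment ℝ p q hxpq)
  have containment := intersecting_segments_disk_containment_general wbtw_uv wbtw_pq
  exact containment.imp (fun h c r _ hp hq ↦ h ⟨c, r⟩ hp hq) (fun h c r _ hu hv ↦ h ⟨c, r⟩ hu hv)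
end
end

section
/- Let u, v, p, q be four distinct points in the Euclidean plane such that the set {u,v,p,q} is in general position and the open segment from u to v intersects the open segment from p to q. Then either for every closed disk D having both p and q on its boundary at least one of u, v lies outside D, or for every closed disk D' having both u and v on its boundary at least one of p, q lies outside D'. -/
/-!
Suppose one disk has `p, q` on its boundary and contains `u, v`, and another has `u, v` on its
boundary and contains `p, q`. The power of a point with respect to the first circle minus its power
with respect to the second is an affine function, nonpositive at `u, v` and nonnegative at `p, q`.
At a common point of the open segments `uv` and `pq` it is therefore nonnegative, so it attains its
maximum over the segment `uv` at an interior point and is constant there. Hence it vanishes at `u`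
and `v`, which thus lie on the first circle together with `p` and `q`.
-/

open EuclideanGeometry Metric

noncomputable section

section PowerDiff

variable {V P : Type*} [NormedAddCommGroup V] [InnerProductSpace ℝ V] [MetricSpace P]
  [NormedAddTorsor V P]

/-- The difference of the powers of a point with respect to two spheres, bundled as an affine map
because the quadratic parts of the two powers cancel. For distinct centers its zero set is the
radical hyperplane of the spheres. -/
def powerDiff (s s' : Sphere P) : P →ᵃ[ℝ] ℝ where
  toFun x := s.power x - s'.power x
  linear := (2 : ℝ) • innerₛₗ ℝ (s'.center -ᵥ s.center)
  map_vadd' x w := by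
    have hcenters : s'.center -ᵥ s.center = (x -ᵥ s.center) - (x -ᵥ s'.center) :=
      (vsub_sub_vsub_cancel_left _ _ _).symm
    simp only [Sphere.power, dist_eq_norm_vsub V, vadd_vsub_assoc, norm_add_sq_real, hcenters,
      LinearMap.smul_apply, innerₛₗ_apply_apply, inner_sub_right, real_inner_comm w, smul_eq_mul,
      vadd_eq_add]
    ring

lemma powerDiff_apply (s s' : Sphere P) (x : P) : powerDiff s s' x = s.power x - s'.power x :=
  rfl

lemma powerDiff_nonpos {s s' : Sphere P} {x : P} (hx : dist x s.center ≤ s.radius)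
    (hx' : x ∈ s') : powerDiff s s' x ≤ 0 := by
  have hpower : s.power x ≤ 0 :=
    (Sphere.power_nonpos_iff_dist_center_le_radius (dist_nonneg.trans hx)).2 hx
  have hpower' : s'.power x = 0 :=
    (Sphere.power_eq_zero_iff_mem_sphere (Sphere.radius_nonneg_of_mem hx')).2 hx'
  rw [powerDiff_apply, hpower', sub_zero]
  exact hpower

lemma powerDiff_nonneg {s s' : Sphere P} {x : P} (hx : x ∈ s)
    (hx' : dist x s'.center ≤ s'.radius) : 0 ≤ powerDiff s s' x := by
  have hswap : powerDiff s' s x ≤ 0 := powerDiff_nonpos hx' hx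
  rw [powerDiff_apply] at hswap ⊢
  linarith

lemma mem_sphere_of_powerDiff_nonneg {s s' : Sphere P} {x : P} (hx : dist x s.center ≤ s.radius)
    (hx' : x ∈ s') (h : 0 ≤ powerDiff s s' x) : x ∈ s := by
  have hpower' : s'.power x = 0 :=
    (Sphere.power_eq_zero_iff_mem_sphere (Sphere.radius_nonneg_of_mem hx')).2 hx'
  rw [powerDiff_apply, hpower', sub_zero,
    Sphere.power_nonneg_iff_radius_le_dist_center (dist_nonneg.trans hx)] at h
  exact EuclideanGeometry.mem_sphere.2 (hx.antisymm h)

end PowerDiff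

section OpenSegment

variable {V : Type*} [NormedAddCommGroup V] [InnerProductSpace ℝ V]

lemma left_mem_sphere_of_openSegment_inter_nonempty {s s' : Sphere V} {u v p q : V}
    (hu : dist u s.center ≤ s.radius) (hv : dist v s.center ≤ s.radius)
    (hu' : u ∈ s') (hv' : v ∈ s') (hp : p ∈ s) (hq : q ∈ s)
    (hp' : dist p s'.center ≤ s'.radius) (hq' : dist q s'.center ≤ s'.radius)
    (hint : (openSegment ℝ u v ∩ openSegment ℝ p q).Nonempty) : u ∈ s := by
  obtain ⟨x, hxuv, hxpq⟩ := hint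
  have hx : 0 ≤ powerDiff s s' x :=
    ((convex_Ici 0).affine_preimage (powerDiff s s')).openSegment_subset
      (powerDiff_nonneg hp hp') (powerDiff_nonneg hq hq') hxpq
  have hconvex : ConvexOn ℝ Set.univ (powerDiff s s') :=
    (convexOn_id convex_univ).comp_affineMap (powerDiff s s')
  have hxu : powerDiff s s' x ≤ powerDiff s s' u :=
    hconvex.le_left_of_right_le (Set.mem_univ u) (Set.mem_univ v) hxuv
      ((powerDiff_nonpos hv hv').trans hx)
  exact mem_sphere_of_powerDiff_nonneg hu hu' (hx.trans hxu)

theorem intersecting_segments_disk_exclusion_general {u v p q : V}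
    (hcos : ¬Cospherical {u, v, p, q})
    (hint : (openSegment ℝ u v ∩ openSegment ℝ p q).Nonempty) :
    (∀ s : Sphere V, p ∈ s → q ∈ s →
      s.radius < dist u s.center ∨ s.radius < dist v s.center) ∨
    (∀ s : Sphere V, u ∈ s → v ∈ s →
      s.radius < dist p s.center ∨ s.radius < dist q s.center) := by
  by_contra! hcon
  obtain ⟨⟨s, hp, hq, hu, hv⟩, s', hu', hv', hp', hq'⟩ := hcon
  have hus : u ∈ s :=
    left_mem_sphere_of_openSegment_inter_nonempty hu hv hu' hv' hp hq hp' hq' hint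
  have hvs : v ∈ s :=
    left_mem_sphere_of_openSegment_inter_nonempty hv hu hv' hu' hp hq hp' hq'
      (openSegment_symm ℝ u v ▸ hint)
  refine hcos (s.cospherical.subset ?_)
  rintro x (rfl | rfl | rfl | rfl) <;> assumption

end OpenSegment

/-- Let `u, v, p, q` be four distinct points of the plane in general position such that
the open segment `uv` intersects the open segment `pq`. Then either every closed disk
having both `p` and `q` on its boundary leaves `u` or `v` strictly outside, or every
closed disk having both `u` and `v` on its boundary leaves `p` or `q` strictly
outside. -/
theorem intersecting_segments_disk_exclusion (u v p q : Pt)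
    (huv : u ≠ v) (hup : u ≠ p) (huq : u ≠ q) (hvp : v ≠ p) (hvq : v ≠ q) (hpq : p ≠ q)
    (hgp : GenPos {u, v, p, q})
    (hint : (openSegment ℝ u v ∩ openSegment ℝ p q).Nonempty) :
    (∀ (c : Pt) (r : ℝ), 0 < r → dist p c = r → dist q c = r →
        r < dist u c ∨ r < dist v c) ∨
    (∀ (c : Pt) (r : ℝ), 0 < r → dist u c = r → dist v c = r →
        r < dist p c ∨ r < dist q c) := by
  have hcard : ({u, v, p, q} : Set Pt).ncard = 4 := by
    rw [Set.ncard_eq_toFinset_card']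
    simp [huv, hup, huq, hvp, hvq, hpq]
  exact (intersecting_segments_disk_exclusion_general (hgp.2 _ subset_rfl hcard) hint).imp
    (fun h c r _ ↦ h ⟨c, r⟩) (fun h c r _ ↦ h ⟨c, r⟩)
end
end

section
/- For every even integer n ≥ 6 and every set S of n points in the Euclidean plane in general position that is partitioned into a set R of n/2 red points and a set B of n/2 blue points, there exist a red point u ∈ R and a blue point v ∈ B such that every closed disk containing both u and v contains at least ⌈(n−2)/72⌉ points of S. -/
open EuclideanGeometry Metric

noncomputable section

/-!
Consider the straight-line drawing of `K₃,₃` on three non-collinear red points `a` and three blue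
points `b`. Two of its vertex-disjoint edges meet: in barycentric coordinates with respect to `a`,
the median of the three coordinates is a continuous odd function, and two of the blue points, say
`b k` and `b l`, have medians of the same weak sign, so the median vanishes at some
`(1 - t) b k - t b l`. A vector with vanishing median has the form `x a i - y a j` with `x, y ≥ 0`,
and `(1 - t) b k + y a j = t b l + x a i` is, up to normalisation, a common point of the edges
`a j — b k` and `a i — b l`.

If two edges meet, then one of them is such that every disk containing its two endpoints contains an
endpoint of the other: if disks `D₁` and `D₂` refuted this for the two choices, the difference of
the powers of a point with respect to `D₁` and `D₂` would be an affine function that is negative on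
one edge and positive on the other.

Write `p` and `q` for the numbers of red and blue points. Each pair of a red and a blue triple
supplies such an ordered pair of disjoint edges, and each pair of disjoint edges lies in
`(p - 2) (q - 2)` pairs of triples, so some edge `u v` hits at least `(p - 1) (q - 1) / 36` edges
disjoint from it. A disk that contains `u`, `v` and `k` further points meets at most
`k * (max p q - 1)` of these edges, hence `k ≥ (min p q - 1) / 36`.
-/

section Median

variable {α : Type*} [LinearOrder α]

/-- The middle one of three elements of a linear order. For real vectors, it serves as an odd
continuous function whose zeros have at most one positive and at most one negative entry. -/
def medianOfThree (v : Fin 3 → α) : α :=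
  max (min (v 0) (v 1)) (min (max (v 0) (v 1)) (v 2))

theorem continuous_medianOfThree [TopologicalSpace α] [OrderClosedTopology α] :
    Continuous (medianOfThree : (Fin 3 → α) → α) := by
  unfold medianOfThree
  fun_prop

theorem medianOfThree_neg [AddCommGroup α] [IsOrderedAddMonoid α] (v : Fin 3 → α) :
    medianOfThree (-v) = -medianOfThree v := by
  simp only [medianOfThree, Pi.neg_apply, max_neg_neg, min_neg_neg]
  grind

theorem exists_eq_single_sub_single_of_medianOfThree_eq_zero [AddCommGroup α]
    [IsOrderedAddMonoid α] {v : Fin 3 → α} (hv : medianOfThree v = 0) :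
    ∃ i j, i ≠ j ∧ ∃ x y, 0 ≤ x ∧ 0 ≤ y ∧ v = Pi.single i x - Pi.single j y := by
  obtain ⟨i, j, hij, hi, hj, hzero⟩ :
      ∃ i j, i ≠ j ∧ 0 ≤ v i ∧ v j ≤ 0 ∧ ∀ m, m ≠ i → m ≠ j → v m = 0 := by
    unfold medianOfThree at hv
    simp only [Fin.exists_fin_succ, Fin.forall_fin_succ]
    grind
  refine ⟨i, j, hij, v i, -v j, hi, neg_nonneg.mpr hj, funext fun m ↦ ?_⟩
  by_cases hmi : m = i <;> by_cases hmj : m = j <;> simp_all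

theorem exists_medianOfThree_smul_sub_smul_eq_zero {p q : Fin 3 → ℝ}
    (h : 0 ≤ medianOfThree p * medianOfThree q) :
    ∃ t ∈ Set.Icc (0 : ℝ) 1, medianOfThree ((1 - t) • p - t • q) = 0 := by
  let g (t : ℝ) : ℝ := medianOfThree ((1 - t) • p - t • q)
  have hg : Continuous g := continuous_medianOfThree.comp (by fun_prop)
  have h₀ : g 0 = medianOfThree p := by simp [g]
  have h₁ : g 1 = -medianOfThree q := by simp [g, medianOfThree_neg]
  have hmem : (0 : ℝ) ∈ Set.uIcc (g 0) (g 1) := by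
    rw [h₀, h₁, Set.mem_uIcc, neg_nonneg, neg_nonpos]
    exact (mul_nonneg_iff.mp h).symm.imp_right And.symm
  rw [← Set.uIcc_of_le zero_le_one]
  exact intermediate_value_uIcc hg.continuousOn hmem

end Median

theorem exists_ne_mul_nonneg {ι K : Type*} [Fintype ι] [Ring K] [LinearOrder K]
    [IsStrictOrderedRing K] (hι : 2 < Fintype.card ι) (x : ι → K) :
    ∃ k l, k ≠ l ∧ 0 ≤ x k * x l := by
  obtain ⟨k, l, hkl, hsign⟩ :=
    Fintype.exists_ne_map_eq_of_card_lt (fun k ↦ decide (0 ≤ x k)) (by simpa)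
  rw [decide_eq_decide] at hsign
  refine ⟨k, l, hkl, mul_nonneg_iff.mpr ?_⟩
  grind

section Crossing

open Module

variable {V P : Type*} [AddCommGroup V] [AddTorsor V P]

theorem exists_wbtw_wbtw_of_affineBasis [Module ℝ V] (a : AffineBasis (Fin 3) ℝ P)
    (b : Fin 3 → P) :
    ∃ i j, i ≠ j ∧ ∃ k l, k ≠ l ∧ ∃ z, Wbtw ℝ (a i) z (b l) ∧ Wbtw ℝ (a j) z (b k) := by
  obtain ⟨k, l, hkl, hsign⟩ :=
    exists_ne_mul_nonneg (by simp) fun k ↦ medianOfThree (a.coords (b k))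
  obtain ⟨t, ⟨ht₀, ht₁⟩, hmed⟩ := exists_medianOfThree_smul_sub_smul_eq_zero hsign
  obtain ⟨i, j, hij, x, y, hx, hy, hv⟩ :=
    exists_eq_single_sub_single_of_medianOfThree_eq_zero hmed
  have hcoord (m : Fin 3) : (1 - t) * a.coord m (b k) + y * a.coord m (a j) =
      t * a.coord m (b l) + x * a.coord m (a i) := by
    have := congrFun hv m
    simp only [Pi.sub_apply, Pi.smul_apply, AffineBasis.coords_apply, smul_eq_mul,
      Pi.single_apply] at this
    simp only [a.coord_apply]
    grind
  have hmass : 1 - t + y = t + x := by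
    simpa [Finset.sum_add_distrib, ← Finset.mul_sum] using
      Finset.sum_congr rfl fun m (_ : m ∈ Finset.univ) ↦ hcoord m
  have hpos : 0 < t + x := by linarith
  refine ⟨i, j, hij, k, l, hkl, AffineMap.lineMap (a i) (b l) (t / (t + x)),
    ⟨_, ⟨by positivity, div_le_one_of_le₀ (by linarith) hpos.le⟩, rfl⟩,
    ⟨(1 - t) / (t + x), ⟨div_nonneg (by linarith) hpos.le,
      div_le_one_of_le₀ (by linarith) hpos.le⟩, a.ext_elem fun m ↦ ?_⟩⟩
  rw [AffineMap.apply_lineMap, AffineMap.apply_lineMap, AffineMap.lineMap_apply_ring',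
    AffineMap.lineMap_apply_ring']
  field_simp
  linear_combination hcoord m - a.coord m (a j) * hmass

theorem exists_affineBasis_range_eq_of_not_collinear {k : Type*} [DivisionRing k] [Module k V]
    (hV : finrank k V = 2) {S : Finset P} (hS : S.card = 3) (hcol : ¬Collinear k (S : Set P)) :
    ∃ a : AffineBasis (Fin 3) k P, Set.range a = S := by
  have : FiniteDimensional k V := .of_finrank_pos (by lia)
  let a : Fin 3 → P := Subtype.val ∘ (S.equivFinOfCardEq hS).symm
  have hrange : Set.range a = S := by
    rw [Set.range_comp, Equiv.range_eq_univ, Set.image_univ, Subtype.range_coe]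
  have hind : AffineIndependent k a := affineIndependent_iff_not_collinear.mpr (hrange ▸ hcol)
  exact ⟨⟨a, hind, hind.affineSpan_eq_top_iff_card_eq_finrank_add_one.mpr (by simp [hV])⟩, hrange⟩

end Crossing

/-- Every closed ball that contains the edge `uv`, that is, both `u` and `v`, contains an endpoint
of the edge `xy`. -/
def BallHits {P : Type*} [PseudoMetricSpace P] (u v x y : P) : Prop :=
  ∀ (c : P) (r : ℝ), u ∈ closedBall c r → v ∈ closedBall c r →
    x ∈ closedBall c r ∨ y ∈ closedBall c r

section Euclidean

variable {V P : Type*} [NormedAddCommGroup V] [InnerProductSpace ℝ V] [MetricSpace P]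
  [NormedAddTorsor V P]

theorem exists_affineMap_eq_power_sub_power (s₁ s₂ : Sphere P) :
    ∃ f : P →ᵃ[ℝ] ℝ, ∀ p, f p = s₁.power p - s₂.power p := by
  let c₁ := s₁.center
  let c₂ := s₂.center
  let d := s₂.radius ^ 2 - s₁.radius ^ 2 - ‖c₂ -ᵥ c₁‖ ^ 2
  refine ⟨(innerₗ V ((2 : ℝ) • (c₂ -ᵥ c₁))).toAffineMap.comp
    (AffineEquiv.vaddConst ℝ c₁).symm.toAffineMap + AffineMap.const ℝ P d, fun p ↦ ?_⟩
  have hexpand : ‖p -ᵥ c₂‖ ^ 2 =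
      ‖p -ᵥ c₁‖ ^ 2 - 2 * inner ℝ (c₂ -ᵥ c₁) (p -ᵥ c₁) + ‖c₂ -ᵥ c₁‖ ^ 2 := by
    rw [← vsub_sub_vsub_cancel_right p c₂ c₁, norm_sub_sq_real, real_inner_comm]
  simp only [Sphere.power, dist_eq_norm_vsub V, AffineMap.coe_add, Pi.add_apply,
    AffineMap.comp_apply, LinearMap.coe_toAffineMap, AffineMap.const_apply, innerₗ_apply_apply,
    real_inner_smul_left, AffineEquiv.coe_toAffineMap, AffineEquiv.vaddConst_symm_apply, d]
  linear_combination hexpand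

theorem ballHits_or_ballHits_of_wbtw {u v x y z : P} (huv : Wbtw ℝ u z v) (hxy : Wbtw ℝ x z y) :
    BallHits u v x y ∨ BallHits x y u v := by
  by_contra! h
  simp only [BallHits, not_forall, not_or] at h
  obtain ⟨⟨c₁, r₁, hu₁, hv₁, hx₁, hy₁⟩, ⟨c₂, r₂, hx₂, hy₂, hu₂, hv₂⟩⟩ := h
  have hr₁ : 0 ≤ r₁ := dist_nonneg.trans hu₁
  have hr₂ : 0 ≤ r₂ := dist_nonneg.trans hx₂
  obtain ⟨f, hf⟩ := exists_affineMap_eq_power_sub_power (⟨c₁, r₁⟩ : Sphere P) ⟨c₂, r₂⟩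
  simp only [mem_closedBall, not_le,
    ← Sphere.power_nonpos_iff_dist_center_le_radius (s := ⟨c₁, r₁⟩) hr₁,
    ← Sphere.power_nonpos_iff_dist_center_le_radius (s := ⟨c₂, r₂⟩) hr₂] at *
  have hneg : f z < 0 := (convex_Iio 0).mem_of_wbtw (huv.map f)
    (show f u < 0 by rw [hf]; linarith) (show f v < 0 by rw [hf]; linarith)
  have hpos : 0 < f z := (convex_Ioi 0).mem_of_wbtw (hxy.map f)
    (show 0 < f x by rw [hf]; linarith) (show 0 < f y by rw [hf]; linarith)
  exact hneg.not_gt hpos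

theorem exists_ballHits_of_not_collinear (hV : Module.finrank ℝ V = 2) {S T : Finset P}
    (hS : S.card = 3) (hT : T.card = 3) (hcol : ¬Collinear ℝ (S : Set P)) :
    ∃ u ∈ S, ∃ x ∈ S, u ≠ x ∧ ∃ v ∈ T, ∃ y ∈ T, v ≠ y ∧ BallHits u v x y := by
  obtain ⟨a, ha⟩ := exists_affineBasis_range_eq_of_not_collinear hV hS hcol
  have haS (i : Fin 3) : a i ∈ S := Finset.mem_coe.mp (ha ▸ Set.mem_range_self i)
  let b := (T.equivFinOfCardEq hT).symm
  have hb {k l : Fin 3} (hkl : k ≠ l) : (b k : P) ≠ b l := by simpa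
  obtain ⟨i, j, hij, k, l, hkl, z, hil, hjk⟩ := exists_wbtw_wbtw_of_affineBasis a fun k ↦ b k
  have haij : a i ≠ a j := a.ind.injective.ne hij
  rcases ballHits_or_ballHits_of_wbtw hil hjk with h | h
  · exact ⟨_, haS i, _, haS j, haij, _, (b l).2, _, (b k).2, hb hkl.symm, h⟩
  · exact ⟨_, haS j, _, haS i, haij.symm, _, (b k).2, _, (b l).2, hb hkl, h⟩

end Euclidean

section Counting

open Finset

variable {α β : Type*}

theorem card_filter_product_or_le (R : Finset α) (B : Finset β) (p : α → Prop)
    (q : β → Prop) [DecidablePred p] [DecidablePred q] :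
    #{f ∈ R ×ˢ B | p f.1 ∨ q f.2} ≤ #{x ∈ R | p x} * #B + #R * #{y ∈ B | q y} := by
  classical
  rw [filter_or, filter_product_left, filter_product_right, ← card_product, ← card_product]
  exact card_union_le _ _

variable {R : Finset α} {B : Finset β} {r s : ℕ}

theorem card_filter_mem_offDiag_powersetCard [DecidableEq α] (hr : 2 ≤ r) {a : α × α}
    (ha : a ∈ R.offDiag) :
    #{S ∈ R.powersetCard r | a ∈ S.offDiag} = (#R - 2).choose (r - 2) := by
  obtain ⟨h₁, h₂, hne⟩ := mem_offDiag.mp ha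
  have hpair : #{a.1, a.2} = 2 := card_pair hne
  rw [← hpair, ← card_filter_powersetCard_subset {a.1, a.2} R r (by grind) (hpair ▸ hr)]
  congr 1
  grind

theorem choose_mul_choose_le_card_mul (hr : 2 ≤ r) (hs : 2 ≤ s)
    {Q : Finset ((α × α) × (β × β))} (hQ : Q ⊆ R.offDiag ×ˢ B.offDiag)
    (hmeet : ∀ S ∈ R.powersetCard r, ∀ T ∈ B.powersetCard s,
      ∃ x ∈ Q, x.1 ∈ S.offDiag ∧ x.2 ∈ T.offDiag) :
    (#R).choose r * (#B).choose s ≤ #Q * ((#R - 2).choose (r - 2) * (#B - 2).choose (s - 2)) := by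
  classical
  rw [← card_powersetCard, ← card_powersetCard, ← card_product, ← mul_one (#(_ ×ˢ _))]
  refine card_mul_le_card_mul (fun ST x ↦ x.1 ∈ ST.1.offDiag ∧ x.2 ∈ ST.2.offDiag) ?_ ?_
  · rintro ⟨S, T⟩ hST
    obtain ⟨x, hxQ, hx⟩ := hmeet S (mem_product.mp hST).1 T (mem_product.mp hST).2
    exact card_pos.mpr ⟨x, mem_filter.mpr ⟨hxQ, hx⟩⟩
  · intro x hx
    obtain ⟨hxR, hxB⟩ := mem_product.mp (hQ hx)
    rw [bipartiteBelow, filter_product (x.1 ∈ offDiag ·) (x.2 ∈ offDiag ·), card_product,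
      card_filter_mem_offDiag_powersetCard hr hxR, card_filter_mem_offDiag_powersetCard hs hxB]

theorem choose_two_mul_choose_two_le_mul_card (hr : 2 ≤ r) (hrR : r ≤ #R) (hs : 2 ≤ s)
    (hsB : s ≤ #B) {Q : Finset ((α × α) × (β × β))} (hQ : Q ⊆ R.offDiag ×ˢ B.offDiag)
    (hmeet : ∀ S ∈ R.powersetCard r, ∀ T ∈ B.powersetCard s,
      ∃ x ∈ Q, x.1 ∈ S.offDiag ∧ x.2 ∈ T.offDiag) :
    (#R).choose 2 * (#B).choose 2 ≤ r.choose 2 * s.choose 2 * #Q := by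
  have hpos : 0 < (#R - 2).choose (r - 2) * (#B - 2).choose (s - 2) :=
    mul_pos (Nat.choose_pos (by lia)) (Nat.choose_pos (by lia))
  refine Nat.le_of_mul_le_mul_right ?_ hpos
  calc (#R).choose 2 * (#B).choose 2 * ((#R - 2).choose (r - 2) * (#B - 2).choose (s - 2))
      = (#R).choose 2 * (#R - 2).choose (r - 2) * ((#B).choose 2 * (#B - 2).choose (s - 2)) :=
        mul_mul_mul_comm ..
    _ = (#R).choose r * r.choose 2 * ((#B).choose s * s.choose 2) := by
        rw [Nat.choose_mul hr, Nat.choose_mul hs]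
    _ = r.choose 2 * s.choose 2 * ((#R).choose r * (#B).choose s) := by ring
    _ ≤ r.choose 2 * s.choose 2 *
        (#Q * ((#R - 2).choose (r - 2) * (#B - 2).choose (s - 2))) :=
        Nat.mul_le_mul_left _ (choose_mul_choose_le_card_mul hr hs hQ hmeet)
    _ = _ := (mul_assoc ..).symm

theorem exists_mul_le_card_filter_erase_product_erase [DecidableEq α] [DecidableEq β]
    (H : α → β → α → β → Prop) [∀ u v x y, Decidable (H u v x y)]
    (hr : 2 ≤ r) (hrR : r ≤ #R) (hs : 2 ≤ s) (hsB : s ≤ #B)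
    (hH : ∀ S ∈ R.powersetCard r, ∀ T ∈ B.powersetCard s,
      ∃ u ∈ S, ∃ x ∈ S, u ≠ x ∧ ∃ v ∈ T, ∃ y ∈ T, v ≠ y ∧ H u v x y) :
    ∃ u ∈ R, ∃ v ∈ B, (#R - 1) * (#B - 1) ≤
      4 * (r.choose 2 * s.choose 2) * #{f ∈ R.erase u ×ˢ B.erase v | H u v f.1 f.2} := by
  let Q := {x ∈ R.offDiag ×ˢ B.offDiag | H x.1.1 x.2.1 x.1.2 x.2.2}
  let N (e : α × β) := {f ∈ R.erase e.1 ×ˢ B.erase e.2 | H e.1 e.2 f.1 f.2}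
  have hcardQ : (#R).choose 2 * (#B).choose 2 ≤ r.choose 2 * s.choose 2 * #Q := by
    refine choose_two_mul_choose_two_le_mul_card hr hrR hs hsB (filter_subset _ _)
      fun S hS T hT ↦ ?_
    obtain ⟨u, hu, x, hx, hux, v, hv, y, hy, hvy, huvxy⟩ := hH S hS T hT
    exact ⟨((u, x), (v, y)), by grind⟩
  have hfiber : #Q ≤ ∑ e ∈ R ×ˢ B, #(N e) := by
    rw [card_eq_sum_card_fiberwise (f := fun x ↦ (x.1.1, x.2.1)) (t := R ×ˢ B)
      fun x hx ↦ by grind]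
    refine sum_le_sum fun e _ ↦ card_le_card_of_injOn (fun x ↦ (x.1.2, x.2.2)) ?_ ?_
    · intro x hx
      grind
    · intro x hx y hy hxy
      grind
  have htwo (n : ℕ) : n * (n - 1) = 2 * n.choose 2 := by
    rw [Nat.choose_two_right, Nat.two_mul_div_two_of_even (Nat.even_mul_pred_self n)]
  have hsum : ∑ _e ∈ R ×ˢ B, (#R - 1) * (#B - 1) ≤
      ∑ e ∈ R ×ˢ B, 4 * (r.choose 2 * s.choose 2) * #(N e) :=
    calc ∑ _e ∈ R ×ˢ B, (#R - 1) * (#B - 1)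
        = #R * (#R - 1) * (#B * (#B - 1)) := by
          rw [sum_const, card_product, smul_eq_mul, mul_mul_mul_comm]
      _ = 4 * ((#R).choose 2 * (#B).choose 2) := by rw [htwo, htwo]; ring
      _ ≤ 4 * (r.choose 2 * s.choose 2 * ∑ e ∈ R ×ˢ B, #(N e)) := by grw [hcardQ, hfiber]
      _ = _ := by rw [← mul_sum, mul_assoc 4]
  have hne : (R ×ˢ B).Nonempty := .product (card_pos.mp (by lia)) (card_pos.mp (by lia))
  obtain ⟨⟨u, v⟩, huv, hle⟩ := exists_le_of_sum_le hne hsum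
  exact ⟨u, (mem_product.mp huv).1, v, (mem_product.mp huv).2, hle⟩

end Counting

theorem min_le_mul_add_of_mul_le {a b k x y : ℕ} (h : a * b ≤ k * (x * b + a * y)) :
    min a b ≤ k * (x + y) := by
  rcases (min a b).eq_zero_or_pos with hzero | hpos
  · simp [hzero]
  obtain ⟨ha, hb⟩ := lt_min_iff.mp hpos
  rcases le_total a b with hab | hab
  · rw [min_eq_left hab]
    refine Nat.le_of_mul_le_mul_right ?_ hb
    calc a * b ≤ k * (x * b + a * y) := h
      _ ≤ k * (x * b + b * y) := by gcongr
      _ = _ := by ring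
  · rw [min_eq_right hab]
    refine Nat.le_of_mul_le_mul_left ?_ ha
    calc a * b ≤ k * (x * b + a * y) := h
      _ ≤ k * (x * a + a * y) := by gcongr
      _ = _ := by ring

theorem ceil_sub_two_div_le {n k : ℕ} (hn : Even n) (h : n / 2 ≤ 36 * k + 1) :
    ⌈((n : ℝ) - 2) / 72⌉ ≤ (k : ℤ) := by
  have hle : n ≤ 72 * k + 2 := by grind
  have hle' : (n : ℝ) ≤ 72 * k + 2 := by exact_mod_cast hle
  rw [Int.ceil_le, Int.cast_natCast]
  linarith

open Finset in
theorem card_filter_erase_add_card_filter_erase_le {α : Type*} [DecidableEq α] {R B : Finset α}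
    (hdisj : Disjoint R B) {u v : α} (hu : u ∈ R) (hv : v ∈ B) (p : α → Prop) [DecidablePred p] :
    #{x ∈ R.erase u | p x} + #{y ∈ B.erase v | p y} ≤ #{x ∈ (R ∪ B) \ {u, v} | p x} := by
  rw [← card_union_of_disjoint (by grind [disjoint_left])]
  exact card_le_card (by grind [disjoint_left])

open Finset in
theorem pi_bichrom_lower_bound_n_over_72_general {V P : Type*} [NormedAddCommGroup V]
    [InnerProductSpace ℝ V] [MetricSpace P] [NormedAddTorsor V P] (hV : Module.finrank ℝ V = 2)
    {R B : Set P} (hR : 3 ≤ R.ncard) (hB : 3 ≤ B.ncard) (hdisj : Disjoint R B)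
    (hcol : ∀ T ⊆ R, T.ncard = 3 → ¬Collinear ℝ T) :
    ∃ u ∈ R, ∃ v ∈ B, ∀ (c : P) (r : ℝ), u ∈ closedBall c r → v ∈ closedBall c r →
      min R.ncard B.ncard ≤ 36 * (((R ∪ B) ∩ closedBall c r) \ {u, v}).ncard + 1 := by
  classical
  lift R to Finset P using Set.finite_of_ncard_pos (by lia)
  lift B to Finset P using Set.finite_of_ncard_pos (by lia)
  rw [Set.ncard_coe_finset] at hR hB
  obtain ⟨u, hu, v, hv, hcount⟩ := exists_mul_le_card_filter_erase_product_erase BallHits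
    (by norm_num) hR (by norm_num) hB fun S hS T hT ↦
      exists_ballHits_of_not_collinear hV (mem_powersetCard.mp hS).2 (mem_powersetCard.mp hT).2
        (hcol S (mod_cast (mem_powersetCard.mp hS).1)
          ((Set.ncard_coe_finset S).trans (mem_powersetCard.mp hS).2))
  refine ⟨u, hu, v, hv, fun c r huD hvD ↦ ?_⟩
  let p (x : P) : Prop := x ∈ closedBall c r
  have hhits : #{f ∈ R.erase u ×ˢ B.erase v | BallHits u v f.1 f.2} ≤
      #{x ∈ R.erase u | p x} * (#B - 1) + (#R - 1) * #{y ∈ B.erase v | p y} := by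
    rw [← card_erase_of_mem hu, ← card_erase_of_mem hv]
    exact (card_le_card (monotone_filter_right _ fun f _ hf ↦ hf c r huD hvD)).trans
      (card_filter_product_or_le _ _ p p)
  have hmin := min_le_mul_add_of_mul_le (hcount.trans (Nat.mul_le_mul_left _ hhits))
  have hball : #{x ∈ (R ∪ B) \ {u, v} | p x} =
      ((((R : Set P) ∪ B) ∩ closedBall c r) \ {u, v}).ncard := by
    rw [← Set.ncard_coe_finset, coe_filter]
    congr 1
    grind
  have hle := card_filter_erase_add_card_filter_erase_le (mod_cast hdisj) hu hv p
  rw [Set.ncard_coe_finset, Set.ncard_coe_finset, ← hball]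
  rw [show 4 * (Nat.choose 3 2 * Nat.choose 3 2) = 36 from rfl] at hmin
  lia

/-- For every even `n ≥ 6` and every set of `n` points in the plane in general position
partitioned into `n/2` red points `R` and `n/2` blue points `B`, there exist a red point
`u ∈ R` and a blue point `v ∈ B` such that every closed disk containing both `u` and `v`
contains at least `⌈(n−2)/72⌉` points of the set. -/
theorem pi_bichrom_lower_bound_n_over_72 (n : ℕ) (hn : 6 ≤ n) (heven : Even n)
    (R B : Set Pt) (hfinR : R.Finite) (hfinB : B.Finite) (hdisj : Disjoint R B)
    (hR : R.ncard = n / 2) (hB : B.ncard = n / 2) (hgp : GenPos (R ∪ B)) :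
    ∃ u ∈ R, ∃ v ∈ B,
      ∀ (c : Pt) (r : ℝ), 0 < r → u ∈ closedBall c r → v ∈ closedBall c r →
        ⌈((n : ℝ) - 2) / 72⌉ ≤ (((R ∪ B) ∩ closedBall c r).ncard : ℤ) := by
  obtain ⟨u, hu, v, hv, h⟩ := pi_bichrom_lower_bound_n_over_72_general finrank_euclideanSpace_fin
    (by lia) (by lia) hdisj fun T hT ↦ hgp.1 T (hT.trans Set.subset_union_left)
  rw [hR, hB, min_self] at h
  refine ⟨u, hu, v, hv, fun c r _ huD hvD ↦ ceil_sub_two_div_le heven ((h c r huD hvD).trans ?_)⟩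
  grw [Set.ncard_le_ncard Set.sdiff_subset ((hfinR.union hfinB).inter_of_left _)]
end
end

section
/- For every even integer n ≥ 6 and every set S of n points in the Euclidean plane in general position that is partitioned into a set R of n/2 red points and a set B of n/2 blue points, there exist a red point u ∈ R and a blue point v ∈ B such that every closed disk containing both u and v contains at least ⌈(n−2)/36⌉ + 2 points of S. -/
/-!
Lifting the plane to the paraboloid turns disks into half-spaces of a three-dimensional space.

*Six points.* Three red and three blue points of a three-dimensional space have an at least
two-dimensional space `K` of affine dependencies. If every red-blue pair could be cut off from the
other four points by a half-space, then no nonzero dependency would have its negative coefficients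
confined to a red-blue pair. Since the six coefficients sum to zero and no three real numbers have
both a positive and a negative majority, every nonzero dependency would then lean towards `+` on
one colour and towards `-` on the other. Which of the two happens is an open condition, and
negation exchanges the two cases. But `K` without the origin is connected.

*Counting.* Choose for every red-blue pair a disk containing it. By the above, every three red and
three blue points contain an incidence, that is, a pair and a third point in its disk. With `a`
points of each colour there are `(a choose 3) ^ 2` such sextuples, each incidence lies in
`(a - 2) * (a - 1 choose 2)` of them, so there are at least `a ^ 2 * (a - 1) / 18` incidences, and
one of the `a ^ 2` disks contains at least `(a - 1) / 18` further points. Here `a = n / 2`.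
-/

open EuclideanGeometry Metric

noncomputable section

/-! ### Sign patterns on three red and three blue indices -/

section SignPatterns

variable {σ ι κ : Type*}

/-- At least two entries of `x` are negative. If `x` has three entries, this says that the negative
sign has the majority. -/
def HasTwoNeg (x : ι → ℝ) : Prop :=
  ∃ i j, i ≠ j ∧ x i < 0 ∧ x j < 0

/-- The negative entries of `w` lie in `s` and the positive ones outside `s`. Zero entries may lie
anywhere. -/
def SplitsSigns (w : σ → ℝ) (s : Set σ) : Prop :=
  (∀ k ∈ s, w k ≤ 0) ∧ ∀ k ∉ s, 0 ≤ w k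

lemma isOpen_setOf_hasTwoNeg : IsOpen {x : ι → ℝ | HasTwoNeg x} := by
  simp only [HasTwoNeg, Set.ofPred_exists]
  exact isOpen_iUnion fun i => isOpen_iUnion fun j => isOpen_const.and
    ((isOpen_Iio.preimage (continuous_apply i)).and (isOpen_Iio.preimage (continuous_apply j)))

lemma HasTwoNeg.not_hasTwoNeg_neg [Fintype ι] (hι : Fintype.card ι ≤ 3) {x : ι → ℝ}
    (hneg : HasTwoNeg x) : ¬HasTwoNeg (-x) := by
  classical
  rintro ⟨k, l, hkl, hk, hl⟩
  obtain ⟨i, j, hij, hi, hj⟩ := hneg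
  rw [Pi.neg_apply, neg_lt_zero] at hk hl
  have hne {a b : ι} (ha : x a < 0) (hb : 0 < x b) : a ≠ b := by
    rintro rfl
    exact ha.not_gt hb
  have hfour : ({i, j, k, l} : Finset ι).card = 4 := by
    simp [hij, hkl, hne hi hk, hne hi hl, hne hj hk, hne hj hl]
  have := Finset.card_le_univ ({i, j, k, l} : Finset ι)
  omega

lemma exists_splitsSigns_singleton {x : ι → ℝ} (hx : ∃ i, x i ≤ 0) (htwo : ¬HasTwoNeg x) :
    ∃ i, SplitsSigns x {i} := by
  simp only [HasTwoNeg, not_exists, not_and, not_lt] at htwo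
  by_cases hneg : ∃ i, x i < 0
  · obtain ⟨i, hi⟩ := hneg
    exact ⟨i, by simpa using hi.le, fun k hk => htwo i k (Ne.symm hk) hi⟩
  · push Not at hneg
    obtain ⟨i, hi⟩ := hx
    exact ⟨i, by simpa using hi, fun k _ => hneg k⟩

lemma SplitsSigns.pair {w : ι ⊕ κ → ℝ} {i : ι} {j : κ} (hi : SplitsSigns (w ∘ Sum.inl) {i})
    (hj : SplitsSigns (w ∘ Sum.inr) {j}) : SplitsSigns w {Sum.inl i, Sum.inr j} := by
  refine ⟨?_, ?_⟩
  · rintro k (rfl | rfl)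
    exacts [hi.1 i rfl, hj.1 j rfl]
  · rintro (k | k) hk
    · exact hi.2 k (by simpa using hk)
    · exact hj.2 k (by simpa using hk)

/-- The weights whose signs lean towards `+` on `ι` and towards `-` on `κ`. The last two
alternatives decide the weights which have no nonpositive entry on `ι` or no nonnegative entry
on `κ`. -/
def posNegWeights (ι κ : Type*) : Set (ι ⊕ κ → ℝ) :=
  {w | HasTwoNeg (-(w ∘ Sum.inl)) ∧ HasTwoNeg (w ∘ Sum.inr)} ∪
    ({w | ∀ i, 0 < w (Sum.inl i)} ∪ {w | ∀ j, w (Sum.inr j) < 0})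

lemma isOpen_posNegWeights [Finite ι] [Finite κ] : IsOpen (posNegWeights ι κ) := by
  refine (IsOpen.and ?_ ?_).union (IsOpen.union ?_ ?_)
  · exact isOpen_setOf_hasTwoNeg.preimage (by fun_prop)
  · exact isOpen_setOf_hasTwoNeg.preimage (by fun_prop)
  · simp only [Set.ofPred_forall]
    exact isOpen_iInter_of_finite fun i => isOpen_Ioi.preimage (continuous_apply _)
  · simp only [Set.ofPred_forall]
    exact isOpen_iInter_of_finite fun j => isOpen_Iio.preimage (continuous_apply _)

variable [Fintype ι] [Fintype κ]

lemma exists_splitsSigns_pair (hι : Fintype.card ι ≤ 3) (hκ : Fintype.card κ ≤ 3)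
    {w : ι ⊕ κ → ℝ} (hw : w ∉ posNegWeights ι κ) (hw' : -w ∉ posNegWeights ι κ) :
    ∃ i j, SplitsSigns w {Sum.inl i, Sum.inr j} ∨ SplitsSigns (-w) {Sum.inl i, Sum.inr j} := by
  simp only [posNegWeights, Set.mem_union, Set.mem_ofPred_eq, not_or, not_and, not_forall, not_lt,
    Pi.neg_apply, neg_nonneg, neg_nonpos, ← Pi.neg_comp, neg_neg] at hw hw'
  obtain ⟨hpn, hxnonpos, hynonneg⟩ := hw
  obtain ⟨hnp, hxnonneg, hynonpos⟩ := hw'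
  by_cases hneg : HasTwoNeg (w ∘ Sum.inl) ∨ HasTwoNeg (w ∘ Sum.inr)
  · obtain ⟨hxpos, hypos⟩ : ¬HasTwoNeg (-w ∘ Sum.inl) ∧ ¬HasTwoNeg (-w ∘ Sum.inr) := by
      rcases hneg with hx | hy
      · exact ⟨hx.not_hasTwoNeg_neg hι, hnp hx⟩
      · exact ⟨fun hx => hpn hx hy, hy.not_hasTwoNeg_neg hκ⟩
    obtain ⟨i, hi⟩ := exists_splitsSigns_singleton (by simpa using hxnonneg) hxpos
    obtain ⟨j, hj⟩ := exists_splitsSigns_singleton (by simpa using hynonneg) hypos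
    exact ⟨i, j, .inr (hi.pair hj)⟩
  · rw [not_or] at hneg
    obtain ⟨i, hi⟩ := exists_splitsSigns_singleton hxnonpos hneg.1
    obtain ⟨j, hj⟩ := exists_splitsSigns_singleton hynonpos hneg.2
    exact ⟨i, j, .inl (hi.pair hj)⟩

lemma exists_pos_inl_and_neg_inr [Nonempty ι] [Nonempty κ] {w : ι ⊕ κ → ℝ}
    (hw : w ∈ posNegWeights ι κ) (hsum : ∑ k, w k = 0) :
    (∃ i, 0 < w (Sum.inl i)) ∧ ∃ j, w (Sum.inr j) < 0 := by
  rw [Fintype.sum_sum_type] at hsum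
  rcases hw with ⟨⟨i, _, _, hi, _⟩, ⟨j, _, _, hj, _⟩⟩ | hx | hy
  · exact ⟨⟨i, neg_lt_zero.1 hi⟩, j, hj⟩
  · refine ⟨⟨Classical.arbitrary ι, hx _⟩, ?_⟩
    by_contra! hy
    have hxsum := Finset.sum_pos (fun i _ => hx i) Finset.univ_nonempty
    have hysum := Finset.sum_nonneg fun j (_ : j ∈ Finset.univ) => hy j
    linarith
  · refine ⟨?_, ⟨Classical.arbitrary κ, hy _⟩⟩
    by_contra! hx
    have hxsum := Finset.sum_nonpos fun i (_ : i ∈ Finset.univ) => hx i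
    have hysum := Finset.sum_neg (fun j _ => hy j) Finset.univ_nonempty
    linarith

lemma neg_notMem_posNegWeights [Nonempty ι] [Nonempty κ] (hι : Fintype.card ι ≤ 3)
    {w : ι ⊕ κ → ℝ} (hw : w ∈ posNegWeights ι κ) (hsum : ∑ k, w k = 0) :
    -w ∉ posNegWeights ι κ := by
  intro hw'
  obtain ⟨⟨i, hi⟩, j, hj⟩ := exists_pos_inl_and_neg_inr hw hsum
  obtain ⟨⟨i', hi'⟩, j', hj'⟩ :=
    exists_pos_inl_and_neg_inr hw'
      (by simpa only [Pi.neg_apply, Finset.sum_neg_distrib, neg_eq_zero])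
  rw [Pi.neg_apply] at hi' hj'
  rcases hw with ⟨hpos, -⟩ | hx | hy
  · rcases hw' with ⟨hneg, -⟩ | hx' | hy'
    · exact hpos.not_hasTwoNeg_neg hι hneg
    · exact (neg_pos.1 (hx' i)).not_gt hi
    · exact (neg_lt_zero.1 (hy' j)).not_gt hj
  · exact (hx i').not_gt (neg_pos.1 hi')
  · exact (hy j').not_gt (neg_lt_zero.1 hj')

/-- Two disjoint open sets, `posNegWeights ι κ` and its negative, cannot cover the connected set
`K \ {0}`. -/
theorem exists_ne_zero_splitsSigns_pair [Nonempty ι] [Nonempty κ]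
    (hι : Fintype.card ι ≤ 3) (hκ : Fintype.card κ ≤ 3)
    (K : Submodule ℝ (ι ⊕ κ → ℝ)) (hK : 1 < Module.finrank ℝ K) (hsum : ∀ w ∈ K, ∑ k, w k = 0) :
    ∃ w ∈ K, w ≠ 0 ∧ ∃ i j, SplitsSigns w {Sum.inl i, Sum.inr j} := by
  by_contra! hnone
  have hpre : IsPreconnected ({0}ᶜ : Set K) :=
    (isConnected_compl_singleton_of_one_lt_rank
      (by rwa [← Module.finrank_eq_rank, Nat.one_lt_cast]) 0).isPreconnected
  have hcover (w : K) (hw : w ≠ 0) :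
      (w : ι ⊕ κ → ℝ) ∈ posNegWeights ι κ ∨ -(w : ι ⊕ κ → ℝ) ∈ posNegWeights ι κ := by
    by_contra! hout
    obtain ⟨i, j, hsplit | hsplit⟩ := exists_splitsSigns_pair hι hκ hout.1 hout.2
    · exact hnone w w.2 (by simpa using hw) i j hsplit
    · exact hnone (-w) (neg_mem w.2) (by simpa using hw) i j hsplit
  have hopen : IsOpen {w : K | (w : ι ⊕ κ → ℝ) ∈ posNegWeights ι κ} :=
    isOpen_posNegWeights.preimage continuous_subtype_val
  have : Nontrivial K := Module.nontrivial_of_finrank_pos (R := ℝ) (by omega)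
  obtain ⟨w, hw⟩ : ∃ w : K, w ≠ 0 ∧ (w : ι ⊕ κ → ℝ) ∈ posNegWeights ι κ := by
    obtain ⟨w, hw⟩ := exists_ne (0 : K)
    rcases hcover w hw with hpos | hneg
    · exact ⟨w, hw, hpos⟩
    · exact ⟨-w, neg_ne_zero.2 hw, hneg⟩
  obtain ⟨z, -, hz, hz'⟩ := hpre _ _ hopen (hopen.preimage continuous_neg) hcover ⟨w, hw⟩
    ⟨-w, neg_ne_zero.2 hw.1, by simpa using hw.2⟩
  exact neg_notMem_posNegWeights hι hz (hsum z z.2) hz'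

end SignPatterns

/-! ### Half-spaces -/

section HalfSpaces

variable {V : Type*} [AddCommGroup V] [Module ℝ V]

lemma SplitsSigns.eq_zero_of_separated {σ : Type*} [Fintype σ] {w : σ → ℝ} {s : Set σ}
    (hw : SplitsSigns w s) {p : σ → V} (hsum : ∑ k, w k = 0) (hdep : ∑ k, w k • p k = 0)
    (f : Module.Dual ℝ V) (t : ℝ) (hin : ∀ k ∈ s, f (p k) ≤ t) (hout : ∀ k ∉ s, t < f (p k)) :
    w = 0 := by
  have hterm (k : σ) : 0 ≤ w k * (f (p k) - t) := by
    by_cases hk : k ∈ s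
    · exact mul_nonneg_of_nonpos_of_nonpos (hw.1 k hk) (sub_nonpos.2 (hin k hk))
    · exact mul_nonneg (hw.2 k hk) (sub_pos.2 (hout k hk)).le
  have hsum_term : ∑ k, w k * (f (p k) - t) = 0 := by
    have hf : ∑ k, w k * f (p k) = 0 := by simpa using congrArg f hdep
    simp only [mul_sub, Finset.sum_sub_distrib, ← Finset.sum_mul, hf, hsum, zero_mul, sub_zero]
  have hnonpos (k : σ) : w k ≤ 0 := by
    by_cases hk : k ∈ s
    · exact hw.1 k hk
    · have hzero := congrFun ((Fintype.sum_eq_zero_iff_of_nonneg hterm).1 hsum_term) k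
      exact ((mul_eq_zero.1 hzero).resolve_right (sub_pos.2 (hout k hk)).ne').le
  exact (Fintype.sum_eq_zero_iff_of_nonpos hnonpos).1 hsum

/-- The space of affine dependencies among the points `p k`, encoded as the linear dependencies
among the vectors `(1, p k)`. -/
def affineDependencies {σ : Type*} [Fintype σ] (p : σ → V) : Submodule ℝ (σ → ℝ) :=
  (Fintype.linearCombination ℝ fun k => ((1 : ℝ), p k)).ker

lemma mem_affineDependencies {σ : Type*} [Fintype σ] {p : σ → V} {w : σ → ℝ} :
    w ∈ affineDependencies p ↔ ∑ k, w k = 0 ∧ ∑ k, w k • p k = 0 := by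
  simp [affineDependencies, Fintype.linearCombination_apply, Prod.ext_iff, Prod.fst_sum,
    Prod.snd_sum]

lemma card_le_finrank_affineDependencies_add [FiniteDimensional ℝ V] {σ : Type*} [Fintype σ]
    (p : σ → V) :
    Fintype.card σ ≤ Module.finrank ℝ (affineDependencies p) + (Module.finrank ℝ V + 1) := by
  let L : (σ → ℝ) →ₗ[ℝ] ℝ × V := Fintype.linearCombination ℝ fun k => ((1 : ℝ), p k)
  calc Fintype.card σ = Module.finrank ℝ (σ → ℝ) := Module.finrank_fintype_fun_eq_card ℝ |>.symm
    _ = Module.finrank ℝ L.ker + Module.finrank ℝ L.range := by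
      rw [add_comm, L.finrank_range_add_finrank_ker]
    _ ≤ Module.finrank ℝ L.ker + (Module.finrank ℝ V + 1) := by
      gcongr
      refine L.range.finrank_le.trans_eq ?_
      rw [Module.finrank_prod, Module.finrank_self, add_comm]

theorem exists_third_mem_halfspace [FiniteDimensional ℝ V] (hV : Module.finrank ℝ V ≤ 3)
    {ι κ : Type*} [Fintype ι] [Fintype κ] (hι : Fintype.card ι = 3) (hκ : Fintype.card κ = 3)
    (p : ι → V) (q : κ → V) (f : ι → κ → Module.Dual ℝ V) (t : ι → κ → ℝ)
    (hp : ∀ i j, f i j (p i) ≤ t i j) (hq : ∀ i j, f i j (q j) ≤ t i j) :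
    ∃ i j, (∃ k ≠ i, f i j (p k) ≤ t i j) ∨ ∃ l ≠ j, f i j (q l) ≤ t i j := by
  by_contra! hsep
  have : Nonempty ι := Fintype.card_pos_iff.1 (by omega)
  have : Nonempty κ := Fintype.card_pos_iff.1 (by omega)
  have hK := card_le_finrank_affineDependencies_add (Sum.elim p q)
  rw [Fintype.card_sum] at hK
  obtain ⟨w, hw, hne, i, j, hsplit⟩ := exists_ne_zero_splitsSigns_pair hι.le hκ.le
    (affineDependencies (Sum.elim p q)) (by omega) fun w hw => (mem_affineDependencies.1 hw).1
  obtain ⟨hsum, hdep⟩ := mem_affineDependencies.1 hw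
  refine hne (hsplit.eq_zero_of_separated hsum hdep (f i j) (t i j) ?_ ?_)
  · rintro k (rfl | rfl)
    exacts [hp i j, hq i j]
  · rintro (k | l) hk
    · exact (hsep i j).1 k (by simpa using hk)
    · exact (hsep i j).2 l (by simpa using hk)

end HalfSpaces

/-! ### Counting incidences -/

section Counting

open Finset

variable {α β : Type*} [Fintype α] [Fintype β]

/-- The three-element sets containing `s`. -/
def triplesContaining [DecidableEq α] (s : Finset α) : Finset (Finset α) :=
  {A ∈ powersetCard 3 univ | s ⊆ A}

lemma mem_triplesContaining [DecidableEq α] {s A : Finset α} :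
    A ∈ triplesContaining s ↔ #A = 3 ∧ s ⊆ A := by
  simp [triplesContaining]

lemma card_triplesContaining [DecidableEq α] {s : Finset α} (hs : #s ≤ 3) :
    #(triplesContaining s) = (Fintype.card α - #s).choose (3 - #s) :=
  card_filter_powersetCard_subset s univ 3 (subset_univ s) hs

variable {P : α → β → Finset α} {Q : α → β → Finset β}

/-- Pairs of triples, counted by way of the incidences they contain. -/
lemma choose_mul_choose_le_card_incidences (hP : ∀ u v, u ∉ P u v) (hQ : ∀ u v, v ∉ Q u v)
    (h : ∀ A : Finset α, ∀ B : Finset β, #A = 3 → #B = 3 →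
      ∃ u ∈ A, ∃ v ∈ B, (∃ x ∈ P u v, x ∈ A) ∨ ∃ y ∈ Q u v, y ∈ B) :
    (Fintype.card α).choose 3 * (Fintype.card β).choose 3 ≤
      ∑ e : α × β,
        (#(P e.1 e.2) * ((Fintype.card α - 2) * (Fintype.card β - 1).choose 2) +
          #(Q e.1 e.2) * ((Fintype.card α - 1).choose 2 * (Fintype.card β - 2))) := by
  classical
  let redIncident (e : α × β) : Finset (Finset α × Finset β) :=
    (P e.1 e.2).biUnion fun x => triplesContaining {e.1, x} ×ˢ triplesContaining {e.2}
  let blueIncident (e : α × β) : Finset (Finset α × Finset β) :=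
    (Q e.1 e.2).biUnion fun y => triplesContaining {e.1} ×ˢ triplesContaining {e.2, y}
  have hcover : powersetCard 3 univ ×ˢ powersetCard 3 univ ⊆
      univ.biUnion fun e => redIncident e ∪ blueIncident e := by
    rintro ⟨A, B⟩ hAB
    simp only [mem_product, mem_powersetCard_univ] at hAB
    obtain ⟨u, hu, v, hv, hxy⟩ := h A B hAB.1 hAB.2
    simp only [redIncident, blueIncident, mem_biUnion, mem_univ, true_and, mem_union, mem_product,
      mem_triplesContaining, insert_subset_iff, singleton_subset_iff, hAB]
    exact ⟨(u, v), hxy.imp (fun ⟨x, hx, hxA⟩ => ⟨x, hx, ⟨hu, hxA⟩, hv⟩)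
      fun ⟨y, hy, hyB⟩ => ⟨y, hy, hu, hv, hyB⟩⟩
  have hred (e : α × β) : #(redIncident e) ≤
      #(P e.1 e.2) * ((Fintype.card α - 2) * (Fintype.card β - 1).choose 2) := by
    refine card_biUnion_le_card_mul _ _ _ fun x hx => ?_
    have hne : e.1 ≠ x := fun h => hP e.1 e.2 (h ▸ hx)
    simp [card_triplesContaining, card_pair hne]
  have hblue (e : α × β) : #(blueIncident e) ≤
      #(Q e.1 e.2) * ((Fintype.card α - 1).choose 2 * (Fintype.card β - 2)) := by
    refine card_biUnion_le_card_mul _ _ _ fun y hy => ?_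
    have hne : e.2 ≠ y := fun h => hQ e.1 e.2 (h ▸ hy)
    simp [card_triplesContaining, card_pair hne]
  calc (Fintype.card α).choose 3 * (Fintype.card β).choose 3
      = #(powersetCard 3 (univ : Finset α) ×ˢ powersetCard 3 (univ : Finset β)) := by
        simp
    _ ≤ ∑ e, #(redIncident e ∪ blueIncident e) := (card_le_card hcover).trans card_biUnion_le
    _ ≤ _ := sum_le_sum fun e _ => (card_union_le _ _).trans (add_le_add (hred e) (hblue e))

/-- Read `a + 1` and `b + 1` as the numbers of points of each colour other than the ends `u` and
`v` of an edge, and `k` and `l` as the numbers of those in its disk. The left-hand side is nine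
times the contribution of `uv` to the bound in `choose_mul_choose_le_card_incidences`. -/
lemma incidence_weight_lt {a b k l : ℕ} (ha : 0 < a) (hb : 0 < b) (hka : 18 * (k + l) < a + 1)
    (hkb : 18 * (k + l) < b + 1) :
    9 * (k * (a * (b + 1).choose 2) + l * ((a + 1).choose 2 * b)) <
      (a + 1).choose 2 * (b + 1).choose 2 := by
  have hchoose (n : ℕ) : (n + 1) * n = 2 * (n + 1).choose 2 := by
    simpa [mul_comm] using Nat.add_one_mul_choose_eq n 1
  have hweights : 18 * (k * (b + 1) + l * (a + 1)) < (a + 1) * (b + 1) := by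
    rcases le_total a b with hab | hab <;> nlinarith
  have hpos : 0 < (a + 1).choose 2 * (b + 1).choose 2 :=
    Nat.mul_pos (Nat.choose_pos (by omega)) (Nat.choose_pos (by omega))
  refine Nat.lt_of_mul_lt_mul_left (a := (a + 1) * (b + 1)) ?_
  calc (a + 1) * (b + 1) * (9 * (k * (a * (b + 1).choose 2) + l * ((a + 1).choose 2 * b)))
      = 9 * (k * (b + 1) * (((a + 1) * a) * (b + 1).choose 2) +
          l * (a + 1) * ((a + 1).choose 2 * ((b + 1) * b))) := by ring
    _ = 18 * (k * (b + 1) + l * (a + 1)) * ((a + 1).choose 2 * (b + 1).choose 2) := by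
      rw [hchoose a, hchoose b]
      ring
    _ < (a + 1) * (b + 1) * ((a + 1).choose 2 * (b + 1).choose 2) :=
      Nat.mul_lt_mul_of_pos_right hweights hpos

lemma exists_min_card_le_card_add_card (hα : 3 ≤ Fintype.card α) (hβ : 3 ≤ Fintype.card β)
    (hP : ∀ u v, u ∉ P u v) (hQ : ∀ u v, v ∉ Q u v)
    (h : ∀ A : Finset α, ∀ B : Finset β, #A = 3 → #B = 3 →
      ∃ u ∈ A, ∃ v ∈ B, (∃ x ∈ P u v, x ∈ A) ∨ ∃ y ∈ Q u v, y ∈ B) :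
    ∃ u v, min (Fintype.card α) (Fintype.card β) ≤ 18 * (#(P u v) + #(Q u v)) + 1 := by
  by_contra! hfew
  have hcount := choose_mul_choose_le_card_incidences hP hQ h
  have : Nonempty α := Fintype.card_pos_iff.1 (by omega)
  have : Nonempty β := Fintype.card_pos_iff.1 (by omega)
  obtain ⟨a, ha⟩ := Nat.exists_eq_add_of_le' hα
  obtain ⟨b, hb⟩ := Nat.exists_eq_add_of_le' hβ
  simp only [ha, hb, Nat.reduceSubDiff, lt_min_iff] at hcount hfew
  have hweight := sum_lt_sum_of_nonempty (univ_nonempty (α := α × β)) fun e _ =>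
    incidence_weight_lt a.succ_pos b.succ_pos (k := #(P e.1 e.2)) (l := #(Q e.1 e.2))
      (Nat.lt_of_succ_lt_succ (hfew e.1 e.2).1) (Nat.lt_of_succ_lt_succ (hfew e.1 e.2).2)
  rw [← mul_sum, sum_const, card_univ, Fintype.card_prod, ha, hb, smul_eq_mul] at hweight
  have hchoose_a := Nat.add_one_mul_choose_eq (a + 2) 2
  have hchoose_b := Nat.add_one_mul_choose_eq (b + 2) 2
  refine (Nat.mul_le_mul_left 9 hcount).not_gt (hweight.trans_eq ?_)
  calc (a + 3) * (b + 3) * ((a + 2).choose 2 * (b + 2).choose 2)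
      = ((a + 3) * (a + 2).choose 2) * ((b + 3) * (b + 2).choose 2) := by ring
    _ = 9 * ((a + 3).choose 3 * (b + 3).choose 3) := by
      rw [hchoose_a, hchoose_b]
      ring

end Counting

theorem exists_pair_forall_halfspace {V : Type*} [AddCommGroup V] [Module ℝ V]
    [FiniteDimensional ℝ V] (hV : Module.finrank ℝ V ≤ 3)
    {α β : Type*} [Fintype α] [Fintype β] (hα : 3 ≤ Fintype.card α) (hβ : 3 ≤ Fintype.card β)
    (p : α → V) (q : β → V) :
    ∃ u v, ∀ (f : Module.Dual ℝ V) (t : ℝ), f (p u) ≤ t → f (q v) ≤ t →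
      min (Fintype.card α) (Fintype.card β) ≤
        18 * ({x | x ≠ u ∧ f (p x) ≤ t}.ncard + {y | y ≠ v ∧ f (q y) ≤ t}.ncard) + 1 := by
  classical
  by_contra! hfew
  choose f t hp hq hlt using hfew
  simp only [Set.ncard_eq_toFinset_card'] at hlt
  obtain ⟨u, v, hle⟩ := exists_min_card_le_card_add_card hα hβ
    (P := fun u v => {x | x ≠ u ∧ f u v (p x) ≤ t u v}.toFinset)
    (Q := fun u v => {y | y ≠ v ∧ f u v (q y) ≤ t u v}.toFinset) (by simp) (by simp) (by
      intro A B hA hB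
      obtain ⟨i, j, hij⟩ := exists_third_mem_halfspace hV (ι := A) (κ := B) (by simpa) (by simpa)
        (fun i => p i) (fun j => q j) (fun i j => f i j) (fun i j => t i j)
        (fun i j => hp i j) (fun i j => hq i j)
      refine ⟨i, i.2, j, j.2, hij.imp ?_ ?_⟩
      · rintro ⟨k, hk, hmem⟩
        exact ⟨k, by simpa [Subtype.coe_ne_coe] using ⟨hk, hmem⟩, k.2⟩
      · rintro ⟨l, hl, hmem⟩
        exact ⟨l, by simpa [Subtype.coe_ne_coe] using ⟨hl, hmem⟩, l.2⟩)
  exact (hlt u v).not_ge hle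

/-! ### Disks -/

section Disks

variable {E : Type*} [NormedAddCommGroup E]

/-- The lift of a point to the paraboloid `z = ‖p‖ ^ 2`, under which balls become half-spaces. -/
def paraboloidLift (p : E) : E × ℝ :=
  (p, ‖p‖ ^ 2)

lemma exists_mem_closedBall_iff_le [InnerProductSpace ℝ E] (c : E) {r : ℝ} (hr : 0 ≤ r) :
    ∃ (f : Module.Dual ℝ (E × ℝ)) (t : ℝ), ∀ p, p ∈ closedBall c r ↔ f (paraboloidLift p) ≤ t := by
  refine ⟨LinearMap.snd ℝ E ℝ - (2 : ℝ) • innerₛₗ ℝ c ∘ₗ LinearMap.fst ℝ E ℝ, r ^ 2 - ‖c‖ ^ 2,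
    fun p => ?_⟩
  rw [mem_closedBall, dist_eq_norm, ← sq_le_sq₀ (norm_nonneg _) hr, norm_sub_sq_real,
    real_inner_comm]
  simp only [paraboloidLift, LinearMap.sub_apply, LinearMap.snd_apply, LinearMap.smul_apply,
    LinearMap.coe_comp, coe_innerₛₗ_apply, LinearMap.coe_fst, Function.comp_apply, smul_eq_mul,
    tsub_le_iff_right]
  constructor <;> intro h <;> linarith

end Disks

lemma ncard_setOf_ne_and_mem_add_one {X : Type*} {R D : Set X} (hR : R.Finite) (u : R)
    (hu : (u : X) ∈ D) : {x : R | x ≠ u ∧ (x : X) ∈ D}.ncard + 1 = (R ∩ D).ncard := by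
  have himage : Subtype.val '' {x : R | x ≠ u ∧ (x : X) ∈ D} = (R ∩ D) \ {(u : X)} := by
    ext x
    simp only [ne_eq, Subtype.ext_iff, Set.mem_image, Set.mem_ofPred_eq, Subtype.exists,
      exists_and_left, exists_prop, exists_eq_right_right, Set.mem_sdiff, Set.mem_inter_iff,
      Set.mem_singleton_iff]
    tauto
  rw [← Set.ncard_image_of_injective _ Subtype.val_injective, himage,
    Set.ncard_sdiff_singleton_add_one (show (u : X) ∈ R ∩ D from ⟨u.2, hu⟩) (hR.inter_of_left D)]

theorem pi_bichrom_lower_bound_n_over_36_general {E : Type*} [NormedAddCommGroup E]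
    [InnerProductSpace ℝ E] [FiniteDimensional ℝ E] (hE : Module.finrank ℝ E ≤ 2)
    {n : ℕ} (hn : 6 ≤ n) {R B : Set E} (hdisj : Disjoint R B)
    (hR : n ≤ 2 * R.ncard) (hB : n ≤ 2 * B.ncard) :
    ∃ u ∈ R, ∃ v ∈ B, ∀ (c : E) (r : ℝ), u ∈ closedBall c r → v ∈ closedBall c r →
      ⌈((n : ℝ) - 2) / 36⌉ + 2 ≤ (((R ∪ B) ∩ closedBall c r).ncard : ℤ) := by
  have hfinR : R.Finite := Set.finite_of_ncard_pos (by omega)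
  have hfinB : B.Finite := Set.finite_of_ncard_pos (by omega)
  have := hfinR.fintype
  have := hfinB.fintype
  rw [← Set.fintypeCard_eq_ncard] at hR hB
  obtain ⟨u, v, hpair⟩ := exists_pair_forall_halfspace (V := E × ℝ) (by simp; omega)
    (by omega) (by omega) (fun x : R => paraboloidLift x.1) (fun y : B => paraboloidLift y.1)
  refine ⟨u, u.2, v, v.2, fun c r hu hv => ?_⟩
  obtain ⟨f, t, hball⟩ := exists_mem_closedBall_iff_le c (dist_nonneg.trans (mem_closedBall.1 hu))
  have hmin := hpair f t ((hball u).1 hu) ((hball v).1 hv)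
  simp only [← hball] at hmin
  have hcardR := ncard_setOf_ne_and_mem_add_one hfinR u hu
  have hcardB := ncard_setOf_ne_and_mem_add_one hfinB v hv
  rw [Set.union_inter_distrib_right, Set.ncard_union_eq
    (hdisj.mono Set.inter_subset_left Set.inter_subset_left) (hfinR.inter_of_left _)
    (hfinB.inter_of_left _), ← hcardR, ← hcardB, ← le_sub_iff_add_le, Int.ceil_le]
  have hn_le : n ≤ 36 * ({x : R | x ≠ u ∧ (x : E) ∈ closedBall c r}.ncard +
      {y : B | y ≠ v ∧ (y : E) ∈ closedBall c r}.ncard) + 2 := by omega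
  rify at hn_le
  push_cast
  linarith

/-- For every even `n ≥ 6` and every set of `n` points in the plane in general position
partitioned into `n/2` red points `R` and `n/2` blue points `B`, there exist a red point
`u ∈ R` and a blue point `v ∈ B` such that every closed disk containing both `u` and `v`
contains at least `⌈(n−2)/36⌉ + 2` points of the set. -/
theorem pi_bichrom_lower_bound_n_over_36 (n : ℕ) (hn : 6 ≤ n) (heven : Even n)
    (R B : Set Pt) (hfinR : R.Finite) (hfinB : B.Finite) (hdisj : Disjoint R B)
    (hR : R.ncard = n / 2) (hB : B.ncard = n / 2) (hgp : GenPos (R ∪ B)) :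
    ∃ u ∈ R, ∃ v ∈ B,
      ∀ (c : Pt) (r : ℝ), 0 < r → u ∈ closedBall c r → v ∈ closedBall c r →
        ⌈((n : ℝ) - 2) / 36⌉ + 2 ≤ (((R ∪ B) ∩ closedBall c r).ncard : ℤ) := by
  obtain ⟨u, hu, v, hv, hball⟩ := pi_bichrom_lower_bound_n_over_36_general
    (finrank_euclideanSpace_fin (𝕜 := ℝ) (n := 2)).le hn hdisj
    (by rw [hR, Nat.two_mul_div_two_of_even heven]) (by rw [hB, Nat.two_mul_div_two_of_even heven])
  exact ⟨u, hu, v, hv, fun c r _ => hball c r⟩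
end
end
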